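/- arXiv:2008.06719 — 2 statements merged into one kernel-verified Lean document; each statement's English description precedes it below -/
import Mathlib

section
/- Let P ⊆ ℝ^d be an unbounded, line-free polyhedral set. Then for every x ∈ ℝ^d, Σ_{k=0}^d (−1)^k Σ_{F ∈ F_k(P)} 1_{F − N_F(P)}(x) = 0. -/
open scoped RealInnerProductSpace Pointwise Classical
open Set

noncomputable section

abbrev E (d : ℕ) : Type := EuclideanSpace ℝ (Fin d)

variable {d : ℕ}

/-- Positive hull: all finite nonnegative combinations of elements of `A`. -/
def posHull (A : Set (E d)) : Set (E d) :=
  {x | ∃ (n : ℕ) (c : Fin n → ℝ) (v : Fin n → E d),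
    (∀ i, 0 ≤ c i) ∧ (∀ i, v i ∈ A) ∧ x = ∑ i, c i • v i}

/-- Dual (polar) cone. -/
def polarCone (C : Set (E d)) : Set (E d) := {z | ∀ y ∈ C, ⟪z, y⟫ ≤ 0}

/-- A polyhedral cone: finite intersection of linear closed half-spaces. -/
def IsPolyCone (C : Set (E d)) : Prop :=
  ∃ (m : ℕ) (y : Fin m → E d), C = {z | ∀ i, ⟪z, y i⟫ ≤ 0}

/-- A polyhedral set: finite intersection of closed half-spaces. -/
def IsPolyhedron (P : Set (E d)) : Prop :=
  ∃ (m : ℕ) (y : Fin m → E d) (c : Fin m → ℝ), P = {z | ∀ i, ⟪z, y i⟫ ≤ c i}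

/-- Faces of `P`: `P` itself, or intersections with supporting hyperplanes. -/
def IsFaceOf (P F : Set (E d)) : Prop :=
  F = P ∨ ∃ (y : E d) (c : ℝ), (∀ z ∈ P, ⟪y, z⟫ ≤ c) ∧ F = {z | z ∈ P ∧ ⟪y, z⟫ = c}

/-- Dimension of a set: dimension of its affine hull. -/
def sdim (F : Set (E d)) : ℕ := Module.finrank ℝ (affineSpan ℝ F).direction

/-- The `k`-dimensional (nonempty) faces of `P`. -/
def facesOfDim (P : Set (E d)) (k : ℕ) : Set (Set (E d)) :=
  {F | IsFaceOf P F ∧ F.Nonempty ∧ sdim F = k}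

/-- Tangent cone of `P` at a point `f₀`. -/
def tangentConeOf (P : Set (E d)) (f₀ : E d) : Set (E d) :=
  {u | ∃ δ : ℝ, 0 < δ ∧ f₀ + δ • u ∈ P}

/-- Normal cone of `P` at its face `F`: polar of the tangent cone at any
relative interior point of `F`. -/
def normalCone (P F : Set (E d)) : Set (E d) :=
  {z | ∀ f₀ ∈ intrinsicInterior ℝ F, ∀ u ∈ tangentConeOf P f₀, ⟪z, u⟫ ≤ 0}

/-- `y` is a nearest point of `P` to `x`. -/
def IsNearestPt (P : Set (E d)) (x y : E d) : Prop :=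
  y ∈ P ∧ ∀ z ∈ P, dist x y ≤ dist x z

/-- `dim(x,P) = k`: the metric projection of `x` onto `P` lies in the relative
interior of a `k`-dimensional face of `P`. -/
def projDimEq (P : Set (E d)) (x : E d) (k : ℕ) : Prop :=
  ∃ y F, IsNearestPt P x y ∧ IsFaceOf P F ∧ y ∈ intrinsicInterior ℝ F ∧ sdim F = k

def IsHyperplane (H : Set (E d)) : Prop :=
  ∃ (y : E d) (c : ℝ), y ≠ 0 ∧ H = {z | ⟪y, z⟫ = c}

def IsLinearHyperplane (H : Set (E d)) : Prop :=
  ∃ y : E d, y ≠ 0 ∧ H = {z | ⟪y, z⟫ = 0}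

/-- Closed chambers of the complement of the set `S`. -/
def IsChamberOfUnion (S P : Set (E d)) : Prop :=
  ∃ x : E d, x ∉ S ∧ P = closure (connectedComponentIn Sᶜ x)

/-- Closed chambers of the hyperplane arrangement `A`. -/
def IsChamber (A : Finset (Set (E d))) (P : Set (E d)) : Prop :=
  IsChamberOfUnion (⋃ H ∈ A, H) P

/-- Intersection of a finite subcollection of hyperplanes (`⊤` for `∅`). -/
def interSet (B : Finset (Set (E d))) : Set (E d) := ⋂ H ∈ B, H

/-- The unsigned coefficient `a_k` of the characteristic polynomial:
`χ_A(t) = Σ_k (-1)^(d-k) a_k t^k` via Whitney's formula. -/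
def charCoeff (A : Finset (Set (E d))) (k : ℕ) : ℤ :=
  (-1 : ℤ) ^ (d - k) *
    ∑ B ∈ A.powerset,
      if (interSet B).Nonempty ∧ sdim (interSet B) = k then (-1 : ℤ) ^ B.card else 0


section Aux

set_option linter.unusedSectionVars false

variable {V : Type*} [NormedAddCommGroup V] [InnerProductSpace ℝ V]
variable {ι : Type*} [Fintype ι]

/-- The Farkas lemma, with multipliers of arbitrary sign for the indices in `B`. -/
theorem hk_farkas (B J : Finset ι) : ∀ (y : ι → V) (q : V),
    (∀ u : V, (∀ j ∈ J, ⟪y j, u⟫ ≤ 0) → (∀ j ∈ J, j ∈ B → ⟪y j, u⟫ = 0) → ⟪q, u⟫ ≤ 0) →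
    ∃ l : ι → ℝ, (∀ j, j ∉ J → l j = 0) ∧ (∀ j, j ∉ B → 0 ≤ l j) ∧ q = ∑ j, l j • y j := by
  induction J using Finset.induction_on with
  | empty =>
    intro y q h
    refine ⟨fun _ => 0, by simp, by simp, ?_⟩
    have := h q (by simp) (by simp)
    have h0 : ⟪q, q⟫ = 0 := le_antisymm this real_inner_self_nonneg
    simpa using h0
  | insert a J ha ih =>
    intro y q h
    by_cases h1 : ∀ u : V, (∀ j ∈ J, ⟪y j, u⟫ ≤ 0) → (∀ j ∈ J, j ∈ B → ⟪y j, u⟫ = 0) → ⟪q, u⟫ ≤ 0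
    · obtain ⟨l, h2, h3, h4⟩ := ih y q h1
      exact ⟨l, fun j hj => h2 j (fun h => hj (Finset.mem_insert_of_mem h)), h3, h4⟩
    · push Not at h1
      obtain ⟨x0, hx1, hx2, hx3⟩ := h1
      have hax : ⟪y a, x0⟫ ≠ 0 := by
        intro h0
        have := h x0 (by simpa [h0] using hx1) (by simpa [h0] using hx2)
        linarith
      have hapos : a ∉ B → 0 < ⟪y a, x0⟫ := by
        intro haB
        by_contra hneg
        have := h x0 (by simpa [not_lt.mp hneg] using hx1) (by
          intro j hj hjB
          rcases Finset.mem_insert.mp hj with rfl | hj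
          · exact absurd hjB haB
          · exact hx2 j hj hjB)
        linarith
      obtain ⟨l, h2, h3, h4⟩ := ih (fun j => y j - (⟪y j, x0⟫ / ⟪y a, x0⟫) • y a)
          (q - (⟪q, x0⟫ / ⟪y a, x0⟫) • y a) (by
        intro u hu1 hu2
        have key : ∀ w : V, ⟪w - (⟪w, x0⟫ / ⟪y a, x0⟫) • y a, u⟫
            = ⟪w, u - (⟪y a, u⟫ / ⟪y a, x0⟫) • x0⟫ := by
          intro w
          simp only [inner_sub_left, inner_sub_right, real_inner_smul_left, real_inner_smul_right]
          field_simp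
        have key0 : ⟪y a, u - (⟪y a, u⟫ / ⟪y a, x0⟫) • x0⟫ = 0 := by
          simp only [inner_sub_right, real_inner_smul_right]
          field_simp
          ring
        simp only [key] at hu1 hu2
        rw [key]
        apply h
        · simpa [key0] using hu1
        · simpa [key0] using hu2)
      set s := ∑ j, l j * ⟪y j, x0⟫ with hs
      have hs0 : s ≤ 0 := by
        apply Finset.sum_nonpos
        intro j _
        by_cases hj : j ∈ J
        · by_cases hjB : j ∈ B
          · rw [hx2 j hj hjB]; simp
          · exact mul_nonpos_of_nonneg_of_nonpos (h3 j hjB) (hx1 j hj)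
        · rw [h2 j hj]; simp
      have hsum : q = ∑ j, l j • y j + ((⟪q, x0⟫ - s) / ⟪y a, x0⟫) • y a := by
        have : ∑ j, l j • (y j - (⟪y j, x0⟫ / ⟪y a, x0⟫) • y a)
            = ∑ j, l j • y j - (s / ⟪y a, x0⟫) • y a := by
          simp only [smul_sub, Finset.sum_sub_distrib, hs, Finset.sum_div, Finset.sum_smul, smul_smul,
            mul_div_assoc]
        rw [this] at h4
        rw [sub_div, sub_smul]
        have h5 := eq_add_of_sub_eq h4
        refine h5.trans ?_
        abel
      refine ⟨fun j => l j + if j = a then (⟪q, x0⟫ - s) / ⟪y a, x0⟫ else 0, ?_, ?_, ?_⟩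
      · intro j hj
        have h5 : j ≠ a := by rintro rfl; simp at hj
        have h6 : j ∉ J := fun h => hj (Finset.mem_insert_of_mem h)
        simp [h5, h2 j h6]
      · intro j hj
        by_cases h5 : j = a
        · subst h5
          simp only [if_true]
          rw [h2 j ha, zero_add]
          exact div_nonneg (by linarith) (hapos hj).le
        · simp [h5, h3 j hj]
      · conv_lhs => rw [hsum]
        simp [add_smul, Finset.sum_add_distrib, ite_smul]

/-- rank of the vectors with index in `J` -/
def hkrk (y : ι → V) (J : Finset ι) : ℕ := Module.finrank ℝ (Submodule.span ℝ (y '' (J : Set ι)))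

/-- cells of mixed polyhedral cones -/
def hkcell (y : ι → V) (S T B J : Finset ι) (z : V) : Prop :=
  (∀ i ∈ B, ⟪y i, z⟫ = 0) ∧ (∀ i ∈ S, 0 < ⟪y i, z⟫) ∧ (∀ i ∈ T, i ∈ J → ⟪y i, z⟫ = 0) ∧
    (∀ i ∈ T, i ∉ J → ⟪y i, z⟫ < 0)

/-- Euler sums of mixed polyhedral cones -/
def hkE (y : ι → V) (S T B : Finset ι) : ℤ :=
  ∑ J ∈ T.powerset, if ∃ z, hkcell y S T B J z then (-1 : ℤ) ^ hkrk y (B ∪ J) else 0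

theorem hkrk_insert_mem (y : ι → V) (K : Finset ι) (a : ι)
    (h : y a ∈ Submodule.span ℝ (y '' (K : Set ι))) : hkrk y (insert a K) = hkrk y K := by
  unfold hkrk
  rw [Finset.coe_insert, Set.image_insert_eq, Submodule.span_insert_eq_span h]

theorem hkrk_insert_not_mem [FiniteDimensional ℝ V] (y : ι → V) (K : Finset ι) (a : ι)
    (h : y a ∉ Submodule.span ℝ (y '' (K : Set ι))) : hkrk y (insert a K) = hkrk y K + 1 := by
  unfold hkrk
  rw [Finset.coe_insert, Set.image_insert_eq, Submodule.span_insert]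
  have : FiniteDimensional ℝ (Submodule.span ℝ (y '' (K : Set ι))) :=
    FiniteDimensional.span_of_finite ℝ (K.finite_toSet.image y)
  rw [sup_comm]
  exact Submodule.finrank_sup_span_singleton h

/-- small perturbation preserves finitely many strict inequalities -/
theorem hk_small (y : ι → V) (c : ι → ℝ) (z v : V) (K : Finset ι) (h : ∀ i ∈ K, ⟪y i, z⟫ < c i) :
    ∀ᶠ e : ℝ in nhds 0, ∀ i ∈ K, ⟪y i, z + e • v⟫ < c i := by
  rw [Filter.eventually_all_finset]
  intro i hi
  have hc : ContinuousAt (fun e : ℝ => ⟪y i, z + e • v⟫) 0 := by fun_prop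
  exact hc.eventually_lt continuousAt_const (by simpa using h i hi)

theorem hk_exists_perp [FiniteDimensional ℝ V] (W : Submodule ℝ V) (a : V) (h : a ∉ W) :
    ∃ v : V, (∀ w ∈ W, ⟪w, v⟫ = 0) ∧ 0 < ⟪a, v⟫ := by
  refine ⟨a - W.starProjection a, fun w hw => ?_, ?_⟩
  · exact (Submodule.mem_orthogonal W _).mp (Submodule.sub_starProjection_mem_orthogonal a) w hw
  · set v := a - W.starProjection a with hv
    have h0 : ⟪W.starProjection a, v⟫ = 0 :=
      (Submodule.mem_orthogonal W _).mp (Submodule.sub_starProjection_mem_orthogonal a) _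
        (Submodule.starProjection_apply_mem W a)
    have h1 : ⟪a, v⟫ = ⟪v, v⟫ := by
      conv_rhs => rw [hv, inner_sub_left, ← hv, h0, sub_zero]
    rw [h1]
    apply real_inner_self_pos.mpr
    intro h2
    apply h
    have : a = W.starProjection a := sub_eq_zero.mp (hv ▸ h2)
    rw [this]
    exact Submodule.starProjection_apply_mem W a

theorem hk_span_zero (y : ι → V) (K : Finset ι) (z w : V) (hz : ∀ i ∈ K, ⟪y i, z⟫ = 0)
    (hw : w ∈ Submodule.span ℝ (y '' (K : Set ι))) : ⟪w, z⟫ = 0 := by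
  induction hw using Submodule.span_induction with
  | mem x hx => obtain ⟨i, hi, rfl⟩ := hx; exact hz i hi
  | zero => simp
  | add x y _ _ h1 h2 => rw [inner_add_left, h1, h2, add_zero]
  | smul a x _ h => rw [real_inner_smul_left, h, mul_zero]

theorem hk_cut [FiniteDimensional ℝ V] (y : ι → V) (S T B : Finset ι) (a : ι) (ha : a ∉ T) :
    hkE y S T B = hkE y S (insert a T) B + hkE y (insert a S) T B := by
  unfold hkE
  rw [Finset.sum_powerset_insert ha, ← Finset.sum_add_distrib, ← Finset.sum_add_distrib]
  apply Finset.sum_congr rfl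
  intro J hJ
  have haJ : a ∉ J := fun h => ha (Finset.mem_powerset.mp hJ h)
  have e1 : (∃ z, hkcell y S (insert a T) B J z) ↔ ∃ z, hkcell y S T B J z ∧ ⟪y a, z⟫ < 0 := by
    apply exists_congr; intro z
    simp only [hkcell, Finset.mem_insert, forall_eq_or_imp]
    tauto
  have e2 : (∃ z, hkcell y S (insert a T) B (insert a J) z) ↔
      ∃ z, hkcell y S T B J z ∧ ⟪y a, z⟫ = 0 := by
    apply exists_congr; intro z
    have : ∀ i ∈ T, i ≠ a := by rintro i hi rfl; exact ha hi
    simp only [hkcell, Finset.mem_insert, forall_eq_or_imp]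
    constructor
    · rintro ⟨h1, h2, ⟨h3, h4⟩, h5, h6⟩
      exact ⟨⟨h1, h2, fun i hi hj => h4 i hi (Or.inr hj), fun i hi hj => h6 i hi (by
        have := this i hi; tauto)⟩, h3 (Or.inl trivial)⟩
    · rintro ⟨⟨h1, h2, h3, h4⟩, h5⟩
      refine ⟨h1, h2, ⟨fun _ => h5, fun i hi hj => h3 i hi ?_⟩, by tauto, fun i hi hj => h4 i hi ?_⟩
      · have := this i hi; tauto
      · tauto
  have e3 : (∃ z, hkcell y (insert a S) T B J z) ↔ ∃ z, hkcell y S T B J z ∧ 0 < ⟪y a, z⟫ := by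
    apply exists_congr; intro z
    simp only [hkcell, Finset.mem_insert, forall_eq_or_imp]
    tauto
  have e4 : (∃ z, hkcell y S T B J z) ↔ ((∃ z, hkcell y S T B J z ∧ ⟪y a, z⟫ < 0) ∨
      (∃ z, hkcell y S T B J z ∧ ⟪y a, z⟫ = 0)) ∨ (∃ z, hkcell y S T B J z ∧ 0 < ⟪y a, z⟫) := by
    constructor
    · rintro ⟨z, hz⟩
      rcases lt_trichotomy ⟪y a, z⟫ 0 with h | h | h
      · exact Or.inl (Or.inl ⟨z, hz, h⟩)
      · exact Or.inl (Or.inr ⟨z, hz, h⟩)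
      · exact Or.inr ⟨z, hz, h⟩
    · rintro ((⟨z, hz, _⟩ | ⟨z, hz, _⟩) | ⟨z, hz, _⟩) <;> exact ⟨z, hz⟩
  have hins : B ∪ insert a J = insert a (B ∪ J) := Finset.union_insert _ _ _
  have hzero : ∀ z, hkcell y S T B J z → ∀ i ∈ B ∪ J, ⟪y i, z⟫ = 0 := by
    intro z hz i hi
    rcases Finset.mem_union.mp hi with h | h
    · exact hz.1 i h
    · exact hz.2.2.1 i (Finset.mem_powerset.mp hJ h) h
  simp only [e1, e2, e3, e4, hins]
  by_cases hs : y a ∈ Submodule.span ℝ (y '' ((B ∪ J : Finset ι) : Set ι))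
  · rw [hkrk_insert_mem y _ a hs]
    have n1 : ¬ (∃ z, hkcell y S T B J z ∧ ⟪y a, z⟫ < 0) := by
      rintro ⟨z, hz, h⟩
      exact h.ne (hk_span_zero y _ z _ (hzero z hz) hs)
    have n2 : ¬ (∃ z, hkcell y S T B J z ∧ 0 < ⟪y a, z⟫) := by
      rintro ⟨z, hz, h⟩
      exact h.ne' (hk_span_zero y _ z _ (hzero z hz) hs)
    simp [n1, n2]
  · rw [hkrk_insert_not_mem y _ a hs]
    obtain ⟨v, hv1, hv2⟩ := hk_exists_perp _ _ hs
    have hv0 : ∀ i ∈ B ∪ J, ⟪y i, v⟫ = 0 := fun i hi =>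
      hv1 _ (Submodule.subset_span ⟨i, hi, rfl⟩)
    have o1 : (∃ z, hkcell y S T B J z ∧ ⟪y a, z⟫ = 0) →
        (∃ z, hkcell y S T B J z ∧ ⟪y a, z⟫ < 0) ∧ (∃ z, hkcell y S T B J z ∧ 0 < ⟪y a, z⟫) := by
      rintro ⟨z, hz, h⟩
      have A1 := hk_small y (fun _ => 0) z v (T \ J) (by
        intro i hi
        simp only [Finset.mem_sdiff] at hi
        exact hz.2.2.2 i hi.1 hi.2)
      have A2 := hk_small (fun i => - y i) (fun _ => 0) z v S (by
        intro i hi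
        simpa using hz.2.1 i hi)
      have A3 := A1.and A2
      have cell : ∀ e : ℝ, ((∀ i ∈ T \ J, ⟪y i, z + e • v⟫ < 0) ∧
          ∀ i ∈ S, ⟪- y i, z + e • v⟫ < 0) → hkcell y S T B J (z + e • v) := by
        rintro e ⟨h1, h2⟩
        refine ⟨fun i hi => ?_, fun i hi => ?_, fun i hi hj => ?_, fun i hi hj => ?_⟩
        · rw [inner_add_right, real_inner_smul_right, hv0 i (Finset.mem_union_left _ hi), hz.1 i hi]
          simp
        · have := h2 i hi
          rw [inner_neg_left] at this
          linarith
        · rw [inner_add_right, real_inner_smul_right, hv0 i (Finset.mem_union_right _ hj),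
            hz.2.2.1 i hi hj]
          simp
        · exact h1 i (Finset.mem_sdiff.mpr ⟨hi, hj⟩)
      obtain ⟨r, hr, hr2⟩ := Metric.eventually_nhds_iff.mp A3
      refine ⟨⟨z + (-(r/2)) • v, cell _ (hr2 (by rw [Real.dist_eq]; rw [sub_zero, abs_neg, abs_of_pos] <;> linarith)), ?_⟩,
        ⟨z + (r/2) • v, cell _ (hr2 (by rw [Real.dist_eq]; rw [sub_zero, abs_of_pos] <;> linarith)), ?_⟩⟩
      · rw [inner_add_right, real_inner_smul_right, h]
        nlinarith
      · rw [inner_add_right, real_inner_smul_right, h]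
        nlinarith
    have o2 : (∃ z, hkcell y S T B J z ∧ ⟪y a, z⟫ < 0) → (∃ z, hkcell y S T B J z ∧ 0 < ⟪y a, z⟫) →
        (∃ z, hkcell y S T B J z ∧ ⟪y a, z⟫ = 0) := by
      rintro ⟨z, hz, h⟩ ⟨w, hw, h'⟩
      refine ⟨⟪y a, w⟫ • z + (-⟪y a, z⟫) • w, ⟨fun i hi => ?_, fun i hi => ?_, fun i hi hj => ?_,
        fun i hi hj => ?_⟩, ?_⟩ <;>
      rw [inner_add_right, real_inner_smul_right, real_inner_smul_right]
      · rw [hz.1 i hi, hw.1 i hi]; simp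
      · have := hz.2.1 i hi
        have := hw.2.1 i hi
        have : 0 < -⟪y a, z⟫ := by linarith
        positivity
      · rw [hz.2.2.1 i hi hj, hw.2.2.1 i hi hj]; simp
      · have := hz.2.2.2 i hi hj
        have := hw.2.2.2 i hi hj
        nlinarith
      · ring
    by_cases h1 : (∃ z, hkcell y S T B J z ∧ ⟪y a, z⟫ < 0) <;>
    by_cases h2 : (∃ z, hkcell y S T B J z ∧ 0 < ⟪y a, z⟫)
    · simp only [h1, h2, o2 h1 h2, pow_succ]; simp
    · have : ¬ (∃ z, hkcell y S T B J z ∧ ⟪y a, z⟫ = 0) := fun h => h2 (o1 h).2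
      simp only [h1, h2, this]; simp
    · have : ¬ (∃ z, hkcell y S T B J z ∧ ⟪y a, z⟫ = 0) := fun h => h1 (o1 h).1
      simp only [h1, h2, this]; simp
    · have : ¬ (∃ z, hkcell y S T B J z ∧ ⟪y a, z⟫ = 0) := fun h => h1 (o1 h).1
      simp only [h1, h2, this]; simp

theorem hk_euler_aux [FiniteDimensional ℝ V] (y : ι → V) (B : Finset ι) (b : ι) (w : V)
    (hB : ∀ i ∈ B, ⟪y i, w⟫ = 0) (hb : 0 < ⟪y b, w⟫) (T : Finset ι) : b ∉ T →
    (∀ i ∈ T, 0 ≤ ⟪y i, w⟫) →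
    ∀ S : Finset ι, (∀ i ∈ S, 0 ≤ ⟪y i, w⟫) → hkE y S (insert b T) B = 0 := by
  induction T using Finset.induction_on with
  | empty =>
    intro _ _ S hS
    have h := hk_cut y S ∅ B b (by simp)
    have key : hkE y S ∅ B = hkE y (insert b S) ∅ B := by
      unfold hkE
      have : (∃ z, hkcell y S ∅ B ∅ z) ↔ (∃ z, hkcell y (insert b S) ∅ B ∅ z) := by
        constructor
        · rintro ⟨z, h1, h2, _, _⟩
          refine ⟨z + ((|⟪y b, z⟫| + 1) / ⟪y b, w⟫) • w, fun i hi => ?_, fun i hi => ?_,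
            by simp, by simp⟩
          · rw [inner_add_right, real_inner_smul_right, h1 i hi, hB i hi]; simp
          · rw [inner_add_right, real_inner_smul_right]
            rcases Finset.mem_insert.mp hi with rfl | hi
            · rw [div_mul_cancel₀ _ hb.ne']
              have := neg_abs_le ⟪y i, z⟫
              linarith
            · have := h2 i hi
              have := hS i hi
              positivity
        · rintro ⟨z, h1, h2, _, _⟩
          exact ⟨z, h1, fun i hi => h2 i (Finset.mem_insert_of_mem hi), by simp, by simp⟩
      simp [this]
    linarith
  | insert a T ha ih =>
    intro hbT hT S hS
    have hbT' : b ∉ T := fun h => hbT (Finset.mem_insert_of_mem h)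
    have hab : a ≠ b := by rintro rfl; simp at hbT
    have hT' : ∀ i ∈ T, 0 ≤ ⟪y i, w⟫ := fun i hi => hT i (Finset.mem_insert_of_mem hi)
    have h := hk_cut y S (insert b T) B a (by simp [ha, hab])
    rw [ih hbT' hT' S hS, ih hbT' hT' (insert a S) (by
      intro i hi
      rcases Finset.mem_insert.mp hi with rfl | hi
      · exact hT i (Finset.mem_insert_self _ _)
      · exact hS i hi)] at h
    rw [Finset.insert_comm]
    linarith


def hkpoly (y : ι → V) (c : ι → ℝ) (A B : Finset ι) : Set V :=
  {z | (∀ i ∈ A, ⟪y i, z⟫ ≤ c i) ∧ ∀ i ∈ B, ⟪y i, z⟫ = c i}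

def hkact (y : ι → V) (c : ι → ℝ) (A : Finset ι) (z : V) : Finset ι :=
  A.filter (fun i => ⟪y i, z⟫ = c i)

def hkF (y : ι → V) (c : ι → ℝ) (A B J : Finset ι) : Prop :=
  ∃ z ∈ hkpoly y c A B, hkact y c A z = J

def hkmul (y : ι → V) (B J : Finset ι) (q : V) : Prop :=
  ∃ l : ι → ℝ, (∀ j, j ∉ J → l j = 0) ∧ (∀ j, j ∉ B → 0 ≤ l j) ∧ q = ∑ j, l j • y j

def hkw (y : ι → V) (c : ι → ℝ) (A B J : Finset ι) (x f : V) : Prop :=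
  f ∈ hkpoly y c A B ∧ (∀ j ∈ J, ⟪y j, f⟫ = c j) ∧ hkmul y B J (f - x)

def hkcond (y : ι → V) (c : ι → ℝ) (A B J : Finset ι) (x : V) : Prop :=
  ∃ f, hkw y c A B J x f

def hkphi (y : ι → V) (c : ι → ℝ) (A B : Finset ι) (x : V) : ℤ :=
  ∑ J : Finset ι with (hkF y c A B J ∧ hkcond y c A B J x), (-1 : ℤ) ^ hkrk y J

theorem hk_sum_inner (y : ι → V) (l : ι → ℝ) (u : V) :
    ⟪∑ j, l j • y j, u⟫ = ∑ j, l j * ⟪y j, u⟫ := by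
  rw [sum_inner]
  simp only [real_inner_smul_left]

theorem hkmul_inner {y : ι → V} {B J : Finset ι} {q : V} (h : hkmul y B J q) (u : V)
    (h1 : ∀ j ∈ J, ⟪y j, u⟫ ≤ 0) (h2 : ∀ j ∈ J, j ∈ B → ⟪y j, u⟫ = 0) : ⟪q, u⟫ ≤ 0 := by
  obtain ⟨l, l1, l2, rfl⟩ := h
  rw [hk_sum_inner]
  apply Finset.sum_nonpos
  intro j _
  by_cases hj : j ∈ J
  · by_cases hjB : j ∈ B
    · rw [h2 j hj hjB]; simp
    · exact mul_nonpos_of_nonneg_of_nonpos (l2 j hjB) (h1 j hj)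
  · rw [l1 j hj]; simp

theorem hkmul_inner_eq {y : ι → V} {B J : Finset ι} {q : V} (h : hkmul y B J q) (u : V)
    (h1 : ∀ j ∈ J, ⟪y j, u⟫ = 0) : ⟪q, u⟫ = 0 := by
  apply le_antisymm
  · exact hkmul_inner h u (fun j hj => (h1 j hj).le) (fun j hj _ => h1 j hj)
  · have := hkmul_inner h (-u) (fun j hj => by simp [h1 j hj]) (fun j hj _ => by simp [h1 j hj])
    rw [inner_neg_right] at this
    linarith

theorem hkmul_iff (y : ι → V) (B J : Finset ι) (q : V) : hkmul y B J q ↔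
    ∀ u : V, (∀ j ∈ J, ⟪y j, u⟫ ≤ 0) → (∀ j ∈ J, j ∈ B → ⟪y j, u⟫ = 0) → ⟪q, u⟫ ≤ 0 :=
  ⟨fun h u h1 h2 => hkmul_inner h u h1 h2, fun h => hk_farkas B J y q h⟩

theorem hkw_contr {y : ι → V} {c : ι → ℝ} {A B J : Finset ι} {x x' f f' : V}
    (h : hkw y c A B J x f) (h' : hkw y c A B J x' f') : dist f f' ≤ dist x x' := by
  have hz : ∀ j ∈ J, ⟪y j, f - f'⟫ = 0 := by
    intro j hj
    rw [inner_sub_right, h.2.1 j hj, h'.2.1 j hj, sub_self]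
  have e1 := hkmul_inner_eq h.2.2 _ hz
  have e2 := hkmul_inner_eq h'.2.2 _ hz
  have e3 : ⟪f - f', f - f'⟫ = ⟪x - x', f - f'⟫ := by
    rw [inner_sub_left] at e1 e2
    rw [inner_sub_left (f) f', inner_sub_left x x']
    linarith
  have e4 := real_inner_le_norm (x - x') (f - f')
  rw [← e3, real_inner_self_eq_norm_sq] at e4
  rw [dist_eq_norm, dist_eq_norm]
  by_contra hlt
  push Not at hlt
  nlinarith [norm_nonneg (x - x'), norm_nonneg (f - f')]

theorem hkpoly_closed (y : ι → V) (c : ι → ℝ) (A B : Finset ι) : IsClosed (hkpoly y c A B) := by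
  have : hkpoly y c A B = (⋂ i ∈ A, {z | ⟪y i, z⟫ ≤ c i}) ∩ ⋂ i ∈ B, {z | ⟪y i, z⟫ = c i} := by
    ext z; simp [hkpoly]
  rw [this]
  apply IsClosed.inter
  · exact isClosed_biInter fun i _ => isClosed_le (by fun_prop) continuous_const
  · exact isClosed_biInter fun i _ => isClosed_eq (by fun_prop) continuous_const

theorem hkcond_closed [FiniteDimensional ℝ V] (y : ι → V) (c : ι → ℝ) (A B J : Finset ι) :
    IsClosed {x | hkcond y c A B J x} := by
  have : CompleteSpace V := FiniteDimensional.complete ℝ V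
  apply IsSeqClosed.isClosed
  intro xs x hx hlim
  choose f hf using hx
  have hc : CauchySeq f := by
    have h1 := hlim.cauchySeq
    rw [Metric.cauchySeq_iff] at h1 ⊢
    intro e he
    obtain ⟨N, hN⟩ := h1 e he
    exact ⟨N, fun m hm n hn => (hkw_contr (hf m) (hf n)).trans_lt (hN m hm n hn)⟩
  obtain ⟨f0, hf0⟩ := cauchySeq_tendsto_of_complete hc
  refine ⟨f0, (hkpoly_closed y c A B).mem_of_tendsto hf0 (Filter.Eventually.of_forall fun n => (hf n).1),
    fun j hj => ?_, ?_⟩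
  · have h1 : Filter.Tendsto (fun n => ⟪y j, f n⟫) Filter.atTop (nhds ⟪y j, f0⟫) :=
      tendsto_const_nhds.inner hf0
    have h2 : (fun n => ⟪y j, f n⟫) = fun _ => c j := by
      funext n; exact (hf n).2.1 j hj
    rw [h2] at h1
    exact tendsto_nhds_unique h1 tendsto_const_nhds |>.symm ▸ rfl
  · rw [hkmul_iff]
    intro u h1 h2
    have h3 : Filter.Tendsto (fun n => ⟪f n - xs n, u⟫) Filter.atTop (nhds ⟪f0 - x, u⟫) :=
      (hf0.sub hlim).inner tendsto_const_nhds
    exact le_of_tendsto h3 (Filter.Eventually.of_forall fun n => hkmul_inner (hf n).2.2 u h1 h2)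

/-- the support of a multiplier together with `B` -/
def hkB (B : Finset ι) (l : ι → ℝ) : Finset ι := B ∪ Finset.univ.filter (fun i => l i ≠ 0)

section Loc
variable {y : ι → V} {c : ι → ℝ} {A B : Finset ι} {x n : V} {l : ι → ℝ}

theorem hk_sub_act (hBA : B ⊆ A) {z : V} (hz : z ∈ hkpoly y c A B) : B ⊆ hkact y c A z := by
  intro i hi
  exact Finset.mem_filter.mpr ⟨hBA hi, hz.2 i hi⟩

theorem hkB_sub (hBA : B ⊆ A) (hn : n ∈ hkpoly y c A B) (l1 : ∀ j, j ∉ hkact y c A n → l j = 0) :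
    hkB B l ⊆ hkact y c A n := by
  apply Finset.union_subset (hk_sub_act hBA hn)
  intro i hi
  by_contra h
  exact (Finset.mem_filter.mp hi).2 (l1 i h)

theorem hk_locF1 (hBA : B ⊆ A) (hn : n ∈ hkpoly y c A B) (l1 : ∀ j, j ∉ hkact y c A n → l j = 0)
    {J : Finset ι} (h : hkF y 0 (hkact y c A n) (hkB B l) J) :
    hkF y c A B J ∧ hkB B l ⊆ J ∧ J ⊆ hkact y c A n := by
  obtain ⟨z, hz, rfl⟩ := h
  have hs := hkB_sub hBA hn l1
  refine ⟨?_, hk_sub_act hs hz, Finset.filter_subset _ _⟩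
  have h1 := hk_small y c n z (A \ hkact y c A n) (by
    intro i hi
    simp only [hkact, Finset.mem_sdiff, Finset.mem_filter, not_and] at hi
    exact lt_of_le_of_ne (hn.1 i hi.1) (hi.2 hi.1))
  obtain ⟨r, hr, hr2⟩ := Metric.eventually_nhds_iff.mp h1
  have h2 := @hr2 (r / 2) (by rw [Real.dist_eq, sub_zero, abs_of_pos] <;> linarith)
  have hr0 : 0 < r / 2 := by linarith
  have key : ∀ i ∈ hkact y c A n, ⟪y i, n + (r / 2) • z⟫ = c i + r / 2 * ⟪y i, z⟫ := by
    intro i hi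
    rw [inner_add_right, real_inner_smul_right, (Finset.mem_filter.mp hi).2]
  refine ⟨n + (r / 2) • z, ⟨fun i hi => ?_, fun i hi => ?_⟩, ?_⟩
  · by_cases hi2 : i ∈ hkact y c A n
    · rw [key i hi2]
      have := hz.1 i hi2
      simp only [Pi.zero_apply] at this
      nlinarith
    · exact (h2 i (Finset.mem_sdiff.mpr ⟨hi, hi2⟩)).le
  · rw [key i (hs (Finset.mem_union_left _ hi)), hz.2 i (Finset.mem_union_left _ hi)]
    simp
  · ext i
    simp only [hkact, Finset.mem_filter, Pi.zero_apply]
    by_cases hi : i ∈ A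
    · by_cases hi2 : i ∈ hkact y c A n
      · rw [key i hi2]
        have := (Finset.mem_filter.mp hi2).2
        simp [hi, this, hr0.ne']
      · have h3 := (h2 i (Finset.mem_sdiff.mpr ⟨hi, hi2⟩)).ne
        have h4 : ¬ ⟪y i, n⟫ = c i := fun h => hi2 (Finset.mem_filter.mpr ⟨hi, h⟩)
        simp [h3, h4]
    · simp [hi]

theorem hk_locF2
    {J : Finset ι} (h : hkF y c A B J) (h1 : hkB B l ⊆ J) (h2 : J ⊆ hkact y c A n) :
    hkF y 0 (hkact y c A n) (hkB B l) J := by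
  obtain ⟨z, hz, rfl⟩ := h
  refine ⟨z - n, ⟨fun i hi => ?_, fun i hi => ?_⟩, ?_⟩
  · have h3 := Finset.mem_filter.mp hi
    rw [inner_sub_right, h3.2]
    have := hz.1 i h3.1
    simp only [Pi.zero_apply]; linarith
  · have h3 := Finset.mem_filter.mp (h1 hi)
    have h4 := Finset.mem_filter.mp (h2 (h1 hi))
    rw [inner_sub_right, h3.2, h4.2]; simp
  · ext i
    constructor
    · intro hi
      have h3 := Finset.mem_filter.mp hi
      have h4 := Finset.mem_filter.mp h3.1
      refine Finset.mem_filter.mpr ⟨h4.1, ?_⟩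
      have := h3.2
      rw [inner_sub_right, h4.2] at this
      simp only [Pi.zero_apply] at this
      linarith
    · intro hi
      have h3 := Finset.mem_filter.mp hi
      have h4 := Finset.mem_filter.mp (h2 hi)
      refine Finset.mem_filter.mpr ⟨h2 hi, ?_⟩
      rw [inner_sub_right, h3.2, h4.2]; simp

theorem hk_locB (hBA : B ⊆ A) (hn : n ∈ hkpoly y c A B) (l1 : ∀ j, j ∉ hkact y c A n → l j = 0)
    (l2 : ∀ j, j ∉ B → 0 ≤ l j) (l3 : n - x = ∑ j, l j • y j)
    {J : Finset ι} (h : hkF y c A B J) (hw : hkw y c A B J x n) :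
    hkB B l ⊆ J ∧ J ⊆ hkact y c A n := by
  obtain ⟨z, hz, rfl⟩ := h
  refine ⟨?_, fun i hi => Finset.mem_filter.mpr ⟨(Finset.mem_filter.mp hi).1, hw.2.1 i hi⟩⟩
  apply Finset.union_subset (hk_sub_act hBA hz)
  have e : ⟪n - x, z - n⟫ = 0 := by
    apply hkmul_inner_eq hw.2.2
    intro j hj
    rw [inner_sub_right, hw.2.1 j hj, (Finset.mem_filter.mp hj).2, sub_self]
  rw [l3, hk_sum_inner] at e
  have hneg : ∀ j ∈ Finset.univ, l j * ⟪y j, z - n⟫ ≤ 0 := by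
    intro j _
    by_cases hj : j ∈ hkact y c A n
    · have hj' := Finset.mem_filter.mp hj
      by_cases hB : j ∈ B
      · rw [inner_sub_right, hz.2 j hB, hn.2 j hB]; simp
      · apply mul_nonpos_of_nonneg_of_nonpos (l2 j hB)
        rw [inner_sub_right, hj'.2]
        linarith [hz.1 j hj'.1]
    · rw [l1 j hj]; simp
  intro i hi
  have hi' := (Finset.mem_filter.mp hi).2
  have h0 := (Finset.sum_eq_zero_iff_of_nonpos hneg).mp e i (Finset.mem_univ _)
  have hin : i ∈ hkact y c A n := by
    by_contra h
    exact hi' (l1 i h)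
  have hin' := Finset.mem_filter.mp hin
  refine Finset.mem_filter.mpr ⟨hin'.1, ?_⟩
  rcases mul_eq_zero.mp h0 with h | h
  · exact absurd h hi'
  · rw [inner_sub_right, hin'.2] at h
    linarith

theorem hk_locW (hn : n ∈ hkpoly y c A B) 
    (l2 : ∀ j, j ∉ B → 0 ≤ l j) (l3 : n - x = ∑ j, l j • y j)
    {J : Finset ι} (h1 : hkB B l ⊆ J) (h2 : J ⊆ hkact y c A n) : hkw y c A B J x n := by
  refine ⟨hn, fun j hj => (Finset.mem_filter.mp (h2 hj)).2, l, fun j hj => ?_, l2, l3⟩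
  by_contra h
  exact hj (h1 (Finset.mem_union_right _ (Finset.mem_filter.mpr ⟨Finset.mem_univ _, h⟩)))

theorem hk_loc_up (hBA : B ⊆ A) (hn : n ∈ hkpoly y c A B)
    (l1 : ∀ j, j ∉ hkact y c A n → l j = 0)
    (l2 : ∀ j, j ∉ B → 0 ≤ l j) (l3 : n - x = ∑ j, l j • y j)
    {J : Finset ι} (h1 : hkB B l ⊆ J) (h2 : J ⊆ hkact y c A n) {v : V}
    (hc : hkcond y 0 (hkact y c A n) (hkB B l) J v) :
    ∀ᶠ e : ℝ in nhdsWithin 0 (Set.Ioi 0), hkcond y c A B J (x + e • v) := by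
  obtain ⟨f, hf1, hf2, k, k1, k2, k3⟩ := hc
  have hs := hkB_sub hBA hn l1
  have ev1 := hk_small y c n f (A \ hkact y c A n) (by
    intro i hi
    simp only [hkact, Finset.mem_sdiff, Finset.mem_filter, not_and] at hi
    exact lt_of_le_of_ne (hn.1 i hi.1) (hi.2 hi.1))
  have ev2 : ∀ᶠ e : ℝ in nhds 0, ∀ j : ι, 0 < l j → 0 < l j + e * k j := by
    rw [Filter.eventually_all]
    intro j
    by_cases hj : 0 < l j
    · have hcont : ContinuousAt (fun e : ℝ => l j + e * k j) 0 := by fun_prop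
      have := continuousAt_const.eventually_lt hcont (f := fun _ : ℝ => (0 : ℝ)) (by simpa using hj)
      exact this.mono fun e he _ => he
    · exact Filter.Eventually.of_forall fun e h => absurd h hj
  have ev3 := nhdsWithin_le_nhds (s := Set.Ioi (0:ℝ)) (ev1.and ev2)
  filter_upwards [ev3, self_mem_nhdsWithin] with e he he0
  obtain ⟨he1, he2⟩ := he
  have he0 : 0 < e := he0
  have key : ∀ i ∈ hkact y c A n, ⟪y i, n + e • f⟫ = c i + e * ⟪y i, f⟫ := by
    intro i hi
    rw [inner_add_right, real_inner_smul_right, (Finset.mem_filter.mp hi).2]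
  refine ⟨n + e • f, ⟨fun i hi => ?_, fun i hi => ?_⟩, fun j hj => ?_,
    fun j => l j + e * k j, fun j hj => ?_, fun j hj => ?_, ?_⟩
  · by_cases hi2 : i ∈ hkact y c A n
    · rw [key i hi2]
      have := hf1.1 i hi2
      simp only [Pi.zero_apply] at this
      nlinarith
    · exact (he1 i (Finset.mem_sdiff.mpr ⟨hi, hi2⟩)).le
  · rw [key i (hs (Finset.mem_union_left _ hi)), hf1.2 i (Finset.mem_union_left _ hi)]
    simp
  · rw [key j (h2 hj), hf2 j hj]; simp
  · have : l j = 0 := by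
      by_contra h
      exact hj (h1 (Finset.mem_union_right _ (Finset.mem_filter.mpr ⟨Finset.mem_univ _, h⟩)))
    simp only [this, k1 j hj]; simp
  · by_cases h : l j = 0
    · have : j ∉ hkB B l := by simp [hkB, hj, h]
      have := k2 j this
      simp only [h]; positivity
    · exact (he2 j (lt_of_le_of_ne (l2 j hj) (Ne.symm h))).le
  · have : n + e • f - (x + e • v) = (n - x) + e • (f - v) := by
      rw [smul_sub]; abel
    rw [this, l3, k3, Finset.smul_sum, ← Finset.sum_add_distrib]
    simp only [add_smul, smul_smul]

theorem hk_loc_down {J : Finset ι} (l3 : n - x = ∑ j, l j • y j)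
    (h1 : hkB B l ⊆ J) (h2 : J ⊆ hkact y c A n) {v : V} {e : ℝ}
    (he : 0 < e) (hc : hkcond y c A B J (x + e • v)) :
    hkcond y 0 (hkact y c A n) (hkB B l) J v := by
  obtain ⟨f, hf1, hf2, k, k1, k2, k3⟩ := hc
  have key : ∀ i ∈ hkact y c A n, ⟪y i, e⁻¹ • (f - n)⟫ = e⁻¹ * (⟪y i, f⟫ - c i) := by
    intro i hi
    rw [real_inner_smul_right, inner_sub_right, (Finset.mem_filter.mp hi).2]
  have hei : 0 < e⁻¹ := inv_pos.mpr he
  have hl : ∀ j, j ∉ hkB B l → l j = 0 := by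
    intro j hj
    by_contra h
    exact hj (Finset.mem_union_right _ (Finset.mem_filter.mpr ⟨Finset.mem_univ _, h⟩))
  refine ⟨e⁻¹ • (f - n), ⟨fun i hi => ?_, fun i hi => ?_⟩, fun j hj => ?_,
    fun j => e⁻¹ * (k j - l j), fun j hj => ?_, fun j hj => ?_, ?_⟩
  · rw [key i hi]
    exact mul_nonpos_of_nonneg_of_nonpos hei.le (by linarith [hf1.1 i (Finset.mem_filter.mp hi).1])
  · rw [key i (h2 (h1 hi)), hf2 i (h1 hi)]; simp
  · rw [key j (h2 hj), hf2 j hj]; simp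
  · simp only [k1 j hj, hl j (fun h => hj (h1 h))]; simp
  · simp only [hl j hj, sub_zero]
    exact mul_nonneg hei.le (k2 j (fun h => hj (Finset.mem_union_left _ h)))
  · have : e⁻¹ • (f - n) - v = e⁻¹ • ((f - (x + e • v)) - (n - x)) := by
      have : v = e⁻¹ • e • v := by rw [smul_smul, inv_mul_cancel₀ he.ne', one_smul]
      conv_lhs => rw [this]
      rw [← smul_sub]; congr 1; abel
    rw [this, k3, l3, ← Finset.sum_sub_distrib, Finset.smul_sum]
    simp only [← sub_smul, smul_smul]

end Loc

theorem hkcond_zero (y : ι → V) (A B J : Finset ι) : hkcond y 0 A B J 0 :=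
  ⟨0, ⟨by simp, by simp⟩, by simp, fun _ => 0, by simp, by simp, by simp⟩

theorem hk_local [FiniteDimensional ℝ V] (y : ι → V) (c : ι → ℝ) (A B : Finset ι) (hBA : B ⊆ A)
    (x v : V)
    (hconst : ∀ n ∈ hkpoly y c A B, ∀ l : ι → ℝ, (∀ j, j ∉ hkact y c A n → l j = 0) →
      (∀ j, j ∉ B → 0 ≤ l j) → n - x = ∑ j, l j • y j → ∀ w,
        hkphi y 0 (hkact y c A n) (hkB B l) w = hkphi y 0 (hkact y c A n) (hkB B l) 0) :
    ∀ᶠ e : ℝ in nhdsWithin 0 (Set.Ioi 0), hkphi y c A B (x + e • v) = hkphi y c A B x := by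
  set X : Finset (Finset ι) :=
    Finset.univ.filter (fun J => hkF y c A B J ∧ hkcond y c A B J x) with hX
  have hN : ∃ N : Finset ι → V, ∀ J ∈ X, hkw y c A B J x (N J) := by
    have : ∀ J : Finset ι, ∃ f, J ∈ X → hkw y c A B J x f := by
      intro J
      by_cases hJ : J ∈ X
      · obtain ⟨f, hf⟩ := (Finset.mem_filter.mp hJ).2.2
        exact ⟨f, fun _ => hf⟩
      · exact ⟨0, fun h => absurd h hJ⟩
    choose N hN using this
    exact ⟨N, hN⟩
  obtain ⟨N, hN⟩ := hN
  have hL : ∃ L : V → ι → ℝ, ∀ n ∈ X.image N, (∀ j, j ∉ hkact y c A n → L n j = 0) ∧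
      (∀ j, j ∉ B → 0 ≤ L n j) ∧ n - x = ∑ j, L n j • y j := by
    have : ∀ n : V, ∃ l : ι → ℝ, n ∈ X.image N → (∀ j, j ∉ hkact y c A n → l j = 0) ∧
      (∀ j, j ∉ B → 0 ≤ l j) ∧ n - x = ∑ j, l j • y j := by
      intro n
      by_cases hn : n ∈ X.image N
      · obtain ⟨J, hJ, rfl⟩ := Finset.mem_image.mp hn
        obtain ⟨l, l1, l2, l3⟩ := (hN J hJ).2.2
        refine ⟨l, fun _ => ⟨fun j hj => l1 j (fun h => hj ?_), l2, l3⟩⟩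
        obtain ⟨z, hz, hzJ⟩ := (Finset.mem_filter.mp hJ).2.1
        refine Finset.mem_filter.mpr ⟨?_, (hN J hJ).2.1 j h⟩
        rw [← hzJ] at h
        exact (Finset.mem_filter.mp h).1
      · exact ⟨0, fun h => absurd h hn⟩
    choose L hL using this
    exact ⟨L, hL⟩
  obtain ⟨L, hL⟩ := hL
  have hmemX : ∀ J, J ∈ X ↔ hkF y c A B J ∧ hkcond y c A B J x := by
    intro J; simp [hX]
  -- the basic facts for members of X
  have hNpoly : ∀ n ∈ X.image N, n ∈ hkpoly y c A B := by
    intro n hn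
    obtain ⟨J, hJ, rfl⟩ := Finset.mem_image.mp hn
    exact (hN J hJ).1
  have hsub : ∀ J ∈ X, hkB B (L (N J)) ⊆ J ∧ J ⊆ hkact y c A (N J) := by
    intro J hJ
    obtain ⟨l1, l2, l3⟩ := hL (N J) (Finset.mem_image_of_mem N hJ)
    exact hk_locB hBA (hN J hJ).1 l1 l2 l3 ((hmemX J).mp hJ).1 (hN J hJ)
  have hfib : ∀ n ∈ X.image N, ∀ J, (J ∈ X ∧ N J = n) ↔
      hkF y 0 (hkact y c A n) (hkB B (L n)) J := by
    intro n hn J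
    obtain ⟨l1, l2, l3⟩ := hL n hn
    constructor
    · rintro ⟨hJ, rfl⟩
      exact hk_locF2 ((hmemX J).mp hJ).1 (hsub J hJ).1 (hsub J hJ).2
    · intro h
      obtain ⟨h1, h2, h3⟩ := hk_locF1 hBA (hNpoly n hn) l1 h
      have hw := hk_locW (hNpoly n hn) l2 l3 h2 h3
      have hJ : J ∈ X := (hmemX J).mpr ⟨h1, n, hw⟩
      refine ⟨hJ, ?_⟩
      have := hkw_contr (hN J hJ) hw
      rw [dist_self] at this
      exact dist_le_zero.mp this
  have hev : ∀ J : Finset ι, ∀ᶠ e : ℝ in nhdsWithin 0 (Set.Ioi 0),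
      ((hkF y c A B J ∧ hkcond y c A B J (x + e • v)) ↔
        (J ∈ X ∧ hkcond y 0 (hkact y c A (N J)) (hkB B (L (N J))) J v)) := by
    intro J
    by_cases hJ : J ∈ X
    · obtain ⟨l1, l2, l3⟩ := hL (N J) (Finset.mem_image_of_mem N hJ)
      have hs := hsub J hJ
      by_cases hc : hkcond y 0 (hkact y c A (N J)) (hkB B (L (N J))) J v
      · have := hk_loc_up hBA (hN J hJ).1 l1 l2 l3 hs.1 hs.2 hc
        filter_upwards [this] with e he
        exact ⟨fun _ => ⟨hJ, hc⟩, fun _ => ⟨((hmemX J).mp hJ).1, he⟩⟩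
      · filter_upwards [self_mem_nhdsWithin] with e he
        exact ⟨fun h => absurd (hk_loc_down l3 hs.1 hs.2 he h.2) hc, fun h => absurd h.2 hc⟩
    · by_cases hF : hkF y c A B J
      · have hnc : x ∈ {x | hkcond y c A B J x}ᶜ := fun h => hJ ((hmemX J).mpr ⟨hF, h⟩)
        have hopen := (hkcond_closed y c A B J).isOpen_compl
        have hcont : ContinuousAt (fun e : ℝ => x + e • v) 0 := by fun_prop
        have h0 := hcont.preimage_mem_nhds (hopen.mem_nhds (by simpa using hnc))
        filter_upwards [nhdsWithin_le_nhds h0] with e he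
        exact ⟨fun h => absurd h.2 he, fun h => absurd h.1 hJ⟩
      · exact Filter.Eventually.of_forall fun e =>
          ⟨fun h => absurd h.1 hF, fun h => absurd h.1 hJ⟩
  filter_upwards [Filter.eventually_all.mpr hev] with e he
  have s1 : hkphi y c A B (x + e • v) = ∑ J ∈ X with
      hkcond y 0 (hkact y c A (N J)) (hkB B (L (N J))) J v, (-1 : ℤ) ^ hkrk y J := by
    unfold hkphi
    apply Finset.sum_congr _ (fun _ _ => rfl)
    ext J
    rw [Finset.mem_filter, Finset.mem_filter]
    simpa using he J
  have s2 : hkphi y c A B x = ∑ J ∈ X, (-1 : ℤ) ^ hkrk y J := rfl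
  rw [s1, s2, ← Finset.sum_fiberwise_of_maps_to (t := X.image N) (g := N)
      (fun J hJ => Finset.mem_image_of_mem N hJ),
    Finset.sum_filter, ← Finset.sum_fiberwise_of_maps_to (t := X.image N) (g := N)
      (fun J hJ => Finset.mem_image_of_mem N hJ)]
  apply Finset.sum_congr rfl
  intro n hn
  obtain ⟨l1, l2, l3⟩ := hL n hn
  have hc := hconst n (hNpoly n hn) (L n) l1 l2 l3 v
  have t1 : hkphi y 0 (hkact y c A n) (hkB B (L n)) 0 = ∑ J ∈ X with N J = n, (-1 : ℤ) ^ hkrk y J := by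
    unfold hkphi
    apply Finset.sum_congr _ (fun _ _ => rfl)
    ext J
    rw [Finset.mem_filter, Finset.mem_filter, hfib n hn J]
    simp [hkcond_zero]
  have t2 : hkphi y 0 (hkact y c A n) (hkB B (L n)) v = ∑ J ∈ X with N J = n,
      if hkcond y 0 (hkact y c A (N J)) (hkB B (L (N J))) J v then (-1 : ℤ) ^ hkrk y J else 0 := by
    unfold hkphi
    rw [← Finset.sum_filter]
    apply Finset.sum_congr _ (fun _ _ => rfl)
    ext J
    simp only [Finset.mem_filter, hfib n hn J, Finset.mem_univ, true_and]
    constructor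
    · rintro ⟨h1, h2⟩
      have := ((hfib n hn J).mpr h1).2
      rw [this]; exact ⟨h1, h2⟩
    · rintro ⟨h1, h2⟩
      have := ((hfib n hn J).mpr h1).2
      rw [this] at h2; exact ⟨h1, h2⟩
  rw [← t1, ← t2, hc]


theorem hk_ray (g : ℝ → ℤ) (h1 : ∀ t, 0 ≤ t → ∀ᶠ e : ℝ in nhdsWithin 0 (Set.Ioi 0), g (t + e) = g t)
    (h2 : ∀ t, 0 < t → ∀ᶠ e : ℝ in nhdsWithin 0 (Set.Ioi 0), g (t - e) = g t) (t : ℝ) (ht : 0 ≤ t) :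
    g t = g 0 := by
  have key : ∀ t, 0 ≤ t → ∀ᶠ r in nhds t, 0 ≤ r → g r = g t := by
    intro t ht
    have a1 := h1 t ht
    rw [eventually_nhdsWithin_iff, Metric.eventually_nhds_iff] at a1
    obtain ⟨d1, hd1, a1⟩ := a1
    have a2 : ∃ d2 > 0, ∀ e : ℝ, 0 < e → e < d2 → 0 ≤ t - e → g (t - e) = g t := by
      rcases ht.eq_or_lt with h0 | h0
      · exact ⟨1, one_pos, fun e he _ h => by linarith⟩
      · have a2 := h2 t h0
        rw [eventually_nhdsWithin_iff, Metric.eventually_nhds_iff] at a2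
        obtain ⟨d2, hd2, a2⟩ := a2
        refine ⟨d2, hd2, fun e he he2 _ => a2 ?_ he⟩
        rw [Real.dist_eq, sub_zero, abs_of_pos he]; exact he2
    obtain ⟨d2, hd2, a2⟩ := a2
    rw [Metric.eventually_nhds_iff]
    refine ⟨min d1 d2, lt_min hd1 hd2, fun r hr hr0 => ?_⟩
    rw [Real.dist_eq] at hr
    rcases lt_trichotomy r t with hlt | heq | hgt
    · have := a2 (t - r) (by linarith) (by
        rw [abs_of_neg (by linarith)] at hr
        linarith [min_le_right d1 d2]) (by linarith)
      simpa using this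
    · rw [heq]
    · have := @a1 (r - t) (by
        rw [Real.dist_eq, sub_zero]
        exact lt_of_lt_of_le hr (min_le_left _ _)) (by
          simp only [Set.mem_Ioi]; linarith)
      simpa using this
  have hl : IsLocallyConstant (fun t => g |t|) := by
    rw [IsLocallyConstant.iff_eventually_eq]
    intro t
    have hc : ContinuousAt (fun t : ℝ => |t|) t := by fun_prop
    have := hc.eventually (key |t| (abs_nonneg t))
    exact this.mono fun s hs => hs (abs_nonneg s)
  have := hl.apply_eq_of_preconnectedSpace t 0
  simpa [abs_of_nonneg ht] using this

theorem hk_unb [FiniteDimensional ℝ V] (y : ι → V) (c : ι → ℝ) (A B : Finset ι) (S : Set V)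
    (hS : S ⊆ hkpoly y c A B) (hub : ¬ Bornology.IsBounded S) :
    ∃ g ∈ hkpoly y 0 A B, ‖g‖ = 1 ∧ ∀ M : ℝ, ∃ f ∈ S, M ≤ ⟪f, g⟫ := by
  have h1 : ∀ k : ℕ, ∃ f ∈ S, (k : ℝ) + 1 < ‖f‖ := by
    intro k
    by_contra h
    push Not at h
    exact hub (isBounded_iff_forall_norm_le.mpr ⟨_, h⟩)
  choose f hfS hf using h1
  have hpos : ∀ k, 0 < ‖f k‖ := fun k => by have := hf k; have : (0:ℝ) ≤ k := Nat.cast_nonneg k; linarith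
  have hsph : ∀ k, ‖f k‖⁻¹ • f k ∈ Metric.sphere (0 : V) 1 := by
    intro k
    rw [mem_sphere_zero_iff_norm, norm_smul, norm_inv, norm_norm, inv_mul_cancel₀ (hpos k).ne']
  have : ProperSpace V := FiniteDimensional.proper ℝ V
  obtain ⟨g, hg, p, hp, hlim⟩ := (isCompact_sphere (0 : V) 1).tendsto_subseq hsph
  have hg1 : ‖g‖ = 1 := by simpa using hg
  have hpk : ∀ k : ℕ, (k : ℝ) ≤ (p k : ℝ) := fun k => by exact_mod_cast hp.id_le k
  have hinf : Filter.Tendsto (fun k => ‖f (p k)‖) Filter.atTop Filter.atTop := by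
    apply Filter.tendsto_atTop_mono (fun k => ?_) tendsto_natCast_atTop_atTop
    have := hf (p k); have := hpk k; linarith
  have hinv := hinf.inv_tendsto_atTop
  have hin : ∀ i, Filter.Tendsto (fun k => ‖f (p k)‖⁻¹ * ⟪y i, f (p k)⟫) Filter.atTop (nhds ⟪y i, g⟫) := by
    intro i
    have := (tendsto_const_nhds (x := y i)).inner (𝕜 := ℝ) hlim
    simpa [real_inner_smul_right] using this
  have hci : ∀ i, Filter.Tendsto (fun k => ‖f (p k)‖⁻¹ * c i) Filter.atTop (nhds 0) := by
    intro i
    simpa using hinv.mul_const (c i)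
  refine ⟨g, ⟨fun i hi => ?_, fun i hi => ?_⟩, hg1, fun M => ?_⟩
  · refine le_of_tendsto_of_tendsto' (hin i) (hci i) fun k => ?_
    exact mul_le_mul_of_nonneg_left ((hS (hfS _)).1 i hi) (inv_nonneg.mpr (norm_nonneg _))
  · refine tendsto_nhds_unique (hin i) ?_
    have h2 : (fun k => ‖f (p k)‖⁻¹ * ⟪y i, f (p k)⟫) = fun k => ‖f (p k)‖⁻¹ * c i := by
      funext k; rw [(hS (hfS _)).2 i hi]
    rw [h2]; exact hci i
  · have h3 : Filter.Tendsto (fun k => ‖f (p k)‖⁻¹ * ⟪f (p k), g⟫) Filter.atTop (nhds 1) := by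
      have := hlim.inner (𝕜 := ℝ) (tendsto_const_nhds (x := g))
      rw [real_inner_self_eq_norm_sq, hg1] at this
      simpa [real_inner_smul_left] using this
    have h4 := h3.eventually (lt_mem_nhds (show (1/2 : ℝ) < 1 by norm_num))
    obtain ⟨k, hk1, hk2⟩ := (h4.and (hinf.eventually_ge_atTop (2 * |M|))).exists
    refine ⟨f (p k), hfS _, ?_⟩
    have h5 := hpos (p k)
    have h6 : ‖f (p k)‖ / 2 < ⟪f (p k), g⟫ := by
      rw [inv_mul_eq_div, lt_div_iff₀ h5] at hk1
      linarith
    have := le_abs_self M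
    linarith

theorem hk_far [FiniteDimensional ℝ V] (y : ι → V) (c : ι → ℝ) (A B : Finset ι) (x u v : V)
    (hu : u ∈ hkpoly y 0 A B) (hv : ∀ g ∈ hkpoly y 0 A B, ⟪v, g⟫ ≤ 0) (hvu : ⟪v, u⟫ < 0) :
    ∃ t : ℝ, 0 ≤ t ∧ hkphi y c A B (x + t • v) = 0 := by
  set S : Set V := {f | ∃ J, hkF y c A B J ∧ ∃ t : ℝ, 0 ≤ t ∧ hkw y c A B J (x + t • v) f} with hS
  have key : ∀ J, hkF y c A B J → ∀ (t : ℝ) (f : V), hkw y c A B J (x + t • v) f →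
      ∀ g ∈ hkpoly y 0 A B, ⟪f, g⟫ ≤ ⟪x, g⟫ + t * ⟪v, g⟫ := by
    intro J hJ t f hf g hg
    obtain ⟨z, hz, rfl⟩ := hJ
    have := hkmul_inner hf.2.2 g (fun j hj => hg.1 j (Finset.mem_filter.mp hj).1)
      (fun j _ hj => hg.2 j hj)
    rw [inner_sub_left, inner_add_left, real_inner_smul_left] at this
    linarith
  have hb : Bornology.IsBounded S := by
    by_contra hb
    obtain ⟨g, hg, -, hM⟩ := hk_unb y c A B S (by rintro f ⟨J, hJ, t, ht, hf⟩; exact hf.1) hb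
    obtain ⟨f, ⟨J, hJ, t, ht, hf⟩, hfg⟩ := hM (⟪x, g⟫ + 1)
    have h1 := key J hJ t f hf g hg
    have h2 := mul_nonpos_of_nonneg_of_nonpos ht (hv g hg)
    linarith
  obtain ⟨R, hR⟩ := isBounded_iff_forall_norm_le.mp hb
  refine ⟨max 0 ((⟪x, u⟫ + R * ‖u‖) / (-⟪v, u⟫) + 1), le_max_left _ _, ?_⟩
  set t := max 0 ((⟪x, u⟫ + R * ‖u‖) / (-⟪v, u⟫) + 1) with ht
  have ht0 : 0 ≤ t := le_max_left _ _
  have ht1 : (⟪x, u⟫ + R * ‖u‖) / (-⟪v, u⟫) + 1 ≤ t := le_max_right _ _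
  unfold hkphi
  rw [Finset.filter_false_of_mem, Finset.sum_empty]
  rintro J - ⟨hJ, f, hf⟩
  have h1 := key J hJ t f hf u hu
  have h2 := hR f ⟨J, hJ, t, ht0, hf⟩
  have h3 := neg_le_of_abs_le (abs_real_inner_le_norm f u)
  have h4 := mul_le_mul_of_nonneg_right h2 (norm_nonneg u)
  have h5 : (⟪x, u⟫ + R * ‖u‖) / (-⟪v, u⟫) < t := by linarith
  rw [div_lt_iff₀ (by linarith)] at h5
  linarith

theorem hk_euler [FiniteDimensional ℝ V] (y : ι → V) (A B : Finset ι) (hBA : B ⊆ A) (u : V)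
    (hu : u ∈ hkpoly y 0 A B) (b : ι) (hb : b ∈ A) (hbu : ⟪y b, u⟫ < 0) :
    ∑ J : Finset ι with hkF y 0 A B J, (-1 : ℤ) ^ hkrk y J = 0 := by
  have h := hk_euler_aux y B b (-u) (fun i hi => by
      have := hu.2 i hi
      simp only [Pi.zero_apply] at this
      rw [inner_neg_right, this, neg_zero])
    (by rw [inner_neg_right]; linarith) (A.erase b) (Finset.notMem_erase _ _) (fun i hi => by
      have := hu.1 i (Finset.mem_of_mem_erase hi)
      simp only [Pi.zero_apply] at this
      rw [inner_neg_right]; linarith) ∅ (by simp)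
  rw [Finset.insert_erase hb] at h
  rw [← h]
  unfold hkE
  rw [← Finset.sum_filter]
  have hiff : ∀ J, (J ∈ A.powerset ∧ ∃ z, hkcell y ∅ A B J z) ↔ hkF y 0 A B J := by
    intro J
    constructor
    · rintro ⟨hJ, z, h1, -, h3, h4⟩
      refine ⟨z, ⟨fun i hi => ?_, h1⟩, ?_⟩
      · by_cases hiJ : i ∈ J
        · exact (h3 i hi hiJ).le
        · exact (h4 i hi hiJ).le
      · ext i
        simp only [hkact, Finset.mem_filter, Pi.zero_apply]
        constructor
        · rintro ⟨h5, h6⟩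
          by_contra hiJ
          exact (h4 i h5 hiJ).ne h6
        · intro hi
          exact ⟨Finset.mem_powerset.mp hJ hi, h3 i (Finset.mem_powerset.mp hJ hi) hi⟩
    · rintro ⟨z, hz, rfl⟩
      refine ⟨Finset.mem_powerset.mpr (Finset.filter_subset _ _), z, hz.2, by simp,
        fun i _ hi => (Finset.mem_filter.mp hi).2, fun i hi hi2 => ?_⟩
      exact lt_of_le_of_ne (hz.1 i hi) (fun h => hi2 (Finset.mem_filter.mpr ⟨hi, h⟩))
  have hset : (Finset.univ.filter fun J => hkF y 0 A B J) =
      A.powerset.filter (fun J => ∃ z, hkcell y ∅ A B J z) := by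
    ext J
    rw [Finset.mem_filter, Finset.mem_filter, hiff]
    simp
  rw [hset]
  apply Finset.sum_congr rfl
  intro J hJ
  obtain ⟨z, hz, rfl⟩ := (hiff J).mp (Finset.mem_filter.mp hJ)
  rw [Finset.union_eq_right.mpr (hk_sub_act hBA hz)]

theorem hkphi_all (y : ι → V) (A B : Finset ι) (x : V)
    (h : ∀ J, hkF y 0 A B J → hkcond y 0 A B J x) :
    hkphi y 0 A B x = ∑ J : Finset ι with hkF y 0 A B J, (-1 : ℤ) ^ hkrk y J := by
  unfold hkphi
  apply Finset.sum_congr _ (fun _ _ => rfl)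
  ext J
  have := h J
  simp only [Finset.mem_filter, Finset.mem_univ, true_and]
  exact ⟨fun h => h.1, fun h => ⟨h, this h⟩⟩

theorem hk_mem_perp (y : ι → V) (K : Finset ι) (z : V) :
    z ∈ (Submodule.span ℝ (y '' (K : Set ι)))ᗮ ↔ ∀ i ∈ K, ⟪y i, z⟫ = 0 := by
  rw [Submodule.mem_orthogonal]
  exact ⟨fun h i hi => h _ (Submodule.subset_span ⟨i, hi, rfl⟩),
    fun h w hw => hk_span_zero y K z w h hw⟩

theorem hk_linear [FiniteDimensional ℝ V] (y : ι → V) (A B : Finset ι) (hBA : B ⊆ A)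
    (hlin : ∀ u ∈ hkpoly y 0 A B, ∀ i ∈ A, ⟪y i, u⟫ = 0) (x : V) :
    hkphi y 0 A B x = hkphi y 0 A B 0 := by
  rw [hkphi_all y A B 0 (fun J _ => hkcond_zero y A B J), hkphi_all]
  rintro J ⟨z, hz, rfl⟩
  have hA : ∀ z' ∈ hkpoly y 0 A B, hkact y 0 A z' = A := fun z' hz' =>
    Finset.filter_true_of_mem (hlin z' hz')
  rw [hA z hz]
  set W := Submodule.span ℝ (y '' (A : Set ι)) with hW
  have hf : ∀ i ∈ A, ⟪y i, x - W.starProjection x⟫ = 0 :=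
    (hk_mem_perp y A _).mp (Submodule.sub_starProjection_mem_orthogonal x)
  refine ⟨x - W.starProjection x, ⟨fun i hi => (hf i hi).le, fun i hi => hf i (hBA hi)⟩, hf, ?_⟩
  rw [hkmul_iff]
  intro u h1 h2
  have hu := hlin u ⟨h1, fun i hi => h2 i (hBA hi) hi⟩
  have : x - W.starProjection x - x = - W.starProjection x := by abel
  rw [this, inner_neg_left, hk_span_zero y A u _ hu (Submodule.starProjection_apply_mem W x), neg_zero]



/-- orthogonal complement of the normals plus the span of the equality normals -/
def hkK (y : ι → V) (A B : Finset ι) : Submodule ℝ V :=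
  (Submodule.span ℝ (y '' (A : Set ι)))ᗮ ⊔ Submodule.span ℝ (y '' (B : Set ι))

theorem hk_condK (y : ι → V) (A B : Finset ι) (hBA : B ⊆ A) (x : V) (hx : x ∈ hkK y A B)
    (J : Finset ι) (hJ : hkF y 0 A B J) : hkcond y 0 A B J x := by
  obtain ⟨z, hz, rfl⟩ := hJ
  obtain ⟨a, ha, s, hs, rfl⟩ := Submodule.mem_sup.mp hx
  rw [hk_mem_perp] at ha
  refine ⟨a, ⟨fun i hi => (ha i hi).le, fun i hi => ha i (hBA hi)⟩,
    fun i hi => ha i (Finset.mem_filter.mp hi).1, ?_⟩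
  rw [hkmul_iff]
  intro u h1 h2
  have e : a - (a + s) = -s := by abel
  rw [e, inner_neg_left, hk_span_zero y B u s (fun i hi => h2 i (hk_sub_act hBA hz hi) hi) hs, neg_zero]

theorem hk_condW [FiniteDimensional ℝ V] (y : ι → V) (A B : Finset ι) (hBA : B ⊆ A) (x : V)
    (b : ι) (hb : b ∈ A) (u : V) (hu : u ∈ hkpoly y 0 A B) (hbu : ⟪y b, u⟫ < 0)
    (hx : x ∉ hkK y A B) (t : ℝ) (ht : 0 ≤ t) (hxt : x + t • y b ∈ hkK y A B)
    (hW : ∀ w, w ∈ hkK y A B ⊔ Submodule.span ℝ {y b})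
    (J : Finset ι) (hJ : hkF y 0 A B J) : hkcond y 0 A B J x := by
  set K := hkK y A B with hK
  set pv := K.starProjection (y b) with hpv
  have hpK : pv ∈ K := Submodule.starProjection_apply_mem K (y b)
  set v0 := y b - pv with hv0
  have hort : ∀ w ∈ K, ⟪w, v0⟫ = 0 := fun w hw =>
    (Submodule.mem_orthogonal K _).mp (Submodule.sub_starProjection_mem_orthogonal (y b)) w hw
  have hyb : y b = v0 + pv := by rw [hv0]; abel
  have hvv : ⟪y b, v0⟫ = ⟪v0, v0⟫ := by
    rw [hyb, inner_add_left, hort pv hpK, add_zero]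
  have hne : v0 ≠ 0 := by
    intro h
    rw [h, zero_add] at hyb
    apply hx
    have : x = (x + t • y b) - t • pv := by rw [hyb]; abel
    rw [this]
    exact K.sub_mem hxt (K.smul_mem _ hpK)
  have hpos : 0 < ⟪v0, v0⟫ := real_inner_self_pos.mpr hne
  have hKA : ∀ a, (∀ i ∈ A, ⟪y i, a⟫ = 0) → a ∈ K := fun a ha =>
    Submodule.mem_sup_left ((hk_mem_perp y A a).mpr ha)
  have hKB : ∀ s ∈ Submodule.span ℝ (y '' (B : Set ι)), s ∈ K := fun s hs =>
    Submodule.mem_sup_right hs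
  have hdec : ∀ z ∈ hkpoly y 0 A B, ∃ a : V, ∃ r : ℝ, (∀ i ∈ A, ⟪y i, a⟫ = 0) ∧ r ≤ 0 ∧ z = a + r • v0 := by
    intro z hz
    obtain ⟨k, hk, q, hq, hkq⟩ := Submodule.mem_sup.mp (hW z)
    obtain ⟨r, rfl⟩ := Submodule.mem_span_singleton.mp hq
    obtain ⟨a, ha, s, hs, has⟩ := Submodule.mem_sup.mp (K.add_mem hk (K.smul_mem r hpK))
    have hz2 : z = a + s + r • v0 := by
      rw [has, ← hkq, hv0, smul_sub]; abel
    rw [hk_mem_perp] at ha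
    have e1 : ⟪s, z⟫ = 0 := hk_span_zero y B z s (fun i hi => hz.2 i hi) hs
    have e2 : ⟪s, a⟫ = 0 := hk_span_zero y B a s (fun i hi => ha i (hBA hi)) hs
    have e3 : ⟪s, v0⟫ = 0 := hort s (hKB s hs)
    have hs0 : s = 0 := by
      rw [hz2, inner_add_right, inner_add_right, real_inner_smul_right, e2, e3] at e1
      simpa using e1
    rw [hs0, add_zero] at hz2
    refine ⟨a, r, ha, ?_, hz2⟩
    have := hz.1 b hb
    rw [hz2, inner_add_right, ha b hb, real_inner_smul_right, hvv] at this
    simp only [Pi.zero_apply] at this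
    by_contra hr
    nlinarith [mul_pos (not_le.mp hr) hpos]
  have hv0A : ∀ i ∈ A, 0 ≤ ⟪y i, v0⟫ := by
    obtain ⟨a, r, ha, hr, hz⟩ := hdec u hu
    have hr0 : r < 0 := by
      rcases hr.lt_or_eq with h | h
      · exact h
      · rw [hz, h, inner_add_right, ha b hb] at hbu
        simp at hbu
    intro i hi
    have := hu.1 i hi
    rw [hz, inner_add_right, ha i hi, real_inner_smul_right] at this
    simp only [Pi.zero_apply] at this
    by_contra hc
    nlinarith [mul_pos_of_neg_of_neg hr0 (not_le.mp hc)]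
  have hv0B : ∀ i ∈ B, ⟪y i, v0⟫ = 0 := fun i hi =>
    hort _ (hKB _ (Submodule.subset_span ⟨i, hi, rfl⟩))
  have hx2 : x + t • v0 ∈ K := by
    have : x + t • v0 = (x + t • y b) - t • pv := by rw [hv0, smul_sub]; abel
    rw [this]
    exact K.sub_mem hxt (K.smul_mem _ hpK)
  obtain ⟨a, ha, s, hs, has⟩ := Submodule.mem_sup.mp hx2
  rw [hk_mem_perp] at ha
  have hxe : x = a + s - t • v0 := by rw [has]; abel
  obtain ⟨z, hz, rfl⟩ := hJ
  obtain ⟨a2, r, ha2, hr, hz2⟩ := hdec z hz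
  have hzi : ∀ i ∈ A, ⟪y i, z⟫ = r * ⟪y i, v0⟫ := by
    intro i hi
    rw [hz2, inner_add_right, ha2 i hi, real_inner_smul_right, zero_add]
  rcases hr.lt_or_eq with hr | hr
  · have hfi : ∀ i ∈ A, ⟪y i, a - t • v0⟫ = - (t * ⟪y i, v0⟫) := by
      intro i hi
      rw [inner_sub_right, ha i hi, real_inner_smul_right, zero_sub]
    refine ⟨a - t • v0, ⟨fun i hi => ?_, fun i hi => ?_⟩, fun i hi => ?_, ?_⟩
    · rw [hfi i hi]
      simpa using mul_nonneg ht (hv0A i hi)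
    · rw [hfi i (hBA hi), hv0B i hi]; simp
    · obtain ⟨hi, hi2⟩ := Finset.mem_filter.mp hi
      rw [hzi i hi] at hi2
      have : ⟪y i, v0⟫ = 0 := by simpa [hr.ne] using hi2
      rw [hfi i hi, this]; simp
    · rw [hkmul_iff]
      intro w h1 h2
      have e : a - t • v0 - x = -s := by rw [hxe]; abel
      rw [e, inner_neg_left,
        hk_span_zero y B w s (fun i hi => h2 i (hk_sub_act hBA hz hi) hi) hs, neg_zero]
  · have hJA : hkact y 0 A z = A := by
      apply Finset.filter_true_of_mem
      intro i hi
      rw [hzi i hi, hr]; simp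
    rw [hJA]
    refine ⟨a, ⟨fun i hi => (ha i hi).le, fun i hi => ha i (hBA hi)⟩, ha, ?_⟩
    rw [hkmul_iff]
    intro w h1 h2
    have hw : w ∈ hkpoly y 0 A B := ⟨h1, fun i hi => h2 i (hBA hi) hi⟩
    obtain ⟨a3, r3, ha3, hr3, hw3⟩ := hdec w hw
    have e : a - x = -s + t • v0 := by rw [hxe]; abel
    rw [e, inner_add_left, inner_neg_left, hk_span_zero y B w s hw.2 hs, neg_zero, zero_add,
      real_inner_smul_left, hw3, inner_add_right, real_inner_comm, hort a3 (hKA a3 ha3), zero_add,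
      real_inner_smul_right]
    have : r3 * ⟪v0, v0⟫ ≤ 0 := mul_nonpos_of_nonpos_of_nonneg hr3 hpos.le
    exact mul_nonpos_of_nonneg_of_nonpos ht this

/-- constancy along a ray on which the function is locally constant -/
theorem hk_ray_zero [FiniteDimensional ℝ V] (y : ι → V) (c : ι → ℝ) (A B : Finset ι) (x u v : V)
    (hu : u ∈ hkpoly y 0 A B) (hv : ∀ g ∈ hkpoly y 0 A B, ⟪v, g⟫ ≤ 0) (hvu : ⟪v, u⟫ < 0)
    (hloc : ∀ t : ℝ, 0 ≤ t → ∀ w : V, ∀ᶠ e : ℝ in nhdsWithin 0 (Set.Ioi 0),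
      hkphi y c A B (x + t • v + e • w) = hkphi y c A B (x + t • v)) :
    hkphi y c A B x = 0 := by
  obtain ⟨t, ht, h0⟩ := hk_far y c A B x u v hu hv hvu
  have := hk_ray (fun t => hkphi y c A B (x + t • v)) (fun t ht => by
    filter_upwards [hloc t ht v] with e he
    rw [← he, add_smul, add_assoc]) (fun t ht => by
    filter_upwards [hloc t ht.le (-v)] with e he
    rw [← he]
    congr 1
    rw [sub_smul, smul_neg]; abel) t ht
  simp only [zero_smul, add_zero] at this
  rw [← this, h0]

theorem hk_const [FiniteDimensional ℝ V] (y : ι → V) (N : ℕ) : ∀ A B : Finset ι, B ⊆ A →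
    (A \ B).card = N → ∀ x, hkphi y 0 A B x = hkphi y 0 A B 0 := by
  induction N using Nat.strong_induction_on with
  | _ N ih =>
  intro A B hBA hcard x
  by_cases hlin : ∀ u ∈ hkpoly y 0 A B, ∀ i ∈ A, ⟪y i, u⟫ = 0
  · exact hk_linear y A B hBA hlin x
  push Not at hlin
  obtain ⟨u, hu, b, hb, hbu⟩ := hlin
  replace hbu : ⟪y b, u⟫ < 0 := lt_of_le_of_ne (hu.1 b hb) hbu
  have heul := hk_euler y A B hBA u hu b hb hbu
  rw [hkphi_all y A B 0 (fun J _ => hkcond_zero y A B J), heul]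
  revert x
  have hloc : ∀ x, x ∉ hkK y A B → ∀ v : V, ∀ᶠ e : ℝ in nhdsWithin 0 (Set.Ioi 0),
      hkphi y 0 A B (x + e • v) = hkphi y 0 A B x := by
    intro x hx v
    apply hk_local y 0 A B hBA
    intro n hn l l1 l2 l3 w
    refine ih _ ?_ _ _ (hkB_sub hBA hn l1) rfl w
    rw [← hcard]
    have hsub : hkact y 0 A n \ hkB B l ⊆ A \ B := by
      apply Finset.sdiff_subset_sdiff (Finset.filter_subset _ _)
      exact Finset.subset_union_left
    refine lt_of_le_of_ne (Finset.card_le_card hsub) (fun h => hx ?_)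
    have heq := Finset.eq_of_subset_of_card_le hsub h.ge
    have h1 : ∀ i ∈ A, ⟪y i, n⟫ = 0 := by
      intro i hi
      by_cases hiB : i ∈ B
      · exact hn.2 i hiB
      · have : i ∈ hkact y 0 A n \ hkB B l := by rw [heq]; exact Finset.mem_sdiff.mpr ⟨hi, hiB⟩
        exact (Finset.mem_filter.mp (Finset.mem_sdiff.mp this).1).2
    have h2 : ∀ i, i ∉ B → l i = 0 := by
      intro i hiB
      by_contra hl
      have hib : i ∈ hkB B l :=
        Finset.mem_union_right _ (Finset.mem_filter.mpr ⟨Finset.mem_univ _, hl⟩)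
      have hiA : i ∈ A := (Finset.mem_filter.mp (hkB_sub hBA hn l1 hib)).1
      have : i ∈ hkact y 0 A n \ hkB B l := by rw [heq]; exact Finset.mem_sdiff.mpr ⟨hiA, hiB⟩
      exact (Finset.mem_sdiff.mp this).2 hib
    have h3 : x = n - ∑ j, l j • y j := by rw [← l3]; abel
    rw [h3]
    apply Submodule.sub_mem
    · exact Submodule.mem_sup_left ((hk_mem_perp y A n).mpr h1)
    · apply Submodule.mem_sup_right
      apply Submodule.sum_mem
      intro j _
      by_cases hj : j ∈ B
      · exact Submodule.smul_mem _ _ (Submodule.subset_span ⟨j, hj, rfl⟩)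
      · rw [h2 j hj, zero_smul]; exact Submodule.zero_mem _
  have hcase1 : ∀ x, (∀ t : ℝ, 0 ≤ t → x + t • y b ∉ hkK y A B) → hkphi y 0 A B x = 0 := by
    intro x hx
    exact hk_ray_zero y 0 A B x u (y b) hu (fun g hg => hg.1 b hb) hbu
      (fun t ht w => hloc _ (hx t ht) w)
  intro x
  by_cases hx : x ∈ hkK y A B
  · rw [hkphi_all y A B x (hk_condK y A B hBA x hx), heul]
  by_cases h1 : ∀ t : ℝ, 0 ≤ t → x + t • y b ∉ hkK y A B
  · exact hcase1 x h1
  push Not at h1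
  obtain ⟨t, ht, hxt⟩ := h1
  by_cases hW : ∀ w, w ∈ hkK y A B ⊔ Submodule.span ℝ {y b}
  · rw [hkphi_all y A B x (hk_condW y A B hBA x b hb u hu hbu hx t ht hxt hW), heul]
  push Not at hW
  obtain ⟨w, hw⟩ := hW
  obtain ⟨e, he, hpos⟩ := ((hloc x hx w).and self_mem_nhdsWithin).exists
  rw [← he]
  apply hcase1
  intro s hs hmem
  apply hw
  have hpos : (0 : ℝ) < e := hpos
  have : w = e⁻¹ • ((x + e • w + s • y b) - (x + t • y b) + (t - s) • y b) := by
    have : (x + e • w + s • y b) - (x + t • y b) + (t - s) • y b = e • w := by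
      rw [sub_smul]; abel
    rw [this, smul_smul, inv_mul_cancel₀ hpos.ne', one_smul]
  rw [this]
  apply Submodule.smul_mem
  apply Submodule.add_mem
  · exact Submodule.mem_sup_left (Submodule.sub_mem _ hmem hxt)
  · exact Submodule.mem_sup_right (Submodule.smul_mem _ _ (Submodule.mem_span_singleton_self _))

theorem hk_main [FiniteDimensional ℝ V] (y : ι → V) (c : ι → ℝ) (x u : V)
    (hu : ∀ i, ⟪y i, u⟫ ≤ 0) (b : ι) (hb : ⟪y b, u⟫ < 0) :
    hkphi y c Finset.univ ∅ x = 0 := by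
  refine hk_ray_zero y c _ _ x u (y b) ⟨fun i _ => hu i, by simp⟩
    (fun g hg => hg.1 b (Finset.mem_univ _)) hb (fun t _ w => ?_)
  apply hk_local y c _ _ (Finset.empty_subset _)
  intro n hn l l1 _ _ w
  exact hk_const y _ _ _ (hkB_sub (Finset.empty_subset _) hn l1) rfl w


/-- the face of a polyhedron with active set `J` -/
def hkface (y : ι → V) (c : ι → ℝ) (J : Finset ι) : Set V :=
  {z | (∀ i, ⟪y i, z⟫ ≤ c i) ∧ ∀ j ∈ J, ⟪y j, z⟫ = c j}

theorem hk_mem_poly (y : ι → V) (c : ι → ℝ) (z : V) :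
    z ∈ hkpoly y c Finset.univ ∅ ↔ ∀ i, ⟪y i, z⟫ ≤ c i := by
  simp [hkpoly]

theorem hk_mem_act (y : ι → V) (c : ι → ℝ) (z : V) (i : ι) :
    i ∈ hkact y c Finset.univ z ↔ ⟪y i, z⟫ = c i := by
  simp [hkact]

theorem hk_self_face (y : ι → V) (c : ι → ℝ) (z : V) (hz : ∀ i, ⟪y i, z⟫ ≤ c i) :
    z ∈ hkface y c (hkact y c Finset.univ z) :=
  ⟨hz, fun j hj => (hk_mem_act y c z j).mp hj⟩

/-- small steps from a point `z` stay in the polyhedron if they do not violate active constraints -/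
theorem hk_step (y : ι → V) (c : ι → ℝ) (z u : V) (hz : ∀ i, ⟪y i, z⟫ ≤ c i)
    (hu : ∀ j ∈ hkact y c Finset.univ z, ⟪y j, u⟫ ≤ 0) :
    ∃ e : ℝ, 0 < e ∧ ∀ i, ⟪y i, z + e • u⟫ ≤ c i := by
  have h := hk_small y c z u (Finset.univ \ hkact y c Finset.univ z) (by
    intro i hi
    have hi := (Finset.mem_sdiff.mp hi).2
    rw [hk_mem_act] at hi
    exact lt_of_le_of_ne (hz i) hi)
  have h2 : ∀ᶠ e : ℝ in nhdsWithin 0 (Set.Ioi 0), ∀ i ∈ Finset.univ \ hkact y c Finset.univ z,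
      ⟪y i, z + e • u⟫ < c i := h.filter_mono nhdsWithin_le_nhds
  obtain ⟨e, he, hpos⟩ := (h2.and self_mem_nhdsWithin).exists
  have hpos : (0 : ℝ) < e := hpos
  refine ⟨e, hpos, fun i => ?_⟩
  by_cases hi : i ∈ hkact y c Finset.univ z
  · have := mul_nonpos_of_nonneg_of_nonpos hpos.le (hu i hi)
    rw [inner_add_right, real_inner_smul_right]
    linarith [hz i]
  · exact (he i (by simp [hi])).le

theorem hk_face_inj (y : ι → V) (c : ι → ℝ) (z w : V) (hz : ∀ i, ⟪y i, z⟫ ≤ c i)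
    (hw : ∀ i, ⟪y i, w⟫ ≤ c i)
    (h : hkface y c (hkact y c Finset.univ z) = hkface y c (hkact y c Finset.univ w)) :
    hkact y c Finset.univ z = hkact y c Finset.univ w := by
  have h1 := hk_self_face y c z hz
  have h2 := hk_self_face y c w hw
  rw [h] at h1
  rw [← h] at h2
  apply Finset.Subset.antisymm
  · intro i hi
    exact (hk_mem_act y c w i).mpr (h2.2 i hi)
  · intro i hi
    exact (hk_mem_act y c z i).mpr (h1.2 i hi)

theorem hk_exists_face (y : ι → V) (c : ι → ℝ) (p : V) (q : ℝ)
    (hp : ∀ z ∈ hkpoly y c Finset.univ ∅, ⟪p, z⟫ ≤ q) (F : Set V)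
    (hF : F = {z | z ∈ hkpoly y c Finset.univ ∅ ∧ ⟪p, z⟫ = q}) (hne : F.Nonempty) :
    ∃ z, (∀ i, ⟪y i, z⟫ ≤ c i) ∧ F = hkface y c (hkact y c Finset.univ z) := by
  obtain ⟨z0, hz0, hmin⟩ := WellFounded.has_min
    (measure (fun z => (hkact y c Finset.univ z).card)).wf F hne
  have hz0F := hz0
  rw [hF] at hz0F
  have hz0P := (hk_mem_poly y c z0).mp hz0F.1
  refine ⟨z0, hz0P, ?_⟩
  apply Set.Subset.antisymm
  · intro z hz
    have hzF := hz
    rw [hF] at hzF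
    have hzP := (hk_mem_poly y c z).mp hzF.1
    refine ⟨hzP, ?_⟩
    set m : V := (1/2 : ℝ) • (z0 + z) with hm
    have hmi : ∀ w : V, ⟪w, m⟫ = (⟪w, z0⟫ + ⟪w, z⟫) / 2 := by
      intro w
      rw [hm, real_inner_smul_right, inner_add_right]; ring
    have hmF : m ∈ F := by
      rw [hF]
      refine ⟨(hk_mem_poly y c m).mpr fun i => ?_, ?_⟩
      · rw [hmi]; linarith [hz0P i, hzP i]
      · rw [hmi, hz0F.2, hzF.2]; ring
    have hsub : hkact y c Finset.univ m ⊆ hkact y c Finset.univ z0 := by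
      intro i hi
      rw [hk_mem_act, hmi] at hi
      rw [hk_mem_act]
      linarith [hz0P i, hzP i]
    have hle : (hkact y c Finset.univ z0).card ≤ (hkact y c Finset.univ m).card :=
      not_lt.mp (hmin m hmF)
    have heq := Finset.eq_of_subset_of_card_le hsub hle
    intro j hj
    rw [← heq, hk_mem_act, hmi] at hj
    linarith [hz0P j, hzP j]
  · intro w hw
    rw [hF]
    have hwP := (hk_mem_poly y c w).mpr hw.1
    refine ⟨hwP, ?_⟩
    obtain ⟨e, he, hst⟩ := hk_step y c z0 (z0 - w) hz0P (by
      intro j hj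
      rw [inner_sub_right, hw.2 j hj, (hk_mem_act y c z0 j).mp hj, sub_self])
    have h1 := hp _ ((hk_mem_poly y c _).mpr hst)
    have h2 := hp w hwP
    rw [inner_add_right, real_inner_smul_right, inner_sub_right, hz0F.2] at h1
    by_contra hc
    have h3 : 0 < q - ⟪p, w⟫ := sub_pos.mpr (lt_of_le_of_ne h2 hc)
    nlinarith [mul_pos he h3]

theorem hk_face_exposed (y : ι → V) (c : ι → ℝ) (J : Finset ι) :
    (∀ z ∈ hkpoly y c Finset.univ ∅, ⟪∑ j ∈ J, y j, z⟫ ≤ ∑ j ∈ J, c j) ∧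
    hkface y c J = {z | z ∈ hkpoly y c Finset.univ ∅ ∧ ⟪∑ j ∈ J, y j, z⟫ = ∑ j ∈ J, c j} := by
  constructor
  · intro z hz
    rw [hk_mem_poly] at hz
    rw [sum_inner]
    exact Finset.sum_le_sum fun i _ => hz i
  · ext z
    simp only [hkface, Set.mem_ofPred_eq, hk_mem_poly, sum_inner]
    refine and_congr_right fun hz => ?_
    rw [Finset.sum_eq_sum_iff_of_le fun i _ => hz i]

theorem hk_face_direction (y : ι → V) (c : ι → ℝ) (z : V) (hz : ∀ i, ⟪y i, z⟫ ≤ c i) :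
    (affineSpan ℝ (hkface y c (hkact y c Finset.univ z))).direction =
      (Submodule.span ℝ (y '' (hkact y c Finset.univ z : Set ι)))ᗮ := by
  rw [direction_affineSpan]
  apply le_antisymm
  · rw [vectorSpan_def, Submodule.span_le]
    rintro _ ⟨a, ha, b, hb, rfl⟩
    rw [SetLike.mem_coe, hk_mem_perp]
    intro i hi
    change ⟪y i, a - b⟫ = 0
    rw [inner_sub_right, ha.2 i hi, hb.2 i hi, sub_self]
  · intro u hu
    rw [hk_mem_perp] at hu
    obtain ⟨e, he, hst⟩ := hk_step y c z u hz (fun j hj => (hu j hj).le)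
    have hmem : z + e • u ∈ hkface y c (hkact y c Finset.univ z) := by
      refine ⟨hst, fun j hj => ?_⟩
      rw [inner_add_right, real_inner_smul_right, hu j hj, (hk_mem_act y c z j).mp hj]; simp
    have := vsub_mem_vectorSpan ℝ hmem (hk_self_face y c z hz)
    rw [vsub_eq_sub, add_sub_cancel_left] at this
    exact (Submodule.smul_mem_iff _ he.ne').mp this

theorem hk_face_ri (y : ι → V) (c : ι → ℝ) (z : V) (hz : ∀ i, ⟪y i, z⟫ ≤ c i) :
    z ∈ intrinsicInterior ℝ (hkface y c (hkact y c Finset.univ z)) := by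
  set J := hkact y c Finset.univ z with hJ
  have hzs : z ∈ affineSpan ℝ (hkface y c J) := subset_affineSpan ℝ _ (hk_self_face y c z hz)
  rw [mem_intrinsicInterior]
  refine ⟨⟨z, hzs⟩, ?_, rfl⟩
  rw [mem_interior]
  refine ⟨{p | ∀ i ∈ Finset.univ \ J, ⟪y i, (p : V)⟫ < c i}, ?_, ?_, ?_⟩
  · rintro ⟨p, hp⟩ h
    have hd : p -ᵥ z ∈ (affineSpan ℝ (hkface y c J)).direction :=
      AffineSubspace.vsub_mem_direction hp hzs
    rw [hJ, hk_face_direction y c z hz, hk_mem_perp, ← hJ] at hd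
    have he : ∀ j ∈ J, ⟪y j, p⟫ = c j := by
      intro j hj
      have := hd j hj
      rw [vsub_eq_sub, inner_sub_right, (hk_mem_act y c z j).mp hj] at this
      linarith
    refine ⟨fun i => ?_, he⟩
    by_cases hi : i ∈ J
    · exact (he i hi).le
    · exact (h i (by simp [hi])).le
  · have : {p : affineSpan ℝ (hkface y c J) | ∀ i ∈ Finset.univ \ J, ⟪y i, (p : V)⟫ < c i} =
        ⋂ i ∈ Finset.univ \ J, {p : affineSpan ℝ (hkface y c J) | ⟪y i, (p : V)⟫ < c i} := by
      ext p; simp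
    rw [this]
    apply isOpen_biInter_finset
    intro i _
    exact isOpen_lt (by fun_prop) continuous_const
  · intro i hi
    have hi := (Finset.mem_sdiff.mp hi).2
    rw [hJ, hk_mem_act] at hi
    exact lt_of_le_of_ne (hz i) hi

theorem hk_face_sdim (y : ι → E d) (c : ι → ℝ) (z : E d) (hz : ∀ i, ⟪y i, z⟫ ≤ c i) :
    hkrk y (hkact y c Finset.univ z) + sdim (hkface y c (hkact y c Finset.univ z)) = d := by
  unfold hkrk sdim
  rw [hk_face_direction y c z hz, Submodule.finrank_add_finrank_orthogonal]
  simp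

theorem hk_face_normal (y : ι → E d) (c : ι → ℝ) (z : E d) (hz : ∀ i, ⟪y i, z⟫ ≤ c i) (q : E d) :
    q ∈ normalCone (hkpoly y c Finset.univ ∅) (hkface y c (hkact y c Finset.univ z)) ↔
      hkmul y ∅ (hkact y c Finset.univ z) q := by
  constructor
  · intro h
    rw [hkmul_iff]
    intro u h1 _
    obtain ⟨e, he, hst⟩ := hk_step y c z u hz h1
    exact h z (hk_face_ri y c z hz) u ⟨e, he, (hk_mem_poly y c _).mpr hst⟩
  · rintro h f hf u ⟨e, he, hst⟩
    have hf := intrinsicInterior_subset hf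
    rw [hk_mem_poly] at hst
    refine hkmul_inner h u (fun j hj => ?_) (by simp)
    have := hst j
    rw [inner_add_right, real_inner_smul_right, hf.2 j hj] at this
    by_contra hc
    nlinarith [mul_pos he (not_le.mp hc)]

theorem hk_face_mem (y : ι → E d) (c : ι → ℝ) (z : E d) (hz : ∀ i, ⟪y i, z⟫ ≤ c i) (x : E d) :
    x ∈ hkface y c (hkact y c Finset.univ z) -
        normalCone (hkpoly y c Finset.univ ∅) (hkface y c (hkact y c Finset.univ z)) ↔
      hkcond y c Finset.univ ∅ (hkact y c Finset.univ z) x := by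
  rw [Set.mem_sub]
  constructor
  · rintro ⟨f, hf, n, hn, rfl⟩
    rw [hk_face_normal y c z hz] at hn
    refine ⟨f, (hk_mem_poly y c f).mpr hf.1, hf.2, ?_⟩
    simpa using hn
  · rintro ⟨f, hf1, hf2, hf3⟩
    exact ⟨f, ⟨(hk_mem_poly y c f).mp hf1, hf2⟩, f - x, (hk_face_normal y c z hz _).mpr hf3, by abel⟩

theorem hk_faces (y : ι → E d) (c : ι → ℝ) (x : E d) (k : ℕ) :
    {F : Set (E d) | F ∈ facesOfDim (hkpoly y c Finset.univ ∅) k ∧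
        x ∈ F - normalCone (hkpoly y c Finset.univ ∅) F} =
      hkface y c '' (((Finset.univ.filter (fun J => hkF y c Finset.univ ∅ J ∧
        hkcond y c Finset.univ ∅ J x)).filter (fun J => d - hkrk y J = k) : Finset (Finset ι)) :
          Set (Finset ι)) := by
  ext F
  constructor
  · rintro ⟨⟨hF, hne, hk⟩, hx⟩
    have : ∃ z, (∀ i, ⟪y i, z⟫ ≤ c i) ∧ F = hkface y c (hkact y c Finset.univ z) := by
      rcases hF with rfl | ⟨p, q, hp, hF⟩
      · exact hk_exists_face y c 0 0 (by simp) _ (by simp) hne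
      · exact hk_exists_face y c p q hp F hF hne
    obtain ⟨z, hz, rfl⟩ := this
    refine ⟨hkact y c Finset.univ z, ?_, rfl⟩
    rw [hk_face_mem y c z hz] at hx
    have := hk_face_sdim y c z hz
    simp only [Finset.coe_filter, Set.mem_ofPred_eq, Finset.mem_filter, Finset.mem_univ, true_and]
    exact ⟨⟨⟨z, (hk_mem_poly y c z).mpr hz, rfl⟩, hx⟩, by omega⟩
  · rintro ⟨J, hJ, rfl⟩
    simp only [Finset.coe_filter, Set.mem_ofPred_eq, Finset.mem_filter, Finset.mem_univ, true_and] at hJ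
    obtain ⟨⟨⟨z, hz, rfl⟩, hx⟩, hk⟩ := hJ
    rw [hk_mem_poly] at hz
    have := hk_face_sdim y c z hz
    obtain ⟨h1, h2⟩ := hk_face_exposed y c (hkact y c Finset.univ z)
    exact ⟨⟨Or.inr ⟨_, _, h1, h2⟩, ⟨z, hk_self_face y c z hz⟩, by omega⟩,
      (hk_face_mem y c z hz x).mpr hx⟩

theorem hk_total (y : ι → E d) (c : ι → ℝ) (x : E d) :
    ∑ k ∈ Finset.range (d + 1), (-1 : ℤ) ^ k *
        (Set.ncard {F : Set (E d) | F ∈ facesOfDim (hkpoly y c Finset.univ ∅) k ∧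
          x ∈ F - normalCone (hkpoly y c Finset.univ ∅) F} : ℤ)
      = (-1) ^ d * hkphi y c Finset.univ ∅ x := by
  set X : Finset (Finset ι) := Finset.univ.filter (fun J => hkF y c Finset.univ ∅ J ∧
        hkcond y c Finset.univ ∅ J x) with hX
  have hcard : ∀ k, Set.ncard {F : Set (E d) | F ∈ facesOfDim (hkpoly y c Finset.univ ∅) k ∧
          x ∈ F - normalCone (hkpoly y c Finset.univ ∅) F} =
          (X.filter (fun J => d - hkrk y J = k)).card := by
    intro k
    rw [hk_faces, Set.ncard_image_of_injOn, Set.ncard_coe_finset]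
    intro J hJ J' hJ' h
    obtain ⟨z, hz, rfl⟩ := (Finset.mem_filter.mp (Finset.mem_filter.mp hJ).1).2.1
    obtain ⟨w, hw, rfl⟩ := (Finset.mem_filter.mp (Finset.mem_filter.mp hJ').1).2.1
    rw [hk_mem_poly] at hz hw
    exact hk_face_inj y c z w hz hw h
  have h1 : hkphi y c Finset.univ ∅ x = ∑ J ∈ X, (-1 : ℤ) ^ hkrk y J := rfl
  rw [h1, Finset.mul_sum, ← Finset.sum_fiberwise_of_maps_to (s := X) (t := Finset.range (d + 1))
    (g := fun J => d - hkrk y J) (fun J _ => by simp)]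
  apply Finset.sum_congr rfl
  intro k _
  rw [hcard, mul_comm, ← nsmul_eq_mul, ← Finset.sum_const]
  apply Finset.sum_congr rfl
  intro J hJ
  have hk := (Finset.mem_filter.mp hJ).2
  have hle : hkrk y J ≤ d := by
    have := Submodule.finrank_le (Submodule.span ℝ (y '' (J : Set ι)))
    simpa [hkrk] using this
  have hd : d + hkrk y J = k + 2 * hkrk y J := by omega
  rw [← pow_add, hd, pow_add, pow_mul]
  simp

theorem hk_final (y : ι → E d) (c : ι → ℝ) (hne : (hkpoly y c Finset.univ ∅).Nonempty)
    (hub : ¬ Bornology.IsBounded (hkpoly y c Finset.univ ∅))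
    (hlf : ¬ ∃ (a v : E d), v ≠ 0 ∧ ∀ t : ℝ, a + t • v ∈ hkpoly y c Finset.univ ∅) (x : E d) :
    hkphi y c Finset.univ ∅ x = 0 := by
  obtain ⟨g, hg, hg1, -⟩ := hk_unb y c Finset.univ ∅ _ Set.Subset.rfl hub
  have hgi : ∀ i, ⟪y i, g⟫ ≤ 0 := fun i => hg.1 i (Finset.mem_univ _)
  have : ∃ b, ⟪y b, g⟫ < 0 := by
    by_contra hc
    push Not at hc
    obtain ⟨a, ha⟩ := hne
    rw [hk_mem_poly] at ha
    refine hlf ⟨a, g, by rintro rfl; simp at hg1, fun t => ?_⟩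
    rw [hk_mem_poly]
    intro i
    rw [inner_add_right, real_inner_smul_right, le_antisymm (hgi i) (hc i)]
    simpa using ha i
  obtain ⟨b, hb⟩ := this
  exact hk_main y c x g hgi b hb

end Aux

/-- for an unbounded line-free polyhedral set,
`Σ_k (-1)^k Σ_{F ∈ F_k(P)} 1_{F - N_F(P)}(x) = 0` for all `x`. -/
theorem stmt13 {d : ℕ} {P : Set (E d)} (hP : IsPolyhedron P) (hne : P.Nonempty)
    (hub : ¬ Bornology.IsBounded P)
    (hlf : ¬ ∃ (a v : E d), v ≠ 0 ∧ ∀ t : ℝ, a + t • v ∈ P) (x : E d) :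
    ∑ k ∈ Finset.range (d + 1), (-1 : ℤ) ^ k *
        (Set.ncard {F : Set (E d) | F ∈ facesOfDim P k ∧ x ∈ F - normalCone P F} : ℤ)
      = 0 := by
  obtain ⟨m, y, c, rfl⟩ := hP
  have hPe : {z : E d | ∀ i, ⟪z, y i⟫ ≤ c i} = hkpoly y c Finset.univ ∅ := by
    ext z
    rw [hk_mem_poly]
    simp only [Set.mem_ofPred_eq, real_inner_comm]
  rw [hPe] at hne hub hlf ⊢
  rw [hk_total, hk_final y c hne hub hlf x, mul_zero]
end
end

section
/- Let A be a finite reflection arrangement in ℝ^d associated with a finite reflection group W, and let C be a fixed closed chamber. Write χ_A(t) = Σ_k (−1)^{d−k} a_k t^k. Then for every x ∈ ℝ^d outside a finite union of hyperplanes, and every k ∈ {0,…,d}, the number of group elements g ∈ W with dim(gx, C) = k equals a_k. -/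
open scoped RealInnerProductSpace Pointwise Classical
open Set

noncomputable section

variable {d : ℕ}

/-- `g` is an orthogonal reflection: a linear isometry whose fixed-point set is
a linear hyperplane. -/
def IsReflection {d : ℕ} (g : (E d) ≃ₗᵢ[ℝ] (E d)) : Prop :=
  IsLinearHyperplane {x : E d | g x = x}


/-! ### Part 1: counting chambers of a central arrangement -/

lemma exists_small {ι : Type*} (S : Finset ι) (a b : ι → ℝ) (h : ∀ i ∈ S, 0 < a i) :
    ∃ δ > 0, ∀ t : ℝ, |t| ≤ δ → ∀ i ∈ S, 0 < a i + t * b i := by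
  induction S using Finset.induction_on with
  | empty => exact ⟨1, one_pos, by simp⟩
  | insert i S hi ih =>
    obtain ⟨δ, hδ, h1⟩ := ih (fun j hj => h j (Finset.mem_insert_of_mem hj))
    have hai := h i (Finset.mem_insert_self _ _)
    have hb : 0 < |b i| + 1 := by positivity
    refine ⟨min δ (a i / (2 * (|b i| + 1))), lt_min hδ (by positivity), ?_⟩
    intro t ht j hj
    rcases Finset.mem_insert.1 hj with rfl | hj
    · have h2 : |t| ≤ a j / (2 * (|b j| + 1)) := ht.trans (min_le_right _ _)
      rw [le_div_iff₀ (by positivity)] at h2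
      have h3 : |t * b j| ≤ |t| * (|b j| + 1) := by
        rw [abs_mul]; gcongr; linarith
      have h4 := neg_abs_le (t * b j)
      nlinarith
    · exact h1 t (ht.trans (min_le_left _ _)) j hj

def perp (v : E d) : Submodule ℝ (E d) := (ℝ ∙ v)ᗮ

lemma mem_perp {v z : E d} : z ∈ perp v ↔ ⟪v, z⟫ = 0 :=
  Submodule.mem_orthogonal_singleton_iff_inner_right

def flat {ι : Type*} (S : Finset ι) (α : ι → E d) : Submodule ℝ (E d) := ⨅ i ∈ S, perp (α i)

lemma mem_flat {ι : Type*} {S : Finset ι} {α : ι → E d} {z : E d} :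
    z ∈ flat S α ↔ ∀ i ∈ S, ⟪α i, z⟫ = 0 := by
  simp [flat, Submodule.mem_iInf, mem_perp]

def tight {ι : Type*} (S : Finset ι) (β : ι → E d) (y : E d) : Finset ι :=
  S.filter (fun j => ⟪β j, y⟫ = 0)

def kone {ι : Type*} (U : Submodule ℝ (E d)) (S : Finset ι) (β : ι → E d) : Set (E d) :=
  {z | z ∈ U ∧ ∀ j ∈ S, 0 ≤ ⟪β j, z⟫}

lemma kone_convex {ι : Type*} (U : Submodule ℝ (E d)) (S : Finset ι) (β : ι → E d) :
    Convex ℝ (kone U S β) := by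
  intro a ha b hb s t hs ht _
  refine ⟨U.add_mem (U.smul_mem _ ha.1) (U.smul_mem _ hb.1), fun j hj => ?_⟩
  rw [inner_add_right, inner_smul_right, inner_smul_right]
  have := ha.2 j hj
  have := hb.2 j hj
  positivity

lemma kone_closed {ι : Type*} (U : Submodule ℝ (E d)) (S : Finset ι) (β : ι → E d) :
    IsClosed (kone U S β) := by
  have : kone U S β = (U : Set (E d)) ∩ ⋂ j ∈ S, {z | 0 ≤ ⟪β j, z⟫} := by
    ext z; simp [kone]
  rw [this]
  refine U.closed_of_finiteDimensional.inter (isClosed_biInter fun j _ => ?_)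
  exact isClosed_le continuous_const (by fun_prop)

lemma kone_zero {ι : Type*} (U : Submodule ℝ (E d)) (S : Finset ι) (β : ι → E d) :
    (0 : E d) ∈ kone U S β := ⟨U.zero_mem, by simp⟩

lemma near_exists {ι : Type*} (U : Submodule ℝ (E d)) (S : Finset ι) (β : ι → E d) (x : E d) :
    ∃ y, IsNearestPt (kone U S β) x y := by
  obtain ⟨y, hy, h⟩ := (kone_closed U S β).exists_infDist_eq_dist ⟨0, kone_zero U S β⟩ x
  exact ⟨y, hy, fun z hz => h ▸ Metric.infDist_le_dist_of_mem hz⟩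

lemma near_inner {P : Set (E d)} (hP : Convex ℝ P) {x y : E d} (h : IsNearestPt P x y) :
    ∀ z ∈ P, ⟪x - y, z - y⟫ ≤ 0 := by
  refine (norm_eq_iInf_iff_real_inner_le_zero hP h.1).1 ?_
  have : Nonempty P := ⟨⟨y, h.1⟩⟩
  apply le_antisymm
  · refine le_ciInf fun w => ?_
    rw [← dist_eq_norm, ← dist_eq_norm]
    exact h.2 _ w.2
  · exact ciInf_le (f := fun w : P => ‖x - w‖)
      ⟨0, by rintro _ ⟨w, rfl⟩; positivity⟩ ⟨y, h.1⟩

lemma near_unique {P : Set (E d)} (hP : Convex ℝ P) {x y y' : E d} (h : IsNearestPt P x y)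
    (h' : IsNearestPt P x y') : y = y' := by
  have h1 := near_inner hP h y' h'.1
  have h2 := near_inner hP h' y h.1
  have h3 : ⟪y - y', y - y'⟫ = ⟪x - y, y' - y⟫ + ⟪x - y', y - y'⟫ := by
    simp only [inner_sub_left, inner_sub_right]
    rw [real_inner_comm y' y]; ring
  have h4 : ⟪y - y', y - y'⟫ ≤ 0 := by linarith
  exact sub_eq_zero.1 (inner_self_eq_zero.1 (le_antisymm h4 real_inner_self_nonneg))

lemma near_mono {P Q : Set (E d)} (hQ : Q ⊆ P) {x y : E d} (h : IsNearestPt P x y)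
    (hy : y ∈ Q) : IsNearestPt Q x y := ⟨hy, fun z hz => h.2 z (hQ hz)⟩

/-- Moving a little inside the flat of the tight constraints stays in the cone. -/
lemma kone_move {ι : Type*} {U : Submodule ℝ (E d)} {S : Finset ι} {β : ι → E d} {y l : E d}
    (hy : y ∈ kone U S β) (hl : l ∈ U ⊓ flat (tight S β y) β) :
    ∃ δ > 0, ∀ t : ℝ, |t| ≤ δ → y + t • l ∈ kone U S β := by
  obtain ⟨δ, hδ, h⟩ := exists_small (S.filter (fun j => ⟪β j, y⟫ ≠ 0)) (fun j => ⟪β j, y⟫)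
    (fun j => ⟪β j, l⟫) (by
      intro i hi
      rw [Finset.mem_filter] at hi
      exact lt_of_le_of_ne (hy.2 i hi.1) (Ne.symm hi.2))
  refine ⟨δ, hδ, fun t ht => ⟨U.add_mem hy.1 (U.smul_mem _ hl.1), fun j hj => ?_⟩⟩
  rw [inner_add_right, inner_smul_right]
  by_cases h0 : ⟪β j, y⟫ = 0
  · have := mem_flat.1 hl.2 j (Finset.mem_filter.2 ⟨hj, h0⟩)
    rw [h0, this]; simp
  · exact (h t ht j (Finset.mem_filter.2 ⟨hj, h0⟩)).le

lemma near_flat {ι : Type*} {U : Submodule ℝ (E d)} {S : Finset ι} {β : ι → E d} {x y : E d}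
    (h : IsNearestPt (kone U S β) x y) :
    y ∈ U ⊓ flat (tight S β y) β ∧ ∀ l ∈ U ⊓ flat (tight S β y) β, ⟪x - y, l⟫ = 0 := by
  refine ⟨⟨h.1.1, mem_flat.2 fun j hj => (Finset.mem_filter.1 hj).2⟩, fun l hl => ?_⟩
  obtain ⟨δ, hδ, h1⟩ := kone_move h.1 hl
  have h2 := near_inner (kone_convex U S β) h _ (h1 δ (by rw [abs_of_pos hδ]))
  have h3 := near_inner (kone_convex U S β) h _ (h1 (-δ) (by rw [abs_neg, abs_of_pos hδ]))
  rw [add_sub_cancel_left, inner_smul_right] at h2 h3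
  nlinarith

def Good {ι : Type*} (U : Submodule ℝ (E d)) (S : Finset ι) (β : ι → E d) (x : E d) (k : ℕ) :
    Prop :=
  (∃ z ∈ U, ∀ j ∈ S, 0 < ⟪β j, z⟫) ∧ ∃ y, IsNearestPt (kone U S β) x y ∧
    Module.finrank ℝ (U ⊓ flat (tight S β y) β : Submodule ℝ (E d)) = k

def Gen {ι : Type*} (U : Submodule ℝ (E d)) (S : Finset ι) (β : ι → E d) (x : E d) : Prop :=
  ∀ B ⊆ S, ∀ j ∈ S, ∀ y ∈ U ⊓ flat B β, (∀ l ∈ U ⊓ flat B β, ⟪x - y, l⟫ = 0) →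
    ⟪β j, y⟫ = 0 → ∀ l ∈ U ⊓ flat B β, ⟪β j, l⟫ = 0

lemma good_iff {ι : Type*} {U : Submodule ℝ (E d)} {S : Finset ι} {β : ι → E d} {x y : E d}
    {k : ℕ} (hne : ∃ z ∈ U, ∀ j ∈ S, 0 < ⟪β j, z⟫) (hy : IsNearestPt (kone U S β) x y) :
    Good U S β x k ↔ Module.finrank ℝ (U ⊓ flat (tight S β y) β : Submodule ℝ (E d)) = k := by
  constructor
  · rintro ⟨_, y', hy', h⟩
    rwa [near_unique (kone_convex U S β) hy hy']
  · intro h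
    exact ⟨hne, y, hy, h⟩

lemma flat_congr {ι : Type*} {S : Finset ι} {β β' : ι → E d}
    (h : ∀ j ∈ S, β' j = β j ∨ β' j = - β j) : flat S β' = flat S β := by
  ext z
  simp only [mem_flat]
  refine forall₂_congr fun j hj => ?_
  rcases h j hj with h | h <;> simp [h]

lemma tight_congr {ι : Type*} {S : Finset ι} {β β' : ι → E d}
    (h : ∀ j ∈ S, β' j = β j) (y : E d) : tight S β' y = tight S β y := by
  apply Finset.filter_congr
  intro j hj
  rw [h j hj]

lemma kone_congr {ι : Type*} {U : Submodule ℝ (E d)} {S : Finset ι} {β β' : ι → E d}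
    (h : ∀ j ∈ S, β' j = β j) : kone U S β' = kone U S β := by
  ext z
  simp only [kone, Set.mem_ofPred_eq]
  refine and_congr_right fun _ => forall₂_congr fun j hj => ?_
  rw [h j hj]

lemma good_congr {ι : Type*} {U : Submodule ℝ (E d)} {S : Finset ι} {β β' : ι → E d} {x : E d}
    {k : ℕ} (h : ∀ j ∈ S, β' j = β j) : Good U S β' x k ↔ Good U S β x k := by
  unfold Good
  rw [kone_congr h]
  refine and_congr ?_ ?_
  · refine exists_congr fun z => and_congr_right fun _ => forall₂_congr fun j hj => ?_
    rw [h j hj]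
  · refine exists_congr fun y => and_congr_right fun _ => ?_
    rw [tight_congr h, flat_congr]
    intro j hj
    exact Or.inl (h j (Finset.mem_filter.1 hj).1)

lemma gen_congr {ι : Type*} {U : Submodule ℝ (E d)} {S : Finset ι} {β β' : ι → E d} {x : E d}
    (h : ∀ j ∈ S, β' j = β j ∨ β' j = - β j) (hg : Gen U S β x) : Gen U S β' x := by
  intro B hB j hj
  rw [flat_congr (fun j hj => h j (hB hj))]
  intro y hy h1 h2 l hl
  have h3 := hg B hB j hj y hy h1
  rcases h j hj with h | h
  · rw [h] at h2 ⊢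
    exact h3 h2 l hl
  · rw [h, inner_neg_left, neg_eq_zero] at h2 ⊢
    exact h3 h2 l hl

lemma gen_sub {ι : Type*} {U : Submodule ℝ (E d)} {S : Finset ι} {β : ι → E d} {x : E d} {i : ι}
    (hg : Gen U (insert i S) β x) : Gen U S β x :=
  fun B hB j hj => hg B (hB.trans (Finset.subset_insert _ _)) j (Finset.mem_insert_of_mem hj)

lemma flat_insert {ι : Type*} {U : Submodule ℝ (E d)} {B : Finset ι} {β : ι → E d} {i : ι} :
    U ⊓ flat (insert i B) β = U ⊓ perp (β i) ⊓ flat B β := by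
  ext z
  simp only [Submodule.mem_inf, mem_flat, mem_perp, Finset.forall_mem_insert, and_assoc]

lemma gen_restrict {ι : Type*} {U : Submodule ℝ (E d)} {S : Finset ι} {β : ι → E d} {x : E d}
    {i : ι} (hg : Gen U (insert i S) β x) : Gen (U ⊓ perp (β i)) S β x := by
  intro B hB j hj
  rw [← flat_insert]
  exact hg (insert i B) (Finset.insert_subset_insert _ hB) j (Finset.mem_insert_of_mem hj)

section step
variable {ι : Type*} {U : Submodule ℝ (E d)} {S : Finset ι} {β : ι → E d} {x : E d} {i : ι}

lemma mem_kone_insert {z : E d} :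
    z ∈ kone U (insert i S) β ↔ z ∈ kone U S β ∧ 0 ≤ ⟪β i, z⟫ := by
  simp only [kone, Set.mem_ofPred_eq, Finset.forall_mem_insert]; tauto

lemma mem_kone_perp {z : E d} :
    z ∈ kone (U ⊓ perp (β i)) S β ↔ z ∈ kone U S β ∧ ⟪β i, z⟫ = 0 := by
  simp only [kone, Set.mem_ofPred_eq, Submodule.mem_inf, mem_perp]; tauto

lemma tight_insert_of_ne {y : E d} (h : ⟪β i, y⟫ ≠ 0) :
    tight (insert i S) β y = tight S β y := by
  simp [tight, Finset.filter_insert, h]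

lemma tight_insert_of_eq {y : E d} (h : ⟪β i, y⟫ = 0) :
    tight (insert i S) β y = insert i (tight S β y) := by
  simp [tight, Finset.filter_insert, h]

/-- flats at a nearest point on the new hyperplane. -/
lemma flat_eq_of_gen (hg : Gen U (insert i S) β x) {y : E d}
    (hy : IsNearestPt (kone U S β) x y) (h0 : ⟪β i, y⟫ = 0) :
    U ⊓ perp (β i) ⊓ flat (tight S β y) β = U ⊓ flat (tight S β y) β := by
  obtain ⟨h1, h2⟩ := near_flat hy
  have h3 := hg (tight S β y) ((Finset.filter_subset _ _).trans (Finset.subset_insert _ _)) i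
    (Finset.mem_insert_self _ _) y h1 h2 h0
  apply le_antisymm
  · exact inf_le_inf_right _ inf_le_left
  · intro l hl
    exact ⟨⟨hl.1, mem_perp.2 (h3 l hl)⟩, hl.2⟩

/-- If the nearest point in `K` lies in `K⁺`, then `K⁺` and `K` agree. -/
lemma good_plus (hg : Gen U (insert i S) β x) {k : ℕ}
    (hne : ∃ z ∈ U, ∀ j ∈ insert i S, 0 < ⟪β j, z⟫) {y : E d}
    (hy : IsNearestPt (kone U S β) x y) (h0 : 0 ≤ ⟪β i, y⟫) :
    Good U (insert i S) β x k ↔ Good U S β x k := by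
  have hy' : IsNearestPt (kone U (insert i S) β) x y :=
    near_mono (fun z hz => (mem_kone_insert.1 hz).1) hy (mem_kone_insert.2 ⟨hy.1, h0⟩)
  have hne' : ∃ z ∈ U, ∀ j ∈ S, 0 < ⟪β j, z⟫ := by
    obtain ⟨z, hz, h⟩ := hne
    exact ⟨z, hz, fun j hj => h j (Finset.mem_insert_of_mem hj)⟩
  rw [good_iff hne hy', good_iff hne' hy]
  by_cases h1 : ⟪β i, y⟫ = 0
  · rw [tight_insert_of_eq h1, flat_insert, flat_eq_of_gen hg hy h1]
  · rw [tight_insert_of_ne h1]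

/-- If the nearest point of `K⁺` lies on the hyperplane, `K⁺` and `F` agree. -/
lemma good_face {k : ℕ}
    (hne : ∃ z ∈ U, ∀ j ∈ insert i S, 0 < ⟪β j, z⟫)
    (hneF : ∃ z ∈ U ⊓ perp (β i), ∀ j ∈ S, 0 < ⟪β j, z⟫) {y : E d}
    (hy : IsNearestPt (kone U (insert i S) β) x y) (h0 : ⟪β i, y⟫ = 0) :
    Good U (insert i S) β x k ↔ Good (U ⊓ perp (β i)) S β x k := by
  have hy' : IsNearestPt (kone (U ⊓ perp (β i)) S β) x y := by
    refine near_mono ?_ hy (mem_kone_perp.2 ⟨(mem_kone_insert.1 hy.1).1, h0⟩)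
    intro z hz
    obtain ⟨h1, h2⟩ := mem_kone_perp.1 hz
    exact mem_kone_insert.2 ⟨h1, h2.ge⟩
  rw [good_iff hne hy, good_iff hneF hy', tight_insert_of_eq h0, flat_insert]

/-- The nearest point of `K⁺` lies on the hyperplane if the nearest point of `K` is outside. -/
lemma near_on_face {y y' : E d} (hy : IsNearestPt (kone U S β) x y) (h0 : ⟪β i, y⟫ ≤ 0)
    (hy' : IsNearestPt (kone U (insert i S) β) x y') : ⟪β i, y'⟫ = 0 := by
  obtain ⟨h1, h2⟩ := mem_kone_insert.1 hy'.1
  by_contra h3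
  have h4 : 0 < ⟪β i, y'⟫ := lt_of_le_of_ne h2 (Ne.symm h3)
  obtain ⟨δ, hδ, h5⟩ := exists_small {i} (fun _ => ⟪β i, y'⟫) (fun _ => ⟪β i, y - y'⟫) (by simpa)
  set t := min δ 1 with ht
  have ht0 : 0 < t := lt_min hδ one_pos
  have ht1 : t ≤ 1 := min_le_right _ _
  have h6 : y' + t • (y - y') ∈ kone U (insert i S) β := by
    refine mem_kone_insert.2 ⟨?_, ?_⟩
    · exact (kone_convex U S β).add_smul_sub_mem h1 hy.1 ⟨ht0.le, ht1⟩
    · rw [inner_add_right, inner_smul_right]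
      exact (h5 t (by rw [abs_of_pos ht0]; exact min_le_left _ _) i (by simp)).le
  have h7 := near_inner (kone_convex _ _ _) hy' _ h6
  rw [add_sub_cancel_left, inner_smul_right] at h7
  have h8 := near_inner (kone_convex _ _ _) hy y' h1
  have h9 : ⟪x - y', y - y'⟫ ≤ 0 := by nlinarith
  have h3 : ⟪y - y', y - y'⟫ = ⟪x - y, y' - y⟫ + ⟪x - y', y - y'⟫ := by
    simp only [inner_sub_left, inner_sub_right]
    rw [real_inner_comm y' y]; ring
  have h10 : ⟪y - y', y - y'⟫ ≤ 0 := by linarith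
  have h11 := sub_eq_zero.1 (inner_self_eq_zero.1 (le_antisymm h10 real_inner_self_nonneg))
  rw [h11] at h0
  linarith

/-- if `K⁻` has empty interior, the nearest point is in `K⁺`. -/
lemma nonneg_of_empty (hne : ∃ z ∈ U, ∀ j ∈ S, 0 < ⟪β j, z⟫)
    (hem : ¬ ∃ z ∈ U, (∀ j ∈ S, 0 < ⟪β j, z⟫) ∧ ⟪β i, z⟫ < 0) {y : E d} (hy : y ∈ kone U S β) :
    0 ≤ ⟪β i, y⟫ := by
  by_contra h
  push Not at h
  obtain ⟨z, hz, h1⟩ := hne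
  obtain ⟨δ, hδ, h5⟩ := exists_small {i} (fun _ => -⟪β i, y⟫) (fun _ => -⟪β i, z⟫) (by simpa)
  have h6 := h5 δ (by rw [abs_of_pos hδ]) i (by simp)
  refine hem ⟨y + δ • z, U.add_mem hy.1 (U.smul_mem _ hz), fun j hj => ?_, ?_⟩
  · rw [inner_add_right, inner_smul_right]
    have := hy.2 j hj
    have := h1 j hj
    positivity
  · rw [inner_add_right, inner_smul_right]; linarith

lemma face_nonempty (h1 : ∃ z ∈ U, ∀ j ∈ insert i S, 0 < ⟪β j, z⟫)
    (h2 : ∃ z ∈ U, (∀ j ∈ S, 0 < ⟪β j, z⟫) ∧ ⟪β i, z⟫ < 0) :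
    ∃ z ∈ U ⊓ perp (β i), ∀ j ∈ S, 0 < ⟪β j, z⟫ := by
  obtain ⟨a, ha, h1⟩ := h1
  obtain ⟨b, hb, h2, h3⟩ := h2
  have h4 := h1 i (Finset.mem_insert_self _ _)
  refine ⟨(-⟪β i, b⟫) • a + ⟪β i, a⟫ • b, ⟨U.add_mem (U.smul_mem _ ha) (U.smul_mem _ hb), ?_⟩, ?_⟩
  · refine mem_perp.2 ?_
    rw [inner_add_right, inner_smul_right, inner_smul_right]; ring
  · intro j hj
    rw [inner_add_right, inner_smul_right, inner_smul_right]
    have := h1 j (Finset.mem_insert_of_mem hj)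
    have := h2 j hj
    have : 0 < -⟪β i, b⟫ := by linarith
    positivity

lemma perturb (hα : ∃ z ∈ U, ⟪β i, z⟫ ≠ 0) {z : E d} (hz : z ∈ U) (hS : ∀ j ∈ S, 0 < ⟪β j, z⟫)
    (h0 : 0 ≤ ⟪β i, z⟫) : ∃ z ∈ U, ∀ j ∈ insert i S, 0 < ⟪β j, z⟫ := by
  obtain ⟨v, hv, h1⟩ := hα
  obtain ⟨δ, hδ, h5⟩ := exists_small S (fun j => ⟪β j, z⟫) (fun j => ⟪β j, ⟪β i, v⟫ • v⟫) hS
  refine ⟨z + δ • ⟪β i, v⟫ • v, U.add_mem hz (U.smul_mem _ (U.smul_mem _ hv)), ?_⟩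
  rw [Finset.forall_mem_insert]
  constructor
  · rw [inner_add_right, inner_smul_right, inner_smul_right]
    have : 0 < ⟪β i, v⟫ * ⟪β i, v⟫ := mul_self_pos.2 h1
    positivity
  · intro j hj
    rw [inner_add_right, inner_smul_right]
    exact h5 δ (by rw [abs_of_pos hδ]) j hj

lemma step_aux {β' : ι → E d} (hS : ∀ j ∈ S, β' j = β j) (hi : β' i = - β i)
    (hα : ∃ z ∈ U, ⟪β i, z⟫ ≠ 0) (hg : Gen U (insert i S) β x) (k : ℕ) {y : E d}
    (hne : ∃ z ∈ U, ∀ j ∈ S, 0 < ⟪β j, z⟫)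
    (hy : IsNearestPt (kone U S β) x y) (h0 : 0 ≤ ⟪β i, y⟫) 
    (hp : ∃ z ∈ U, ∀ j ∈ insert i S, 0 < ⟪β j, z⟫) :
    (if Good U (insert i S) β x k then (1 : ℤ) else 0)
      + (if Good U (insert i S) β' x k then (1 : ℤ) else 0)
    = (if Good U S β x k then (1 : ℤ) else 0)
      + (if Good (U ⊓ perp (β i)) S β x k then (1 : ℤ) else 0) := by
  rw [if_congr (good_plus hg hp hy h0) rfl rfl]
  congr 1
  have hperp : perp (β' i) = perp (β i) := by
    ext z; simp [mem_perp, hi]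
  by_cases hm : ∃ z ∈ U, ∀ j ∈ insert i S, 0 < ⟪β' j, z⟫
  · have hm' : ∃ z ∈ U, (∀ j ∈ S, 0 < ⟪β j, z⟫) ∧ ⟪β i, z⟫ < 0 := by
      obtain ⟨z, hz, h⟩ := hm
      refine ⟨z, hz, fun j hj => ?_, ?_⟩
      · rw [← hS j hj]; exact h j (Finset.mem_insert_of_mem hj)
      · have := h i (Finset.mem_insert_self _ _)
        rw [hi, inner_neg_left] at this; linarith
    have hF := face_nonempty hp hm'
    obtain ⟨y', hy'⟩ := near_exists U (insert i S) β' x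
    have hyb : IsNearestPt (kone U S β') x y := by rwa [kone_congr hS]
    have h1 := near_on_face (i := i) hyb (by rw [hi, inner_neg_left]; linarith) hy'
    have hF' : ∃ z ∈ U ⊓ perp (β' i), ∀ j ∈ S, 0 < ⟪β' j, z⟫ := by
      rw [hperp]
      obtain ⟨z, hz, h⟩ := hF
      exact ⟨z, hz, fun j hj => by rw [hS j hj]; exact h j hj⟩
    refine if_congr ?_ rfl rfl
    rw [good_face hm hF' hy' h1, hperp, good_congr hS]
  · rw [if_neg, if_neg]
    · rintro ⟨⟨z, hz, h⟩, -⟩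
      obtain ⟨v, hv, h1⟩ := hα
      refine hm (perturb ⟨v, hv, by rw [hi, inner_neg_left]; simpa⟩ hz.1
        (fun j hj => by rw [hS j hj]; exact h j hj) ?_)
      rw [hi, inner_neg_left, mem_perp.1 hz.2]; simp
    · exact fun h => hm h.1

lemma step_lemma {β' : ι → E d} (hS : ∀ j ∈ S, β' j = β j) (hi : β' i = - β i)
    (hα : ∃ z ∈ U, ⟪β i, z⟫ ≠ 0) (hg : Gen U (insert i S) β x) (k : ℕ) :
    (if Good U (insert i S) β x k then (1 : ℤ) else 0)
      + (if Good U (insert i S) β' x k then (1 : ℤ) else 0)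
    = (if Good U S β x k then (1 : ℤ) else 0)
      + (if Good (U ⊓ perp (β i)) S β x k then (1 : ℤ) else 0) := by
  have hperp : perp (β' i) = perp (β i) := by
    ext z; simp [mem_perp, hi]
  have hα' : ∃ z ∈ U, ⟪β' i, z⟫ ≠ 0 := by
    obtain ⟨v, hv, h1⟩ := hα
    exact ⟨v, hv, by rw [hi, inner_neg_left]; simpa⟩
  have hg' : Gen U (insert i S) β' x := by
    refine gen_congr (fun j hj => ?_) hg
    rcases Finset.mem_insert.1 hj with rfl | hj
    · exact Or.inr hi
    · exact Or.inl (hS j hj)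
  by_cases hne : ∃ z ∈ U, ∀ j ∈ S, 0 < ⟪β j, z⟫
  · have hne' : ∃ z ∈ U, ∀ j ∈ S, 0 < ⟪β' j, z⟫ := by
      obtain ⟨z, hz, h⟩ := hne
      exact ⟨z, hz, fun j hj => by rw [hS j hj]; exact h j hj⟩
    obtain ⟨y, hy⟩ := near_exists U S β x
    have hyb : IsNearestPt (kone U S β') x y := by rwa [kone_congr hS]
    have main1 : 0 ≤ ⟪β i, y⟫ → (∃ z ∈ U, ∀ j ∈ insert i S, 0 < ⟪β j, z⟫) → _ :=
      fun h0 hp => step_aux hS hi hα hg k hne hy h0 hp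
    have main2 : 0 ≤ ⟪β' i, y⟫ → (∃ z ∈ U, ∀ j ∈ insert i S, 0 < ⟪β' j, z⟫) → _ :=
      fun h0 hp => step_aux (β := β') (β' := β) (fun j hj => (hS j hj).symm)
        (by rw [hi, neg_neg]) hα' hg' k hne' hyb h0 hp
    rw [add_comm (if Good U (insert i S) β' x k then (1 : ℤ) else 0), hperp,
      if_congr (good_congr hS) rfl rfl, if_congr (good_congr hS) rfl rfl] at main2
    by_cases hp : ∃ z ∈ U, ∀ j ∈ insert i S, 0 < ⟪β j, z⟫
    · by_cases hm : ∃ z ∈ U, ∀ j ∈ insert i S, 0 < ⟪β' j, z⟫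
      · rcases le_total 0 ⟪β i, y⟫ with h0 | h0
        · exact main1 h0 hp
        · exact main2 (by rw [hi, inner_neg_left]; linarith) hm
      · refine main1 (nonneg_of_empty hne ?_ hy.1) hp
        rintro ⟨z, hz, h1, h2⟩
        refine hm ⟨z, hz, ?_⟩
        rw [Finset.forall_mem_insert]
        refine ⟨by rw [hi, inner_neg_left]; linarith, fun j hj => by rw [hS j hj]; exact h1 j hj⟩
    · have hm : ∃ z ∈ U, ∀ j ∈ insert i S, 0 < ⟪β' j, z⟫ := by
        obtain ⟨z, hz, h⟩ := hne
        have h1 : ⟪β i, z⟫ ≤ 0 := by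
          by_contra h1
          push Not at h1
          exact hp ⟨z, hz, Finset.forall_mem_insert _ _ _ |>.2 ⟨h1, h⟩⟩
        exact perturb hα' hz (fun j hj => by rw [hS j hj]; exact h j hj)
          (by rw [hi, inner_neg_left]; linarith)
      refine main2 (nonneg_of_empty hne' ?_ hyb.1) hm
      rintro ⟨z, hz, h1, h2⟩
      refine hp ⟨z, hz, ?_⟩
      rw [hi, inner_neg_left] at h2
      rw [Finset.forall_mem_insert]
      refine ⟨by linarith, fun j hj => by rw [← hS j hj]; exact h1 j hj⟩
  · rw [if_neg, if_neg, if_neg, if_neg]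
    · rintro ⟨⟨z, hz, h⟩, -⟩
      exact hne ⟨z, hz.1, h⟩
    · exact fun h => hne h.1
    · rintro ⟨⟨z, hz, h⟩, -⟩
      exact hne ⟨z, hz, fun j hj => by rw [← hS j hj]; exact h j (Finset.mem_insert_of_mem hj)⟩
    · rintro ⟨⟨z, hz, h⟩, -⟩
      exact hne ⟨z, hz, fun j hj => h j (Finset.mem_insert_of_mem hj)⟩

end step

def sg {ι : Type*} (T : Finset ι) (α : ι → E d) : ι → E d :=
  fun j => if j ∈ T then α j else - α j

lemma perp_inf_finrank {U : Submodule ℝ (E d)} {v : E d} (h : ∃ z ∈ U, ⟪v, z⟫ ≠ 0) :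
    Module.finrank ℝ U = Module.finrank ℝ (U ⊓ perp v : Submodule ℝ (E d)) + 1 := by
  let f : U →ₗ[ℝ] ℝ := (innerₛₗ ℝ v).comp U.subtype
  have h1 := f.finrank_range_add_finrank_ker
  have hf : f ≠ 0 := by
    obtain ⟨z, hz, h⟩ := h
    intro h0
    apply h
    have := LinearMap.congr_fun h0 ⟨z, hz⟩
    simpa [f] using this
  have h2 : LinearMap.range f = ⊤ := LinearMap.range_eq_top.2 (LinearMap.surjective hf)
  have h3 : (U ⊓ perp v : Submodule ℝ (E d)) = (LinearMap.ker f).map U.subtype := by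
    ext z
    simp only [Submodule.mem_inf, mem_perp, Submodule.mem_map, LinearMap.mem_ker]
    constructor
    · rintro ⟨hz, h⟩
      exact ⟨⟨z, hz⟩, by simpa [f] using h, rfl⟩
    · rintro ⟨w, hw, rfl⟩
      exact ⟨w.2, by simpa [f] using hw⟩
  have h4 : Module.finrank ℝ (U ⊓ perp v : Submodule ℝ (E d))
      = Module.finrank ℝ (LinearMap.ker f) := by
    rw [h3]
    exact Submodule.finrank_map_subtype_eq U _
  rw [h4, ← h1, h2, finrank_top, Module.finrank_self, add_comm]

theorem count_chambers {ι : Type*} (α : ι → E d) (x : E d) (k : ℕ) (S : Finset ι) :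
    ∀ U : Submodule ℝ (E d), Gen U S α x →
    ∑ T ∈ S.powerset, (if Good U S (sg T α) x k then (1 : ℤ) else 0)
      = (-1 : ℤ) ^ (Module.finrank ℝ U + k) *
        ∑ B ∈ S.powerset, if Module.finrank ℝ (U ⊓ flat B α : Submodule ℝ (E d)) = k
          then (-1 : ℤ) ^ B.card else 0 := by
  induction S using Finset.induction_on with
  | empty =>
    intro U _
    obtain ⟨y, hy⟩ := near_exists U (∅ : Finset ι) (sg ∅ α) x
    have h : Good U ∅ (sg ∅ α) x k ↔ Module.finrank ℝ U = k := by
      rw [good_iff ⟨0, U.zero_mem, by simp⟩ hy]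
      have : U ⊓ flat (tight ∅ (sg ∅ α) y) (sg ∅ α) = U := by
        refine inf_eq_left.2 fun z _ => mem_flat.2 fun i hi => ?_
        simp [tight] at hi
      rw [this]
    simp only [Finset.powerset_empty, Finset.sum_singleton, Finset.card_empty, pow_zero]
    rw [if_congr h rfl rfl]
    have : (U ⊓ flat (∅ : Finset ι) α) = U := by simp [flat]
    rw [this]
    split_ifs with h
    · rw [h, ← two_mul]; simp
    · simp
  | insert i S hi ih =>
    intro U hg
    rw [Finset.sum_powerset_insert hi, Finset.sum_powerset_insert hi]
    by_cases hα : ∃ z ∈ U, ⟪α i, z⟫ ≠ 0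
    · have key : ∀ T ∈ S.powerset, (if Good U (insert i S) (sg T α) x k then (1 : ℤ) else 0)
          + (if Good U (insert i S) (sg (insert i T) α) x k then (1 : ℤ) else 0)
          = (if Good U S (sg T α) x k then (1 : ℤ) else 0)
          + (if Good (U ⊓ perp (α i)) S (sg T α) x k then (1 : ℤ) else 0) := by
        intro T hT
        have hiT : i ∉ T := fun h => hi (Finset.mem_powerset.1 hT h)
        have h1 : sg T α i = - α i := by simp [sg, hiT]
        have h2 : perp (sg T α i) = perp (α i) := by ext z; simp [mem_perp, h1]
        rw [← h2]
        apply step_lemma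
        · intro j hj
          have : j ≠ i := fun h => hi (h ▸ hj)
          simp [sg, this]
        · rw [h1]; simp [sg]
        · obtain ⟨z, hz, h⟩ := hα
          exact ⟨z, hz, by rw [h1, inner_neg_left]; simpa⟩
        · refine gen_congr (fun j _ => ?_) hg
          unfold sg; split_ifs <;> simp
      rw [← Finset.sum_add_distrib, Finset.sum_congr rfl key, Finset.sum_add_distrib,
        ih U (gen_sub hg), ih _ (gen_restrict hg), perp_inf_finrank hα, mul_add]
      congr 1
      rw [add_right_comm, pow_succ, mul_assoc]
      congr 1
      rw [Finset.mul_sum]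
      refine Finset.sum_congr rfl fun B hB => ?_
      have hiB : i ∉ B := fun h => hi (Finset.mem_powerset.1 hB h)
      rw [flat_insert, Finset.card_insert_of_notMem hiB, pow_succ]
      split_ifs <;> ring
    · push Not at hα
      have hU : U ⊓ perp (α i) = U := inf_eq_left.2 fun z hz => mem_perp.2 (hα z hz)
      have hbad : ∀ T, ¬ Good U (insert i S) (sg T α) x k := by
        rintro T ⟨⟨z, hz, h⟩, -⟩
        have h1 := h i (Finset.mem_insert_self _ _)
        have h2 := hα z hz
        unfold sg at h1
        split_ifs at h1
        · linarith
        · rw [inner_neg_left] at h1; linarith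
      simp only [hbad, if_false, Finset.sum_const_zero, add_zero]
      rw [← Finset.sum_add_distrib, Finset.sum_eq_zero, mul_zero]
      intro B hB
      have hiB : i ∉ B := fun h => hi (Finset.mem_powerset.1 hB h)
      rw [flat_insert, hU, Finset.card_insert_of_notMem hiB, pow_succ]
      split_ifs <;> ring


/-! ### Part 2: faces of the cone -/

section faces
variable {ι : Type*} {S : Finset ι} {β : ι → E d}

lemma face_direction {F : Set (E d)} {y : E d} (hF : IsFaceOf (kone ⊤ S β) F) (hyF : y ∈ F)
    (hL : F ⊆ (⊤ ⊓ flat (tight S β y) β : Submodule ℝ (E d))) :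
    (affineSpan ℝ F).direction = ⊤ ⊓ flat (tight S β y) β := by
  have hyP : y ∈ kone ⊤ S β := by
    rcases hF with rfl | ⟨w, c, _, rfl⟩
    · exact hyF
    · exact hyF.1
  apply le_antisymm
  · have h1 : affineSpan ℝ F ≤ (⊤ ⊓ flat (tight S β y) β : Submodule ℝ (E d)).toAffineSubspace :=
      affineSpan_le.2 hL
    have h2 := AffineSubspace.direction_le h1
    simpa using h2
  · intro l hl
    obtain ⟨δ, hδ, h⟩ := kone_move hyP hl
    have h1 : y + δ • l ∈ F := by
      have hp := h δ (by rw [abs_of_pos hδ])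
      have hm := h (-δ) (by rw [abs_neg, abs_of_pos hδ])
      rcases hF with rfl | ⟨w, c, hw, rfl⟩
      · exact hp
      · refine ⟨hp, ?_⟩
        have h2 := hw _ hp
        have h3 := hw _ hm
        have h4 : ⟪w, y⟫ = c := hyF.2
        rw [inner_add_right, inner_smul_right] at h2 h3 ⊢
        linarith
    have h2 := AffineSubspace.vsub_mem_direction (mem_affineSpan ℝ h1) (mem_affineSpan ℝ hyF)
    rw [vsub_eq_sub, add_sub_cancel_left] at h2
    exact (Submodule.smul_mem_iff _ hδ.ne').1 h2

lemma projDim_iff {x : E d} {k : ℕ} : projDimEq (kone ⊤ S β) x k ↔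
    ∃ y, IsNearestPt (kone ⊤ S β) x y ∧
      Module.finrank ℝ (⊤ ⊓ flat (tight S β y) β : Submodule ℝ (E d)) = k := by
  constructor
  · rintro ⟨y, F, hy, hF, hyF, hk⟩
    refine ⟨y, hy, ?_⟩
    have hyF' : y ∈ F := intrinsicInterior_subset hyF
    have hFP : F ⊆ kone ⊤ S β := by
      rcases hF with rfl | ⟨w, c, _, rfl⟩
      · exact subset_rfl
      · exact fun z hz => hz.1
    rw [← face_direction hF hyF' ?_]
    · exact hk
    · intro z hz
      refine ⟨trivial, mem_flat.2 fun j hj => ?_⟩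
      obtain ⟨hjS, hj0⟩ := Finset.mem_filter.1 hj
      have hz0 := (hFP hz).2 j hjS
      obtain ⟨y', hy', rfl⟩ := hyF
      have hmem : ∀ t : ℝ, AffineMap.lineMap (y' : E d) z t ∈ affineSpan ℝ F := fun t =>
        AffineMap.lineMap_mem t y'.2 (mem_affineSpan ℝ hz)
      let f : ℝ → affineSpan ℝ F := fun t => ⟨AffineMap.lineMap (y' : E d) z t, hmem t⟩
      have hf : Continuous f := by
        refine Continuous.subtype_mk ?_ _
        exact AffineMap.lineMap_continuous
      have hf0 : f 0 = y' := by
        apply Subtype.ext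
        simp [f]
      have hev : ∀ᶠ t in nhds (0 : ℝ), f t ∈ interior ((↑) ⁻¹' F : Set (affineSpan ℝ F)) := by
        apply hf.continuousAt.eventually
        rw [hf0]
        exact isOpen_interior.mem_nhds hy'
      obtain ⟨ε, hε, h⟩ := Metric.eventually_nhds_iff.1 hev
      have h1 := interior_subset (h (y := -(ε / 2)) (by
        rw [Real.dist_eq, sub_zero, abs_neg, abs_of_pos (by positivity)]; linarith))
      have h2 := (hFP h1).2 j hjS
      simp only [f, AffineMap.lineMap_apply, vsub_eq_sub, vadd_eq_add, inner_add_right,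
        inner_smul_right, inner_sub_right, hj0] at h2
      nlinarith
  · rintro ⟨y, hy, hk⟩
    have hyP := hy.1
    let w : E d := - ∑ j ∈ tight S β y, β j
    have hw : ∀ z, ⟪w, z⟫ = - ∑ j ∈ tight S β y, ⟪β j, z⟫ := by
      intro z
      simp [w, sum_inner]
    have hts : ∀ j ∈ tight S β y, j ∈ S := fun j hj => (Finset.mem_filter.1 hj).1
    have hF : IsFaceOf (kone ⊤ S β) {z | z ∈ kone ⊤ S β ∧ ⟪w, z⟫ = 0} := by
      refine Or.inr ⟨w, 0, ?_, rfl⟩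
      intro z hz
      rw [hw]
      have : 0 ≤ ∑ j ∈ tight S β y, ⟪β j, z⟫ := Finset.sum_nonneg fun j hj => hz.2 j (hts j hj)
      linarith
    have hyF : y ∈ {z | z ∈ kone ⊤ S β ∧ ⟪w, z⟫ = 0} := by
      refine ⟨hyP, ?_⟩
      rw [hw, neg_eq_zero]
      exact Finset.sum_eq_zero fun j hj => (Finset.mem_filter.1 hj).2
    have hL : {z | z ∈ kone ⊤ S β ∧ ⟪w, z⟫ = 0}
        ⊆ (⊤ ⊓ flat (tight S β y) β : Submodule ℝ (E d)) := by
      rintro z ⟨hz, h0⟩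
      refine ⟨trivial, mem_flat.2 ?_⟩
      rw [hw, neg_eq_zero] at h0
      exact (Finset.sum_eq_zero_iff_of_nonneg fun j hj => hz.2 j (hts j hj)).1 h0
    refine ⟨y, {z | z ∈ kone ⊤ S β ∧ ⟪w, z⟫ = 0}, hy, hF, ?_, ?_⟩
    · refine ⟨⟨y, mem_affineSpan ℝ hyF⟩, ?_, rfl⟩
      have hsub : affineSpan ℝ {z | z ∈ kone ⊤ S β ∧ ⟪w, z⟫ = 0}
          ≤ (⊤ ⊓ flat (tight S β y) β : Submodule ℝ (E d)).toAffineSubspace := affineSpan_le.2 hL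
      refine mem_interior.2 ⟨⋂ j ∈ S.filter (fun j => ⟪β j, y⟫ ≠ 0),
        {z | 0 < ⟪β j, (z : E d)⟫}, ?_, ?_, ?_⟩
      · intro z hz
        have hzL : (z : E d) ∈ (⊤ ⊓ flat (tight S β y) β : Submodule ℝ (E d)) := hsub z.2
        simp only [Set.mem_iInter] at hz
        refine ⟨⟨trivial, fun j hj => ?_⟩, ?_⟩
        · by_cases h0 : ⟪β j, y⟫ = 0
          · exact (mem_flat.1 hzL.2 j (Finset.mem_filter.2 ⟨hj, h0⟩)).ge
          · exact (hz j (Finset.mem_filter.2 ⟨hj, h0⟩)).le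
        · rw [hw, neg_eq_zero]
          exact Finset.sum_eq_zero fun j hj => mem_flat.1 hzL.2 j hj
      · refine isOpen_biInter_finset fun j _ => ?_
        exact isOpen_lt continuous_const (by fun_prop)
      · simp only [Set.mem_iInter]
        intro j hj
        obtain ⟨h1, h2⟩ := Finset.mem_filter.1 hj
        exact lt_of_le_of_ne (hyP.2 j h1) (Ne.symm h2)
    · unfold sdim
      rw [face_direction hF hyF hL]
      exact hk

/-- Closed chambers are the closed cones. -/
lemma chamber_eq {U : Set (E d)} (hU : U = ⋃ j ∈ S, {z | ⟪β j, z⟫ = 0}) {p : E d}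
    (hp : ∀ j ∈ S, 0 < ⟪β j, p⟫) :
    closure (connectedComponentIn Uᶜ p) = kone ⊤ S β := by
  have hmem : ∀ z, z ∈ Uᶜ ↔ ∀ j ∈ S, ⟪β j, z⟫ ≠ 0 := by
    intro z
    rw [hU]
    simp
  have h1 : connectedComponentIn Uᶜ p = {z | ∀ j ∈ S, 0 < ⟪β j, z⟫} := by
    apply Set.Subset.antisymm
    · intro z hz j hj
      by_contra h
      push Not at h
      have hpre := isPreconnected_connectedComponentIn (F := Uᶜ) (x := p)
      have hpp : p ∈ connectedComponentIn Uᶜ p :=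
        mem_connectedComponentIn ((hmem p).2 fun j hj => (hp j hj).ne')
      have := hpre.intermediate_value hz hpp (f := fun z => ⟪β j, z⟫) (by fun_prop)
      obtain ⟨w, hw, hw0⟩ := this ⟨h, (hp j hj).le⟩
      exact (hmem w).1 (connectedComponentIn_subset _ _ hw) j hj hw0
    · refine IsPreconnected.subset_connectedComponentIn ?_ hp ?_
      · refine Convex.isPreconnected ?_
        intro a ha b hb s t hs ht hst j hj
        rw [inner_add_right, inner_smul_right, inner_smul_right]
        have h1 := ha j hj
        have h2 := hb j hj
        rcases hs.eq_or_lt with rfl | hs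
        · have : t = 1 := by linarith
          subst this; simpa using h2
        · positivity
      · intro z hz
        exact (hmem z).2 fun j hj => (hz j hj).ne'
  rw [h1]
  apply Set.Subset.antisymm
  · refine closure_minimal ?_ (kone_closed _ _ _)
    intro z hz
    exact ⟨trivial, fun j hj => (hz j hj).le⟩
  · intro z hz
    have hlim : Filter.Tendsto (fun t : ℝ => z + t • p) (nhdsWithin 0 (Set.Ioi 0)) (nhds z) := by
      have : Filter.Tendsto (fun t : ℝ => z + t • p) (nhds 0) (nhds (z + (0 : ℝ) • p)) :=
        Continuous.tendsto (by fun_prop) 0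
      rw [zero_smul, add_zero] at this
      exact this.mono_left nhdsWithin_le_nhds
    refine mem_closure_of_tendsto hlim ?_
    filter_upwards [self_mem_nhdsWithin] with t ht j hj
    rw [inner_add_right, inner_smul_right]
    have h1 := hz.2 j hj
    have h2 := hp j hj
    have h3 : 0 < t := ht
    positivity

end faces


/-! ### Part 3: simple transitivity -/

def sr (v : E d) : (E d) ≃ₗᵢ[ℝ] (E d) := Submodule.reflection (ℝ ∙ v)ᗮ

lemma sr_apply {v : E d} (hv : ‖v‖ = 1) (z : E d) : sr v z = z - (2 * ⟪v, z⟫) • v := by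
  unfold sr
  rw [Submodule.reflection_orthogonal_apply, Submodule.reflection_singleton_apply, hv]
  simp only [one_pow, div_one, RCLike.ofReal_real_eq_id, id]
  rw [neg_sub, ← Nat.cast_smul_eq_nsmul ℝ, smul_smul]
  norm_num

lemma iso_mul_apply (g h : (E d) ≃ₗᵢ[ℝ] (E d)) (z : E d) : (g * h) z = g (h z) := rfl

lemma sr_mul_self (v : E d) : sr v * sr v = 1 := Submodule.reflection_mul_reflection _

lemma sr_inv (v : E d) : (sr v)⁻¹ = sr v := Submodule.reflection_inv

lemma sr_neg (v : E d) : sr (-v) = sr v := by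
  unfold sr
  have : Submodule.span ℝ {-v} = Submodule.span ℝ {v} := by
    rw [← Set.neg_singleton, Submodule.span_neg]
  congr 2

lemma inner_iso (g : (E d) ≃ₗᵢ[ℝ] (E d)) (u z : E d) : ⟪u, g z⟫ = ⟪g⁻¹ u, z⟫ := by
  rw [← g.inner_map_map (g⁻¹ u) z]
  congr 1
  exact (g.apply_symm_apply u).symm

lemma sr_conj (g : (E d) ≃ₗᵢ[ℝ] (E d)) {v : E d} (hv : ‖v‖ = 1) :
    sr (g v) = g * sr v * g⁻¹ := by
  ext1 z
  have h1 : ‖g v‖ = 1 := by rw [g.norm_map, hv]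
  rw [sr_apply h1, iso_mul_apply, iso_mul_apply, sr_apply hv,
    map_sub, map_smul, inner_iso, inv_inv]
  congr 1
  exact (g.apply_symm_apply z).symm

lemma unit_smul {u v : E d} (hu : ‖u‖ = 1) (hv : ‖v‖ = 1) {a b : ℝ} (ha : a ≠ 0)
    (h : a • u = b • v) : u = v ∨ u = -v := by
  have h1 : |a| = |b| := by
    have := congrArg norm h
    rwa [norm_smul, norm_smul, hu, hv, mul_one, mul_one, Real.norm_eq_abs,
      Real.norm_eq_abs] at this
  rcases abs_eq_abs.1 h1 with h2 | h2
  · left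
    rw [← h2] at h
    exact smul_right_injective _ ha h
  · right
    have h3 : b = -a := by linarith
    rw [h3, neg_smul, ← smul_neg] at h
    exact smul_right_injective _ ha h

lemma pos_trans {a b c : ℝ} (h1 : 0 < a * b) (h2 : 0 < b * c) : 0 < a * c := by
  have hb : 0 < b * b := mul_self_pos.2 (by rintro rfl; simp at h1)
  have h3 : 0 < (a * c) * (b * b) := by
    have := mul_pos h1 h2
    nlinarith
  exact (pos_iff_pos_of_mul_pos h3).2 hb

lemma pos_symm {a b : ℝ} (h1 : 0 < a * b) : 0 < b * a := by rwa [mul_comm]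

lemma generic_dir (N : Finset (E d)) (hN : ∀ w ∈ N, w ≠ 0) : ∃ e : E d, ∀ w ∈ N, ⟪w, e⟫ ≠ 0 := by
  have h := Subspace.biUnion_ne_univ_of_top_notMem (k := ℝ) (s := N.image perp) (by
    intro h
    obtain ⟨w, hw, h⟩ := Finset.mem_image.1 h
    have h1 : w ∈ perp w := by rw [h]; trivial
    exact hN w hw (inner_self_eq_zero.1 (mem_perp.1 h1)))
  obtain ⟨e, he⟩ := (Set.ne_univ_iff_exists_notMem _).1 h
  refine ⟨e, fun w hw h0 => he ?_⟩
  simp only [Set.mem_iUnion]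
  exact ⟨perp w, Finset.mem_image_of_mem _ hw, mem_perp.2 h0⟩

def IsRoots (W : Subgroup ((E d) ≃ₗᵢ[ℝ] (E d))) (Φ : Finset (E d)) : Prop :=
  ∀ v, v ∈ Φ ↔ ‖v‖ = 1 ∧ sr v ∈ W

def same (Φ : Finset (E d)) (p q : E d) : Prop := ∀ u ∈ Φ, 0 < ⟪u, p⟫ * ⟪u, q⟫

def Simple (Φ : Finset (E d)) (p v : E d) : Prop :=
  v ∈ Φ ∧ ∀ u ∈ Φ, u ≠ v → u ≠ -v → 0 < ⟪u, p⟫ * ⟪u, sr v p⟫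

lemma same.symm {Φ : Finset (E d)} {p q : E d} (h : same Φ p q) : same Φ q p :=
  fun u hu => pos_symm (h u hu)

lemma same.trans {Φ : Finset (E d)} {p q r : E d} (h : same Φ p q) (h' : same Φ q r) :
    same Φ p r := fun u hu => pos_trans (h u hu) (h' u hu)

section group
variable {W : Subgroup ((E d) ≃ₗᵢ[ℝ] (E d))} {Φ : Finset (E d)}

lemma exists_roots (hW : Finite W) : ∃ Φ, IsRoots W Φ := by
  have hfin : {v : E d | ‖v‖ = 1 ∧ sr v ∈ W}.Finite := by
    have h1 : {v : E d | ‖v‖ = 1 ∧ sr v ∈ W} ⊆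
        ⋃ g ∈ (W : Set ((E d) ≃ₗᵢ[ℝ] (E d))), {v : E d | ‖v‖ = 1 ∧ sr v = g} := by
      rintro v ⟨h1, h2⟩
      simp only [Set.mem_iUnion]
      exact ⟨sr v, h2, h1, rfl⟩
    refine (Set.Finite.biUnion (Set.toFinite _) fun g _ => ?_).subset h1
    by_cases hne : ∃ v : E d, ‖v‖ = 1 ∧ sr v = g
    · obtain ⟨v, hv, rfl⟩ := hne
      refine (Set.toFinite {v, -v}).subset ?_
      rintro u ⟨hu, h⟩
      have h1 : sr u u = sr v u := by rw [h]
      rw [sr_apply hu, sr_apply hv, real_inner_self_eq_norm_sq, hu] at h1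
      have h2 : (2 : ℝ) • u = (2 * ⟪v, u⟫) • v := by
        have := sub_right_injective h1
        simpa using this
      exact unit_smul hu hv two_ne_zero h2
    · have : {v : E d | ‖v‖ = 1 ∧ sr v = g} = ∅ := by
        ext v
        simp only [Set.mem_empty_iff_false, iff_false]
        exact fun h => hne ⟨v, h⟩
      rw [this]
      exact Set.finite_empty
  exact ⟨hfin.toFinset, fun v => by simp⟩

lemma IsRoots.neg (h : IsRoots W Φ) {v : E d} (hv : v ∈ Φ) : -v ∈ Φ := by
  rw [h] at hv ⊢
  rwa [norm_neg, sr_neg]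

lemma IsRoots.map (h : IsRoots W Φ) {g : (E d) ≃ₗᵢ[ℝ] (E d)} (hg : g ∈ W) {v : E d} (hv : v ∈ Φ) :
    g v ∈ Φ := by
  rw [h] at hv ⊢
  rw [sr_conj g hv.1, g.norm_map]
  exact ⟨hv.1, W.mul_mem (W.mul_mem hg hv.2) (W.inv_mem hg)⟩

lemma IsRoots.same (h : IsRoots W Φ) {g : (E d) ≃ₗᵢ[ℝ] (E d)} (hg : g ∈ W) {p q : E d}
    (hs : same Φ p q) : same Φ (g p) (g q) := by
  intro u hu
  rw [inner_iso, inner_iso]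
  exact hs _ (h.map (W.inv_mem hg) hu)

lemma IsRoots.reg (h : IsRoots W Φ) {g : (E d) ≃ₗᵢ[ℝ] (E d)} (hg : g ∈ W) {p : E d}
    (hs : ∀ u ∈ Φ, ⟪u, p⟫ ≠ 0) : ∀ u ∈ Φ, ⟪u, g p⟫ ≠ 0 := by
  intro u hu
  rw [inner_iso]
  exact hs _ (h.map (W.inv_mem hg) hu)

lemma Simple.neg (h : IsRoots W Φ) {p v : E d} (hs : Simple Φ p v) : Simple Φ p (-v) := by
  refine ⟨h.neg hs.1, fun u hu h1 h2 => ?_⟩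
  rw [sr_neg]
  exact hs.2 u hu (by simpa using h2) h1

lemma adj (h : IsRoots W Φ) {v z : E d} (hv : v ∈ Φ) (h0 : ⟪v, z⟫ = 0)
    (hz : ∀ u ∈ Φ, u ≠ v → u ≠ -v → ⟪u, z⟫ ≠ 0) :
    ∃ a : E d, (∀ u ∈ Φ, u ≠ v → u ≠ -v → 0 < ⟪u, z⟫ * ⟪u, a⟫) ∧ 0 < ⟪v, a⟫ ∧
      ∀ p, same Φ p a → Simple Φ p v := by
  have hv1 := ((h v).1 hv).1
  obtain ⟨ε, hε, h1⟩ := exists_small (Φ.filter (fun u => u ≠ v ∧ u ≠ -v))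
    (fun u => ⟪u, z⟫ * ⟪u, z⟫) (fun u => ⟪u, z⟫ * ⟪u, v⟫) (by
      intro u hu
      obtain ⟨hu, hu1, hu2⟩ := Finset.mem_filter.1 hu
      exact mul_self_pos.2 (hz u hu hu1 hu2))
  have hp : ∀ u ∈ Φ, u ≠ v → u ≠ -v → 0 < ⟪u, z⟫ * ⟪u, z + ε • v⟫ := by
    intro u hu hu1 hu2
    have := h1 ε (by rw [abs_of_pos hε]) u (Finset.mem_filter.2 ⟨hu, hu1, hu2⟩)
    rw [inner_add_right, inner_smul_right]
    linarith
  have hm : ∀ u ∈ Φ, u ≠ v → u ≠ -v → 0 < ⟪u, z⟫ * ⟪u, z - ε • v⟫ := by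
    intro u hu hu1 hu2
    have := h1 (-ε) (by rw [abs_neg, abs_of_pos hε]) u (Finset.mem_filter.2 ⟨hu, hu1, hu2⟩)
    rw [inner_sub_right, inner_smul_right]
    linarith
  have hva : ⟪v, z + ε • v⟫ = ε := by
    rw [inner_add_right, inner_smul_right, h0, real_inner_self_eq_norm_sq, hv1]; ring
  refine ⟨z + ε • v, hp, by rw [hva]; exact hε, fun p hpa => ⟨hv, fun u hu hu1 hu2 => ?_⟩⟩
  have h2 : sr v (z + ε • v) = z - ε • v := by
    rw [sr_apply hv1, hva, two_mul, add_smul]; abel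
  have h3 := h.same ((h v).1 hv).2 hpa u hu
  rw [h2] at h3
  exact pos_trans (hpa u hu) (pos_trans (pos_symm (hp u hu hu1 hu2))
    (pos_trans (hm u hu hu1 hu2) (pos_symm h3)))

lemma wall (h : IsRoots W Φ) {p q : E d} (hp : ∀ u ∈ Φ, ⟪u, p⟫ ≠ 0) (hq : ∀ u ∈ Φ, ⟪u, q⟫ ≠ 0)
    (hpq : ¬ same Φ p q) : ∃ v, Simple Φ p v ∧ 0 < ⟪v, p⟫ ∧ ⟪v, q⟫ < 0 := by
  let N : Finset (E d) :=
    ((Φ ×ˢ Φ).image (fun uv => ⟪uv.2, q⟫ • uv.1 - ⟪uv.1, q⟫ • uv.2)).filter (fun w => w ≠ 0)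
  obtain ⟨e, he⟩ := generic_dir N (fun w hw => (Finset.mem_filter.1 hw).2)
  obtain ⟨δ, hδ, h1⟩ := exists_small Φ (fun u => ⟪u, p⟫ * ⟪u, p⟫) (fun u => ⟪u, p⟫ * ⟪u, e⟫)
    (fun u hu => mul_self_pos.2 (hp u hu))
  obtain ⟨t, ht, htN⟩ := (Set.Ioc_infinite hδ).exists_notMem_finset
    (N.image (fun w => -⟪w, p⟫ / ⟪w, e⟫))
  set p' := p + t • e with hp'
  have hsame : same Φ p p' := by
    intro u hu
    have := h1 t (by rw [abs_of_pos ht.1]; exact ht.2) u hu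
    rw [hp', inner_add_right, inner_smul_right]
    linarith
  have hN : ∀ w ∈ N, ⟪w, p'⟫ ≠ 0 := by
    intro w hw h0
    refine htN (Finset.mem_image.2 ⟨w, hw, ?_⟩)
    rw [hp', inner_add_right, inner_smul_right] at h0
    rw [div_eq_iff (he w hw)]
    linarith
  have hgen : ∀ u ∈ Φ, ∀ v ∈ Φ, u ≠ v → u ≠ -v → ⟪v, q⟫ * ⟪u, p'⟫ ≠ ⟪u, q⟫ * ⟪v, p'⟫ := by
    intro u hu v hv hu1 hu2 h0
    refine hN (⟪v, q⟫ • u - ⟪u, q⟫ • v) (Finset.mem_filter.2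
      ⟨Finset.mem_image.2 ⟨(u, v), Finset.mk_mem_product hu hv, rfl⟩, ?_⟩) ?_
    · intro h2
      rcases unit_smul ((h u).1 hu).1 ((h v).1 hv).1 (hq v hv) (sub_eq_zero.1 h2) with h3 | h3
      · exact hu1 h3
      · exact hu2 h3
    · rw [inner_sub_left, inner_smul_left, inner_smul_left]
      simp only [conj_trivial]
      linarith
  let M := Φ.filter (fun u => 0 < ⟪u, p'⟫ ∧ ⟪u, q⟫ < 0)
  have hM : M.Nonempty := by
    have : ¬ same Φ p' q := fun h2 => hpq (hsame.trans h2)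
    unfold same at this
    push Not at this
    obtain ⟨u, hu, h2⟩ := this
    have h3 : ⟪u, p'⟫ ≠ 0 := by
      intro h0
      have := hsame u hu
      rw [h0] at this; simp at this
    have h4 := hq u hu
    have h5 : ⟪u, p'⟫ * ⟪u, q⟫ < 0 := lt_of_le_of_ne h2 (mul_ne_zero h3 h4)
    rcases mul_neg_iff.1 h5 with h6 | h6
    · exact ⟨u, Finset.mem_filter.2 ⟨hu, h6⟩⟩
    · exact ⟨-u, Finset.mem_filter.2 ⟨h.neg hu, by simpa using h6⟩⟩
  obtain ⟨v, hvM, hmin⟩ := Finset.exists_min_image M (fun u => ⟪u, p'⟫ / (-⟪u, q⟫)) hM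
  obtain ⟨hv, hvp, hvq⟩ := Finset.mem_filter.1 hvM
  set r := ⟪v, p'⟫ / (-⟪v, q⟫) with hr
  have hr0 : 0 < r := div_pos hvp (by linarith)
  have hrv : r * ⟪v, q⟫ = -⟪v, p'⟫ := by
    rw [hr, div_mul_eq_mul_div, div_eq_iff (by linarith)]; ring
  have hvz : ⟪v, p' + r • q⟫ = 0 := by
    rw [inner_add_right, inner_smul_right, hrv]; ring
  have hz1 : ∀ u ∈ Φ, u ≠ v → u ≠ -v → 0 < ⟪u, p'⟫ → 0 < ⟪u, p' + r • q⟫ := by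
    intro u hu hu1 hu2 h2
    rw [inner_add_right, inner_smul_right]
    rcases lt_or_ge ⟪u, q⟫ 0 with h3 | h3
    · have h4 := hmin u (Finset.mem_filter.2 ⟨hu, h2, h3⟩)
      have h5 : r ≠ ⟪u, p'⟫ / (-⟪u, q⟫) := by
        intro h5
        rw [eq_div_iff (by linarith)] at h5
        apply hgen u hu v hv hu1 hu2
        have h6 : ⟪u, p'⟫ = -(r * ⟪u, q⟫) := by linarith
        have h7 : ⟪v, p'⟫ = -(r * ⟪v, q⟫) := by linarith
        rw [h6, h7]; ring
      have h6 : r < ⟪u, p'⟫ / (-⟪u, q⟫) := lt_of_le_of_ne h4 h5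
      rw [lt_div_iff₀ (by linarith)] at h6
      linarith
    · have := mul_nonneg hr0.le h3
      linarith
  have hz : ∀ u ∈ Φ, u ≠ v → u ≠ -v → 0 < ⟪u, p'⟫ * ⟪u, p' + r • q⟫ := by
    intro u hu hu1 hu2
    have h3 : ⟪u, p'⟫ ≠ 0 := by
      intro h0
      have := hsame u hu
      rw [h0] at this; simp at this
    rcases lt_or_gt_of_ne h3 with h4 | h4
    · have := hz1 (-u) (h.neg hu) (fun h5 => hu2 (by rw [← h5, neg_neg]))
        (fun h5 => hu1 (neg_injective h5)) (by rw [inner_neg_left]; linarith)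
      rw [inner_neg_left] at this
      exact mul_pos_of_neg_of_neg h4 (by linarith)
    · exact mul_pos h4 (hz1 u hu hu1 hu2 h4)
  obtain ⟨a, ha1, ha2, ha3⟩ := adj h hv hvz (fun u hu hu1 hu2 h0 => by
    have := hz u hu hu1 hu2
    rw [h0] at this; simp at this)
  have hvp0 : 0 < ⟪v, p⟫ := (pos_iff_pos_of_mul_pos (hsame v hv)).2 hvp
  refine ⟨v, ha3 p ?_, hvp0, hvq⟩
  intro u hu
  by_cases hu1 : u = v
  · rw [hu1]; exact mul_pos hvp0 ha2
  by_cases hu2 : u = -v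
  · rw [hu2, inner_neg_left, inner_neg_left, neg_mul_neg]; exact mul_pos hvp0 ha2
  exact pos_trans (hsame u hu) (pos_trans (hz u hu hu1 hu2) (ha1 u hu hu1 hu2))

def WS (Φ : Finset (E d)) (p : E d) : Subgroup ((E d) ≃ₗᵢ[ℝ] (E d)) :=
  Subgroup.closure {g | ∃ v, Simple Φ p v ∧ g = sr v}

lemma WS_le (h : IsRoots W Φ) (p : E d) : WS Φ p ≤ W := by
  refine (Subgroup.closure_le W).2 ?_
  rintro _ ⟨v, hv, rfl⟩
  exact ((h v).1 hv.1).2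

lemma WS_trans (hW : Finite W) (h : IsRoots W Φ) {p q : E d} (hp : ∀ u ∈ Φ, ⟪u, p⟫ ≠ 0)
    (hq : ∀ u ∈ Φ, ⟪u, q⟫ ≠ 0) : ∃ w ∈ WS Φ p, same Φ (w p) q := by
  have hfin : (WS Φ p : Set ((E d) ≃ₗᵢ[ℝ] (E d))).Finite :=
    (Set.toFinite (W : Set ((E d) ≃ₗᵢ[ℝ] (E d)))).subset (WS_le h p)
  obtain ⟨w, hw, hmax⟩ := Set.exists_max_image _ (fun w => ⟪w q, p⟫) hfin ⟨1, (WS Φ p).one_mem⟩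
  have hwW := WS_le h p hw
  have hs : same Φ p (w q) := by
    by_contra hns
    obtain ⟨v, hv, h1, h2⟩ := wall h hp (h.reg hwW hq) hns
    have h3 := hmax (sr v * w) ((WS Φ p).mul_mem (Subgroup.subset_closure ⟨v, hv, rfl⟩) hw)
    simp only [iso_mul_apply] at h3
    rw [sr_apply ((h v).1 hv.1).1, inner_sub_left, inner_smul_left] at h3
    simp only [conj_trivial] at h3
    have h4 := mul_neg_of_neg_of_pos h2 h1
    linarith
  refine ⟨w⁻¹, (WS Φ p).inv_mem hw, ?_⟩
  have := h.same (W.inv_mem hwW) hs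
  have h2 : w⁻¹ (w q) = q := w.symm_apply_apply q
  rwa [h2] at this

lemma sr_mem_WS (hW : Finite W) (h : IsRoots W Φ) {p v : E d} (hp : ∀ u ∈ Φ, ⟪u, p⟫ ≠ 0)
    (hv : v ∈ Φ) : sr v ∈ WS Φ p := by
  have hv1 := ((h v).1 hv).1
  have hvv : ⟪v, v⟫ = 1 := by rw [real_inner_self_eq_norm_sq, hv1]; norm_num
  obtain ⟨e, he⟩ := generic_dir ((Φ.image (fun u => u - ⟪u, v⟫ • v)).filter (fun w => w ≠ 0))
    (fun w hw => (Finset.mem_filter.1 hw).2)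
  obtain ⟨a, ha1, ha2, ha3⟩ := adj h (z := e - ⟪v, e⟫ • v) hv
    (by rw [inner_sub_right, inner_smul_right, hvv]; ring) (by
      intro u hu hu1 hu2 h0
      refine he (u - ⟪u, v⟫ • v) (Finset.mem_filter.2 ⟨Finset.mem_image_of_mem _ hu, ?_⟩) ?_
      · intro h2
        have h3 : (1 : ℝ) • u = ⟪u, v⟫ • v := by rw [one_smul]; exact sub_eq_zero.1 h2
        rcases unit_smul ((h u).1 hu).1 hv1 one_ne_zero h3 with h3 | h3
        · exact hu1 h3
        · exact hu2 h3
      · rw [inner_sub_right, inner_smul_right] at h0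
        rw [inner_sub_left, inner_smul_left]
        simp only [conj_trivial]
        linarith)
  have hareg : ∀ u ∈ Φ, ⟪u, a⟫ ≠ 0 := by
    intro u hu h0
    by_cases hu1 : u = v
    · rw [hu1] at h0; linarith
    by_cases hu2 : u = -v
    · rw [hu2, inner_neg_left] at h0; linarith
    have := ha1 u hu hu1 hu2
    rw [h0] at this; simp at this
  obtain ⟨w, hw, hs⟩ := WS_trans hW h hp hareg
  have hwW := WS_le h p hw
  have h1 := ha3 _ hs
  have h2 : sr (w⁻¹ v) = w⁻¹ * sr v * w := by rw [sr_conj _ hv1, inv_inv]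
  have h3 : Simple Φ p (w⁻¹ v) := by
    refine ⟨h.map (W.inv_mem hwW) hv, fun u hu hu1 hu2 => ?_⟩
    have hww : w⁻¹ (w u) = u := w.symm_apply_apply u
    have h4 := h1.2 (w u) (h.map hwW hu) (fun h5 => hu1 (by rw [← h5, hww]))
      (fun h5 => hu2 (by rw [← map_neg, ← h5, hww]))
    rw [h2, iso_mul_apply, iso_mul_apply, inner_iso w⁻¹, inv_inv]
    rwa [inner_iso w, hww] at h4
  have h4 : sr v = w * sr (w⁻¹ v) * w⁻¹ := by rw [h2]; group
  rw [h4]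
  exact (WS Φ p).mul_mem ((WS Φ p).mul_mem hw (Subgroup.subset_closure ⟨_, h3, rfl⟩))
    ((WS Φ p).inv_mem hw)

lemma exchange (h : IsRoots W Φ) {p : E d} (L : List ((E d) ≃ₗᵢ[ℝ] (E d)))
    (hL : ∀ g ∈ L, ∃ v, Simple Φ p v ∧ g = sr v) :
    ∀ u ∈ Φ, 0 < ⟪u, p⟫ → ⟪u, L.prod p⟫ < 0 →
      ∃ L' : List ((E d) ≃ₗᵢ[ℝ] (E d)), (∀ g ∈ L', ∃ v, Simple Φ p v ∧ g = sr v) ∧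
        L'.length < L.length ∧ sr u * L.prod = L'.prod := by
  induction L with
  | nil =>
    intro u _ h1 h2
    simp at h2
    linarith
  | cons g L ih =>
    intro u hu h1 h2
    obtain ⟨v, hv, rfl⟩ := hL g (List.mem_cons_self)
    have hL' : ∀ g ∈ L, ∃ v, Simple Φ p v ∧ g = sr v := fun g hg =>
      hL g (List.mem_cons_of_mem _ hg)
    rw [List.prod_cons] at h2 ⊢
    by_cases huv : u = v ∨ u = -v
    · refine ⟨L, hL', by simp, ?_⟩
      have : sr u = sr v := by
        rcases huv with h3 | h3
        · rw [h3]
        · rw [h3, sr_neg]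
      rw [this, ← mul_assoc, sr_mul_self, one_mul]
    · push Not at huv
      have h3 := hv.2 u hu huv.1 huv.2
      have h4 : 0 < ⟪u, sr v p⟫ := (pos_iff_pos_of_mul_pos h3).1 h1
      rw [inner_iso, sr_inv] at h4
      rw [iso_mul_apply, inner_iso, sr_inv] at h2
      obtain ⟨L', h5, h6, h7⟩ := ih hL' (sr v u) (h.map ((h v).1 hv.1).2 hu) h4 h2
      refine ⟨sr v :: L', ?_, by simpa using h6, ?_⟩
      · intro g hg
        rcases List.mem_cons.1 hg with rfl | hg
        · exact ⟨v, hv, rfl⟩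
        · exact h5 g hg
      · rw [List.prod_cons, ← h7, sr_conj _ ((h u).1 hu).1, sr_inv]
        simp only [← mul_assoc, sr_mul_self, one_mul]

lemma free_list (h : IsRoots W Φ) {p : E d} (n : ℕ) : ∀ L : List ((E d) ≃ₗᵢ[ℝ] (E d)),
    L.length = n → (∀ g ∈ L, ∃ v, Simple Φ p v ∧ g = sr v) → same Φ (L.prod p) p →
    L.prod = 1 := by
  induction n using Nat.strong_induction_on with
  | _ n ih =>
    intro L hn hL hs
    cases L with
    | nil => rfl
    | cons g L =>
      have hL' : ∀ g ∈ L, ∃ v, Simple Φ p v ∧ g = sr v := fun g hg =>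
        hL g (List.mem_cons_of_mem _ hg)
      obtain ⟨v, hv, h0, rfl⟩ : ∃ v, Simple Φ p v ∧ 0 ≤ ⟪v, p⟫ ∧ g = sr v := by
        obtain ⟨v, hv, h1⟩ := hL g (List.mem_cons_self)
        rcases le_total 0 ⟪v, p⟫ with h2 | h2
        · exact ⟨v, hv, h2, h1⟩
        · exact ⟨-v, hv.neg h, by rw [inner_neg_left]; linarith, by rw [sr_neg, h1]⟩
      rw [List.prod_cons] at hs ⊢
      have h1 := hs v hv.1
      rw [iso_mul_apply, inner_iso, sr_inv] at h1
      have h2 : sr v v = -v := Submodule.reflection_orthogonalComplement_singleton_eq_neg v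
      rw [h2, inner_neg_left] at h1
      have h3 : 0 < ⟪v, p⟫ := lt_of_le_of_ne h0 (by rintro h; rw [← h] at h1; simp at h1)
      have h4 : ⟪v, L.prod p⟫ < 0 := by
        have := (pos_iff_pos_of_mul_pos h1).2 h3
        linarith
      obtain ⟨L', h5, h6, h7⟩ := exchange h L hL' v hv.1 h3 h4
      rw [h7] at hs ⊢
      refine ih L'.length ?_ L' rfl h5 hs
      rw [← hn, List.length_cons]; omega

lemma group_free (hW : Finite W) (h : IsRoots W Φ)
    (hgen : ∀ V : Subgroup ((E d) ≃ₗᵢ[ℝ] (E d)), (∀ v ∈ Φ, sr v ∈ V) → W ≤ V)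
    {p : E d} (hp : ∀ u ∈ Φ, ⟪u, p⟫ ≠ 0) {w : (E d) ≃ₗᵢ[ℝ] (E d)} (hw : w ∈ W)
    (hs : same Φ (w p) p) : w = 1 := by
  have h1 : w ∈ WS Φ p := hgen _ (fun v hv => sr_mem_WS hW h hp hv) hw
  unfold WS at h1
  rw [← Subgroup.mem_toSubmonoid, Subgroup.closure_toSubmonoid] at h1
  obtain ⟨L, hL, rfl⟩ := Submonoid.exists_list_of_mem_closure h1
  refine free_list h L.length L rfl (fun g hg => ?_) hs
  rcases hL g hg with h2 | ⟨v, hv, h2⟩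
  · exact h2
  · exact ⟨v, hv, by rw [← sr_inv, ← h2, inv_inv]⟩

end group

lemma IsReflection.exists_root {g : (E d) ≃ₗᵢ[ℝ] (E d)} (hg : IsReflection g) :
    ∃ v : E d, ‖v‖ = 1 ∧ g = sr v := by
  obtain ⟨y, hy, h⟩ := hg
  have hfix : ∀ z, g z = z ↔ ⟪y, z⟫ = 0 := fun z => Set.ext_iff.1 h z
  have hn : ‖y‖ ≠ 0 := norm_ne_zero_iff.2 hy
  set v := ‖y‖⁻¹ • y with hv
  have hv1 : ‖v‖ = 1 := by
    rw [hv, norm_smul, norm_inv, norm_norm, inv_mul_cancel₀ hn]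
  have hfix : ∀ z, g z = z ↔ ⟪v, z⟫ = 0 := by
    intro z
    rw [hfix, hv, inner_smul_left]
    simp [hy]
  have hvv : ⟪v, v⟫ = 1 := by rw [real_inner_self_eq_norm_sq, hv1]; norm_num
  refine ⟨v, hv1, ?_⟩
  have hdec : ∀ z : E d, g (z - ⟪v, z⟫ • v) = z - ⟪v, z⟫ • v := by
    intro z
    rw [hfix, inner_sub_right, inner_smul_right, hvv]; ring
  have hgv : g v = ⟪v, g v⟫ • v := by
    have h1 := hdec (g v)
    set q := g v - ⟪v, g v⟫ • v with hq
    have h2 : ⟪v, q⟫ = 0 := (hfix q).1 h1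
    have h3 : ⟪q, g v⟫ = 0 := by
      rw [← h1, g.inner_map_map, real_inner_comm, h2]
    have h4 : ⟪q, q⟫ = 0 := by
      nth_rewrite 2 [hq]
      rw [inner_sub_right, inner_smul_right, h3, real_inner_comm v q, h2]; ring
    exact sub_eq_zero.1 (inner_self_eq_zero.1 h4)
  have hne : g v ≠ v := by
    intro h1
    rw [hfix, hvv] at h1
    exact one_ne_zero h1
  have hgv2 : g v = -v := by
    have h1 : (1 : ℝ) • g v = ⟪v, g v⟫ • v := by rw [one_smul]; exact hgv
    rcases unit_smul (by rw [g.norm_map, hv1]) hv1 one_ne_zero h1 with h2 | h2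
    · exact absurd h2 hne
    · exact h2
  ext1 z
  have h1 := hdec z
  rw [map_sub, map_smul, hgv2] at h1
  rw [sr_apply hv1, two_mul, add_smul]
  have h2 : g z = z - ⟪v, z⟫ • v + ⟪v, z⟫ • -v := by rw [← h1]; abel
  rw [h2, smul_neg]; abel

lemma sr_fix (v : E d) : {x : E d | sr v x = x} = {x | ⟪v, x⟫ = 0} := by
  ext z
  exact (Submodule.reflection_eq_self_iff z).trans mem_perp

lemma sr_isReflection {v : E d} (hv : ‖v‖ = 1) : IsReflection (sr v) :=
  ⟨v, by rintro rfl; simp at hv, sr_fix v⟩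


/-! ### Part 4: assembly -/

lemma sdim_submodule (L : Submodule ℝ (E d)) : sdim (L : Set (E d)) = Module.finrank ℝ L := by
  unfold sdim
  have h1 : (L : Set (E d)) = (L.toAffineSubspace : Set (E d)) := rfl
  rw [h1, AffineSubspace.affineSpan_coe, Submodule.toAffineSubspace_direction]

lemma unit_perp {u v : E d} (hu : ‖u‖ = 1) (hv : ‖v‖ = 1)
    (h : {z : E d | ⟪u, z⟫ = 0} = {z | ⟪v, z⟫ = 0}) : u = v ∨ u = -v := by
  have hvv : ⟪v, v⟫ = 1 := by rw [real_inner_self_eq_norm_sq, hv]; norm_num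
  have h1 : ⟪v, u - ⟪v, u⟫ • v⟫ = 0 := by
    rw [inner_sub_right, inner_smul_right, hvv]; ring
  have h2 : ⟪u, u - ⟪v, u⟫ • v⟫ = 0 := (Set.ext_iff.1 h _).2 h1
  have h3 : ⟪u - ⟪v, u⟫ • v, u - ⟪v, u⟫ • v⟫ = 0 := by
    rw [inner_sub_left, inner_smul_left, h1, h2]; simp
  have h4 := sub_eq_zero.1 (inner_self_eq_zero.1 h3)
  exact unit_smul hu hv one_ne_zero (by rw [one_smul]; exact h4)

/-- the positive side set of a point -/
def side (A : Finset (Set (E d))) (α : Set (E d) → E d) (p : E d) : Finset (Set (E d)) :=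
  A.filter (fun H => 0 < ⟪α H, p⟫)

lemma sg_side_mul {A : Finset (Set (E d))} {α : Set (E d) → E d} {p : E d} {H : Set (E d)}
    (hH : H ∈ A) (h0 : ⟪α H, p⟫ ≠ 0) :
    ∃ c : ℝ, c ≠ 0 ∧ 0 < c * ⟪α H, p⟫ ∧ sg (side A α p) α H = c • α H := by
  rcases lt_or_gt_of_ne h0 with h | h
  · refine ⟨-1, by norm_num, by linarith, ?_⟩
    simp [sg, side, hH, h.le]
  · refine ⟨1, by norm_num, by linarith, ?_⟩
    simp [sg, side, hH, h]

section assembly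
variable {Φ : Finset (E d)} {A : Finset (Set (E d))} {α : Set (E d) → E d}

lemma mem_kone_side (hα : ∀ H ∈ A, α H ∈ Φ) (hΦ : ∀ v ∈ Φ, ∃ H ∈ A, v = α H ∨ v = - α H)
    {p z : E d} (hp : ∀ u ∈ Φ, ⟪u, p⟫ ≠ 0) :
    z ∈ kone ⊤ A (sg (side A α p) α) ↔ ∀ u ∈ Φ, 0 ≤ ⟪u, p⟫ * ⟪u, z⟫ := by
  have key : ∀ H ∈ A, (0 ≤ ⟪sg (side A α p) α H, z⟫ ↔ 0 ≤ ⟪α H, p⟫ * ⟪α H, z⟫) := by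
    intro H hH
    obtain ⟨c, hc, hcp, h⟩ := sg_side_mul hH (hp _ (hα H hH))
    rw [h, inner_smul_left]
    simp only [conj_trivial]
    have h1 : 0 < c * c := mul_self_pos.2 hc
    constructor
    · intro h2
      have := mul_nonneg hcp.le h2
      have h3 : 0 ≤ (c * c) * (⟪α H, p⟫ * ⟪α H, z⟫) := by linarith
      exact nonneg_of_mul_nonneg_right h3 h1
    · intro h2
      have h3 : 0 ≤ (c * ⟪α H, p⟫) * (c * ⟪α H, z⟫) := by
        have := mul_nonneg h1.le h2
        linarith
      exact nonneg_of_mul_nonneg_right h3 hcp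
  constructor
  · intro hz u hu
    obtain ⟨H, hH, h⟩ := hΦ u hu
    have h1 := (key H hH).1 (hz.2 H hH)
    rcases h with rfl | rfl
    · exact h1
    · simpa using h1
  · intro hz
    exact ⟨trivial, fun H hH => (key H hH).2 (hz _ (hα H hH))⟩

lemma mem_flat_side (hα : ∀ H ∈ A, α H ∈ Φ) (hΦ : ∀ v ∈ Φ, ∃ H ∈ A, v = α H ∨ v = - α H)
    {T : Finset (Set (E d))} {y z : E d} :
    z ∈ ⊤ ⊓ flat (tight A (sg T α) y) (sg T α) ↔ ∀ u ∈ Φ, ⟪u, y⟫ = 0 → ⟪u, z⟫ = 0 := by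
  have key : ∀ H, ∀ z : E d, ⟪sg T α H, z⟫ = 0 ↔ ⟪α H, z⟫ = 0 := by
    intro H z
    unfold sg
    split_ifs <;> simp
  rw [Submodule.mem_inf, mem_flat]
  simp only [tight, Finset.mem_filter, key, Submodule.mem_top, true_and, and_imp]
  constructor
  · intro hz u hu hy
    obtain ⟨H, hH, h⟩ := hΦ u hu
    rcases h with rfl | rfl
    · exact hz H hH hy
    · rw [inner_neg_left, neg_eq_zero] at hy ⊢
      exact hz H hH hy
  · intro hz H hH hy
    exact hz _ (hα H hH) hy

lemma strict_side (hα : ∀ H ∈ A, α H ∈ Φ) {p : E d} (hp : ∀ u ∈ Φ, ⟪u, p⟫ ≠ 0) :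
    ∀ H ∈ A, 0 < ⟪sg (side A α p) α H, p⟫ := by
  intro H hH
  obtain ⟨c, hc, hcp, h⟩ := sg_side_mul hH (hp _ (hα H hH))
  rw [h, inner_smul_left]
  exact hcp

lemma projDim_side {W : Subgroup ((E d) ≃ₗᵢ[ℝ] (E d))} (h : IsRoots W Φ) (hα : ∀ H ∈ A, α H ∈ Φ)
    (hΦ : ∀ v ∈ Φ, ∃ H ∈ A, v = α H ∨ v = - α H) {p x : E d} {k : ℕ}
    (hp : ∀ u ∈ Φ, ⟪u, p⟫ ≠ 0) {g : (E d) ≃ₗᵢ[ℝ] (E d)} (hg : g ∈ W) :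
    projDimEq (kone ⊤ A (sg (side A α p) α)) (g x) k ↔
      Good ⊤ A (sg (side A α (g⁻¹ p)) α) x k := by
  have hp' := h.reg (W.inv_mem hg) hp
  have hgi : ∀ z, g⁻¹ (g z) = z := fun z => g.symm_apply_apply z
  have hig : ∀ z, g (g⁻¹ z) = z := fun z => g.apply_symm_apply z
  have hK : ∀ z, g z ∈ kone ⊤ A (sg (side A α p) α) ↔
      z ∈ kone ⊤ A (sg (side A α (g⁻¹ p)) α) := by
    intro z
    rw [mem_kone_side hα hΦ hp, mem_kone_side hα hΦ hp']
    constructor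
    · intro hz u hu
      have := hz (g u) (h.map hg hu)
      rw [g.inner_map_map] at this
      rwa [inner_iso g⁻¹, inv_inv]
    · intro hz u hu
      have := hz (g⁻¹ u) (h.map (W.inv_mem hg) hu)
      rwa [inner_iso g⁻¹, inv_inv, hig, ← inner_iso g] at this
  have hN : ∀ y, IsNearestPt (kone ⊤ A (sg (side A α p) α)) (g x) (g y) ↔
      IsNearestPt (kone ⊤ A (sg (side A α (g⁻¹ p)) α)) x y := by
    intro y
    unfold IsNearestPt
    rw [hK]
    refine and_congr_right fun _ => ⟨fun h1 z hz => ?_, fun h1 z hz => ?_⟩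
    · have := h1 (g z) ((hK z).2 hz)
      rwa [g.dist_map, g.dist_map] at this
    · have := h1 (g⁻¹ z) ((hK _).1 (by rwa [hig]))
      rw [← g.dist_map x y, ← g.dist_map x (g⁻¹ z), hig] at this
      exact this
  have hL : ∀ y, Module.finrank ℝ (⊤ ⊓ flat (tight A (sg (side A α p) α) (g y))
        (sg (side A α p) α) : Submodule ℝ (E d)) =
      Module.finrank ℝ (⊤ ⊓ flat (tight A (sg (side A α (g⁻¹ p)) α) y)
        (sg (side A α (g⁻¹ p)) α) : Submodule ℝ (E d)) := by
    intro y
    have : (⊤ ⊓ flat (tight A (sg (side A α p) α) (g y)) (sg (side A α p) α) :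
        Submodule ℝ (E d)) = (⊤ ⊓ flat (tight A (sg (side A α (g⁻¹ p)) α) y)
        (sg (side A α (g⁻¹ p)) α) : Submodule ℝ (E d)).map
          (g.toLinearEquiv : E d →ₗ[ℝ] E d) := by
      ext z
      rw [Submodule.mem_map, mem_flat_side hα hΦ]
      constructor
      · intro hz
        refine ⟨g⁻¹ z, (mem_flat_side hα hΦ).2 fun u hu hy => ?_, hig z⟩
        rw [inner_iso, inv_inv]
        refine hz (g u) (h.map hg hu) ?_
        rw [inner_iso, hgi]; exact hy
      · rintro ⟨w, hw, rfl⟩ u hu hy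
        rw [mem_flat_side hα hΦ] at hw
        change ⟪u, g w⟫ = 0
        rw [inner_iso] at hy ⊢
        exact hw _ (h.map (W.inv_mem hg) hu) hy
    rw [this]
    exact LinearEquiv.finrank_map_eq g.toLinearEquiv _
  rw [projDim_iff]
  unfold Good
  constructor
  · rintro ⟨y, hy, hk⟩
    refine ⟨⟨g⁻¹ p, trivial, strict_side hα hp'⟩, g⁻¹ y, ?_, ?_⟩
    · rw [← hN, hig]; exact hy
    · rw [← hL, hig]; exact hk
  · rintro ⟨-, y, hy, hk⟩
    exact ⟨g y, (hN y).2 hy, (hL y).trans hk⟩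

end assembly

/-- Drton–Klivans conjecture: for a finite reflection group `W`
with reflection arrangement `A` and a fixed closed chamber `C`, for generic `x`
the number of `g ∈ W` with `dim(gx, C) = k` equals `a_k`. -/
theorem stmt14 {d : ℕ} (W : Subgroup ((E d) ≃ₗᵢ[ℝ] (E d))) (hWfin : Finite W)
    (hWrefl : Subgroup.closure {g : (E d) ≃ₗᵢ[ℝ] (E d) | g ∈ W ∧ IsReflection g} = W)
    (A : Finset (Set (E d)))
    (hA : (A : Set (Set (E d))) = {H | ∃ g ∈ W, IsReflection g ∧ {x : E d | g x = x} = H})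
    (C : Set (E d)) (hC : IsChamber A C) :
    ∃ (m : ℕ) (Hs : Fin m → Set (E d)), (∀ i, IsHyperplane (Hs i)) ∧
      ∀ x : E d, x ∉ ⋃ i, Hs i → ∀ k : ℕ, k ≤ d →
        (Set.ncard {g : (E d) ≃ₗᵢ[ℝ] (E d) | g ∈ W ∧ projDimEq C (g x) k} : ℤ)
          = charCoeff A k := by
  obtain ⟨Φ, hR⟩ := exists_roots hWfin
  -- normals
  have hnorm : ∀ H ∈ A, ∃ v ∈ Φ, H = {z : E d | ⟪v, z⟫ = 0} := by
    intro H hH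
    have hH' : H ∈ (A : Set (Set (E d))) := hH
    rw [hA] at hH'
    obtain ⟨g, hg, hr, rfl⟩ := hH'
    obtain ⟨v, hv, rfl⟩ := hr.exists_root
    exact ⟨v, (hR v).2 ⟨hv, hg⟩, sr_fix v⟩
  choose! α hαΦ hαH using hnorm
  have hΦA : ∀ v ∈ Φ, {z : E d | ⟪v, z⟫ = 0} ∈ A := by
    intro v hv
    obtain ⟨h1, h2⟩ := (hR v).1 hv
    have : {z : E d | ⟪v, z⟫ = 0} ∈ (A : Set (Set (E d))) := by
      rw [hA]
      exact ⟨sr v, h2, sr_isReflection h1, sr_fix v⟩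
    exact this
  have hΦ : ∀ v ∈ Φ, ∃ H ∈ A, v = α H ∨ v = - α H := by
    intro v hv
    refine ⟨_, hΦA v hv, ?_⟩
    exact unit_perp ((hR v).1 hv).1 ((hR _).1 (hαΦ _ (hΦA v hv))).1 (hαH _ (hΦA v hv))
  have hgen : ∀ V : Subgroup ((E d) ≃ₗᵢ[ℝ] (E d)), (∀ v ∈ Φ, sr v ∈ V) → W ≤ V := by
    intro V hV
    rw [← hWrefl]
    refine (Subgroup.closure_le V).2 ?_
    rintro g ⟨hg, hr⟩
    obtain ⟨v, hv, rfl⟩ := hr.exists_root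
    exact hV v ((hR v).2 ⟨hv, hg⟩)
  have hregΦ : ∀ p : E d, (∀ H ∈ A, ⟪α H, p⟫ ≠ 0) → ∀ u ∈ Φ, ⟪u, p⟫ ≠ 0 := by
    intro p hp u hu
    obtain ⟨H, hH, h | h⟩ := hΦ u hu
    · rw [h]; exact hp H hH
    · rw [h, inner_neg_left, neg_ne_zero]; exact hp H hH
  have hsameA : ∀ p q : E d, (∀ H ∈ A, 0 < ⟪α H, p⟫ * ⟪α H, q⟫) → same Φ p q := by
    intro p q hp u hu
    obtain ⟨H, hH, h | h⟩ := hΦ u hu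
    · rw [h]; exact hp H hH
    · rw [h, inner_neg_left, inner_neg_left, neg_mul_neg]; exact hp H hH
  -- the chamber
  obtain ⟨p, hpU, hCp⟩ := hC
  have hp : ∀ u ∈ Φ, ⟪u, p⟫ ≠ 0 := by
    intro u hu h0
    refine hpU ?_
    simp only [Set.mem_iUnion]
    exact ⟨_, hΦA u hu, h0⟩
  have hCk : C = kone ⊤ A (sg (side A α p) α) := by
    rw [hCp]
    refine chamber_eq ?_ (strict_side hαΦ hp)
    refine Set.iUnion₂_congr fun H hH => ?_
    nth_rewrite 1 [hαH H hH]
    ext z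
    obtain ⟨c, hc, -, h⟩ := sg_side_mul hH (hp _ (hαΦ H hH))
    simp [h, inner_smul_left, hc]
  -- generic hyperplanes
  have hproj : ∀ (B : Finset (Set (E d))) (j : Set (E d)), ∃ v ∈ (⊤ ⊓ flat B α : Submodule ℝ (E d)),
      ∀ l ∈ (⊤ ⊓ flat B α : Submodule ℝ (E d)), ⟪α j - v, l⟫ = 0 := by
    intro B j
    refine ⟨(⊤ ⊓ flat B α : Submodule ℝ (E d)).starProjection (α j),
      Submodule.starProjection_apply_mem _ _, fun l hl => ?_⟩
    exact Submodule.starProjection_inner_eq_zero _ l hl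
  choose π hπ1 hπ2 using hproj
  let HH : Set (Set (E d)) :=
    (fun Bj : Finset (Set (E d)) × Set (E d) => {z : E d | ⟪π Bj.1 Bj.2, z⟫ = 0}) ''
      {Bj | Bj ∈ A.powerset ×ˢ A ∧ π Bj.1 Bj.2 ≠ 0}
  have hHH : HH.Finite := by
    refine Set.Finite.image _ ((A.powerset ×ˢ A).finite_toSet.subset ?_)
    intro Bj h
    exact h.1
  obtain ⟨m, Hs, -, hHs⟩ := hHH.fin_param
  refine ⟨m, Hs, ?_, ?_⟩
  · intro i
    have : Hs i ∈ HH := by rw [← hHs]; exact ⟨i, rfl⟩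
    obtain ⟨Bj, ⟨-, h⟩, h2⟩ := this
    exact ⟨_, 0, h, h2.symm⟩
  intro x hx k hk
  have hG : Gen ⊤ A α x := by
    intro B hB j hj y hy hxy hjy
    have h0 : π B j = 0 := by
      by_contra hne
      have hmem : {z : E d | ⟪π B j, z⟫ = 0} ∈ HH :=
        ⟨(B, j), ⟨Finset.mk_mem_product (Finset.mem_powerset.2 hB) hj, hne⟩, rfl⟩
      rw [← hHs] at hmem
      obtain ⟨i, hi⟩ := hmem
      refine hx (Set.mem_iUnion.2 ⟨i, ?_⟩)
      rw [hi]
      have h1 := hxy _ (hπ1 B j)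
      have h2 := hπ2 B j y hy
      rw [inner_sub_left] at h1 h2
      change ⟪π B j, x⟫ = 0
      rw [real_inner_comm]
      rw [real_inner_comm _ y] at h1
      linarith
    intro l hl
    have h2 := hπ2 B j l hl
    rwa [h0, sub_zero] at h2
  have hcount := count_chambers α x k A ⊤ hG
  -- left side
  have hleft : (Set.ncard {g : (E d) ≃ₗᵢ[ℝ] (E d) | g ∈ W ∧ projDimEq C (g x) k} : ℤ)
      = ∑ T ∈ A.powerset, (if Good ⊤ A (sg T α) x k then (1 : ℤ) else 0) := by
    rw [Finset.sum_boole]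
    congr 1
    rw [← Set.ncard_coe_finset]
    have hinj : Set.InjOn (fun g : (E d) ≃ₗᵢ[ℝ] (E d) => side A α (g⁻¹ p))
        {g : (E d) ≃ₗᵢ[ℝ] (E d) | g ∈ W ∧ projDimEq C (g x) k} := by
      rintro g ⟨hg, -⟩ h ⟨hh, -⟩ heq
      have hs : same Φ (g⁻¹ p) (h⁻¹ p) := by
        apply hsameA
        intro H hH
        have h1 := hR.reg (W.inv_mem hg) hp _ (hαΦ H hH)
        have h2 := hR.reg (W.inv_mem hh) hp _ (hαΦ H hH)
        have h3 := Finset.ext_iff.1 heq H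
        simp only [side, Finset.mem_filter, hH, true_and] at h3
        rcases lt_or_gt_of_ne h1 with h4 | h4
        · have h5 : ⟪α H, h⁻¹ p⟫ < 0 :=
            lt_of_le_of_ne (not_lt.1 fun h6 => absurd (h3.2 h6) (not_lt.2 h4.le)) h2
          exact mul_pos_of_neg_of_neg h4 h5
        · exact mul_pos h4 (h3.1 h4)
      have hs2 := hR.same hg hs
      have h1 : g (g⁻¹ p) = p := g.apply_symm_apply p
      rw [h1] at hs2
      have h2 : g * h⁻¹ = 1 :=
        group_free hWfin hR hgen hp (W.mul_mem hg (W.inv_mem hh)) hs2.symm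
      exact mul_inv_eq_one.1 h2
    rw [← Set.ncard_image_of_injOn hinj]
    congr 1
    ext T
    simp only [Set.mem_image, Finset.coe_filter]
    constructor
    · rintro ⟨g, ⟨hg, hd⟩, rfl⟩
      refine ⟨Finset.mem_powerset.2 (Finset.filter_subset _ _), ?_⟩
      rw [hCk] at hd
      exact (projDim_side hR hαΦ hΦ hp hg).1 hd
    · rintro ⟨hT, hd⟩
      have hTA := Finset.mem_powerset.1 hT
      obtain ⟨q, -, hq⟩ := hd.1
      have hsgn : ∀ H ∈ A, (H ∈ T → 0 < ⟪α H, q⟫) ∧ (H ∉ T → ⟪α H, q⟫ < 0) := by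
        intro H hH
        have := hq H hH
        unfold sg at this
        split_ifs at this with h1
        · exact ⟨fun _ => this, fun h => absurd h1 h⟩
        · rw [inner_neg_left] at this
          exact ⟨fun h => absurd h h1, fun _ => by linarith⟩
      have hqr : ∀ u ∈ Φ, ⟪u, q⟫ ≠ 0 := by
        apply hregΦ
        intro H hH
        by_cases h1 : H ∈ T
        · exact ((hsgn H hH).1 h1).ne'
        · exact ((hsgn H hH).2 h1).ne
      obtain ⟨w, hw, hs⟩ := WS_trans hWfin hR hp hqr
      have hwW := WS_le hR p hw
      have hside : side A α (w⁻¹⁻¹ p) = T := by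
        rw [inv_inv]
        ext H
        simp only [side, Finset.mem_filter]
        constructor
        · rintro ⟨hH, h1⟩
          by_contra h2
          have h3 := (hsgn H hH).2 h2
          have h4 := hs _ (hαΦ H hH)
          have := mul_neg_of_pos_of_neg h1 h3
          linarith
        · intro hH
          have h3 := (hsgn H (hTA hH)).1 hH
          exact ⟨hTA hH, (pos_iff_pos_of_mul_pos (hs _ (hαΦ H (hTA hH)))).2 h3⟩
      refine ⟨w⁻¹, ⟨W.inv_mem hwW, ?_⟩, hside⟩
      rw [hCk, projDim_side hR hαΦ hΦ hp (W.inv_mem hwW), hside]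
      exact hd
  rw [hleft, hcount]
  unfold charCoeff
  congr 1
  · rw [finrank_top, finrank_euclideanSpace_fin]
    obtain ⟨c, rfl⟩ := Nat.exists_eq_add_of_le hk
    rw [Nat.add_sub_cancel_left, add_right_comm, pow_add, ← two_mul, pow_mul]
    simp
  · refine Finset.sum_congr rfl fun B hB => ?_
    have h1 : interSet B = ((⊤ ⊓ flat B α : Submodule ℝ (E d)) : Set (E d)) := by
      ext z
      have hBA := Finset.mem_powerset.1 hB
      simp only [interSet, Set.mem_iInter, SetLike.mem_coe, Submodule.mem_inf, mem_flat,
        Submodule.mem_top, true_and]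
      refine forall₂_congr fun H hH => ?_
      exact Set.ext_iff.1 (hαH H (hBA hH)) z
    rw [h1, sdim_submodule]
    refine if_congr ?_ rfl rfl
    exact ⟨fun h => ⟨⟨0, Submodule.zero_mem _⟩, h⟩, fun h => h.2⟩
end
end
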